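/- arXiv:1606.03499 — 2 statements merged into one kernel-verified Lean document; each statement's English description precedes it below -/
import Mathlib

section
/- Let n ≥ 3 and let (ψ_j)_{j∈S} be a sequence of smooth ℤⁿ-periodic real-valued eigenfunctions of the Euclidean Laplacian on ℝⁿ with eigenvalues λ_j → ∞ and ∫_{[0,1)ⁿ} ψ_j² dx = 1, such that for some R₀ > 0, for every r ∈ (0, R₀) and every x ∈ ℝⁿ, ∫_{B_r(x)} ψ_j² dx → Vol(B_r(x)) as j → ∞. Then λ_j^{1/2+(n-1)(n-2)/(4n)} · inf{in(Ω) : Ω a nodal domain of ψ_j} → ∞ as j → ∞. -/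
/-!
An eigenfunction `ψ` of the torus with eigenvalue `κ²` is a finite sum of plane waves of frequency
`κ`, with amplitudes summing to at most `(2κ + 1)ⁿ sup |ψ|`. Hence `ψ` has the mean-value property
with a common kernel, which gives a Harnack inequality at scales `≪ 1 / κ`, and interpolation of
`ψ` along segments bounds `sup |ψ|` by `(C κ / ρ) ^ (C κ)` times its supremum on any ball of radius
`ρ`.

Let `ψ > 0` on a nodal domain `Ω` and let `x₀` nearly maximize `ψ` on `Ω`. If `ball x₀ ρ` were not
contained in `Ω`, it would contain a zero `z` of `ψ`. Near `z`, divide `-ψ` by the positive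
eigenfunction `cos ⟪ξ, x - z⟫` with `‖ξ‖ = κ`: by the maximum principle the quotient has increasing
maxima on spheres about `z`. Subdivide the annulus between the radii `ρ` and `2ρ` into `K` shells of
`q` steps each; the global growth bound lets at most half of the shells consist of steps with fast
growth only. A step of slow growth provides, by Harnack, a ball of radius `≈ ρ / (K q)` on which
`ψ < 0`, so outside of `Ω`. The potentials `‖x - y‖ ^ (2 - n)` of the centres `y` of these balls,
added to `ψ` together with a quadratic term, then form a subharmonic barrier on `Ω` near `x₀` whose
maximum can be attained neither in the interior, nor on `∂Ω`, where `ψ = 0`, nor on a sphere about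
`x₀`, where the potentials are much smaller than at `x₀`.

With `q ≈ κ ^ b` and `K = q ^ (n - 2)`, this rules out `ρ = A κ ^ (-(1 + s))` as soon as
`1 < b (n - 1)` and `b (n - 2) ^ 2 < 2 s`.
-/

open MeasureTheory Metric Filter Real

noncomputable section

/-- `ψ : ℝⁿ → ℝ` is `ℤⁿ`-periodic: `ψ (x + v) = ψ x` for every integer vector `v`. -/
def ZnPeriodic (n : ℕ) (ψ : EuclideanSpace ℝ (Fin n) → ℝ) : Prop :=
  ∀ (x : EuclideanSpace ℝ (Fin n)) (v : Fin n → ℤ),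
    ψ (show EuclideanSpace ℝ (Fin n) from WithLp.toLp 2 fun i => x i + (v i : ℝ)) = ψ x

/-- The Euclidean Laplacian `Δψ = ∑ᵢ ∂²ψ/∂xᵢ²`. -/
def lap (n : ℕ) (ψ : EuclideanSpace ℝ (Fin n) → ℝ) (x : EuclideanSpace ℝ (Fin n)) : ℝ :=
  ∑ i : Fin n,
    fderiv ℝ (fun y => fderiv ℝ ψ y (EuclideanSpace.single i (1:ℝ))) x
      (EuclideanSpace.single i (1:ℝ))

/-- `Ω` is a nodal domain of `ψ`: a connected component of `{ψ ≠ 0}`. -/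
def IsNodalDomain {n : ℕ} (ψ : EuclideanSpace ℝ (Fin n) → ℝ)
    (Ω : Set (EuclideanSpace ℝ (Fin n))) : Prop :=
  ∃ x, ψ x ≠ 0 ∧ Ω = connectedComponentIn {y | ψ y ≠ 0} x

/-- The inner radius of a set: the supremum of radii of open balls contained in it. -/
def innerRadius {n : ℕ} (Ω : Set (EuclideanSpace ℝ (Fin n))) : ℝ :=
  sSup {ρ : ℝ | 0 < ρ ∧ ∃ c, Metric.ball c ρ ⊆ Ω}

/-- The fundamental domain `[0,1)ⁿ` of the torus `ℝⁿ/ℤⁿ`. -/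
def fundDom (n : ℕ) : Set (EuclideanSpace ℝ (Fin n)) :=
  {x | ∀ i, x i ∈ Set.Ico (0:ℝ) 1}

/-- `S ⊆ ℕ` has full density: `#(S ∩ [1,N]) / N → 1`. -/
def FullDensity (S : Set ℕ) : Prop :=
  Filter.Tendsto (fun N => (Nat.card ↥(S ∩ Set.Icc 1 N) : ℝ) / N) Filter.atTop (nhds 1)

section Interpolation

theorem exists_iteratedDeriv_eq_zero {m : ℕ} {f : ℝ → ℝ} (hf : ContDiff ℝ m f)
    {x : Fin (m + 1) → ℝ} (hx : StrictMono x) (h0 : ∀ i, f (x i) = 0) :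
    ∃ c, iteratedDeriv m f c = 0 := by
  induction m generalizing f with
  | zero => exact ⟨x 0, by simpa using h0 0⟩
  | succ m ih =>
    have hrolle (i : Fin (m + 1)) : ∃ c ∈ Set.Ioo (x i.castSucc) (x i.succ), deriv f c = 0 :=
      exists_deriv_eq_zero (hx Fin.castSucc_lt_succ) hf.continuous.continuousOn
        (by rw [h0, h0])
    choose y hy hy0 using hrolle
    have hymono : StrictMono y := fun i j hij ↦
      calc y i < x i.succ := (hy i).2
        _ ≤ x j.castSucc := hx.monotone (Fin.succ_le_castSucc_iff.2 hij)
        _ < y j := (hy j).1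
    simpa only [iteratedDeriv_succ'] using
      ih (contDiff_succ_iff_deriv.1 (by exact_mod_cast hf)).2.2 hymono hy0

theorem iteratedDeriv_polynomial_eval (P : Polynomial ℝ) (m : ℕ) (t : ℝ) :
    iteratedDeriv m (fun t ↦ P.eval t) t = (Polynomial.derivative^[m] P).eval t := by
  induction m generalizing P with
  | zero => simp
  | succ m ih =>
    have hderiv : deriv (fun t ↦ P.eval t) = fun t ↦ P.derivative.eval t := by
      ext t; exact P.deriv
    rw [iteratedDeriv_succ', hderiv, ih, Function.iterate_succ_apply]

theorem exists_iteratedDeriv_eq_dividedDifference {m : ℕ} {f : ℝ → ℝ} (hf : ContDiff ℝ m f)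
    {x : Fin (m + 1) → ℝ} (hx : StrictMono x) :
    ∃ c, iteratedDeriv m f c =
      m.factorial * ∑ i, f (x i) / ∏ j ∈ Finset.univ.erase i, (x i - x j) := by
  let Q := Lagrange.interpolate Finset.univ x (fun i ↦ f (x i))
  have hinj : Set.InjOn x (Finset.univ : Finset (Fin (m + 1))) := hx.injective.injOn
  have hdeg : Q.degree < (Finset.univ : Finset (Fin (m + 1))).card :=
    Lagrange.degree_interpolate_lt _ hinj
  have hQx (i : Fin (m + 1)) : Q.eval (x i) = f (x i) :=
    Lagrange.eval_interpolate_at_node _ hinj (Finset.mem_univ i)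
  have hQsmooth : ContDiff ℝ m fun t ↦ Q.eval t := by
    simpa only [Polynomial.coe_aeval_eq_eval] using Q.contDiff_aeval (𝕜 := ℝ) m
  obtain ⟨c, hc⟩ := exists_iteratedDeriv_eq_zero (hf.sub hQsmooth) hx fun i ↦ by simp [hQx]
  have hsub := iteratedDeriv_fun_sub (x := c) hf.contDiffAt hQsmooth.contDiffAt
  rw [hc, iteratedDeriv_polynomial_eval,
    Lagrange.eval_iterate_derivative_eq_sum hinj hdeg (by simp)] at hsub
  refine ⟨c, sub_eq_zero.1 ?_⟩
  simpa [hQx] using hsub.symm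

theorem pow_le_abs_prod_sub {m : ℕ} {η : ℝ} (hη : 0 ≤ η) {x : Fin (m + 1) → ℝ}
    (hx : ∀ i j, i < j → η ≤ x j - x i) (i : Fin (m + 1)) :
    η ^ m ≤ |∏ j ∈ Finset.univ.erase i, (x i - x j)| := by
  have hgap (j : Fin (m + 1)) (hij : i ≠ j) : η ≤ |x i - x j| := by
    rcases lt_or_gt_of_ne hij with h | h
    · rw [abs_sub_comm]; exact (hx _ _ h).trans (le_abs_self _)
    · exact (hx _ _ h).trans (le_abs_self _)
  simpa [Finset.abs_prod] using Finset.prod_le_prod (s := Finset.univ.erase i)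
    (fun _ _ ↦ hη) (fun j hj ↦ hgap j (Finset.ne_of_mem_erase hj).symm)

theorem abs_le_of_separated_nodes {m : ℕ} {f : ℝ → ℝ} (hf : ContDiff ℝ m f)
    {B δ η : ℝ} (hη : 0 < η) (hB : ∀ t, |iteratedDeriv m f t| ≤ B)
    {x : Fin (m + 1) → ℝ} (hx : ∀ i j, i < j → η ≤ x j - x i)
    (hδ : ∀ i : Fin m, |f (x i.castSucc)| ≤ δ) :
    |f (x (Fin.last m))| ≤
      (x (Fin.last m) - x 0) ^ m * (B / m.factorial + m * (δ / η ^ m)) := by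
  have hmono : StrictMono x := fun i j hij ↦ by linarith [hx i j hij]
  set w : Fin (m + 1) → ℝ := fun i ↦ ∏ j ∈ Finset.univ.erase i, (x i - x j)
  have hw (i : Fin (m + 1)) : η ^ m ≤ |w i| := pow_le_abs_prod_sub hη.le hx i
  have hwlast : |w (Fin.last m)| ≤ (x (Fin.last m) - x 0) ^ m := by
    have hdist (j : Fin (m + 1)) : |x (Fin.last m) - x j| ≤ x (Fin.last m) - x 0 := by
      rw [abs_of_nonneg (by linarith [hmono.monotone (Fin.le_last j)])]
      linarith [hmono.monotone (Fin.zero_le j)]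
    simpa [w, Finset.abs_prod] using Finset.prod_le_prod (s := Finset.univ.erase (Fin.last m))
      (fun _ _ ↦ abs_nonneg _) (fun j _ ↦ hdist j)
  have hwpos : 0 < |w (Fin.last m)| := (by positivity : 0 < η ^ m).trans_le (hw _)
  have hnodes : |∑ i : Fin m, f (x i.castSucc) / w i.castSucc| ≤ m * (δ / η ^ m) := by
    refine (Finset.abs_sum_le_sum_abs _ _).trans ?_
    have hterm (i : Fin m) : |f (x i.castSucc) / w i.castSucc| ≤ δ / η ^ m := by
      have hδ0 : 0 ≤ δ := (abs_nonneg _).trans (hδ i)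
      rw [abs_div]
      exact div_le_div₀ hδ0 (hδ i) (by positivity) (hw _)
    simpa using Finset.sum_le_sum fun i (_ : i ∈ Finset.univ) ↦ hterm i
  obtain ⟨c, hc⟩ := exists_iteratedDeriv_eq_dividedDifference hf hmono
  rw [Fin.sum_univ_castSucc] at hc
  have hlast : f (x (Fin.last m)) / w (Fin.last m) =
      iteratedDeriv m f c / m.factorial - ∑ i : Fin m, f (x i.castSucc) / w i.castSucc := by
    rw [hc, mul_div_cancel_left₀ _ (by positivity)]
    ring
  have hquot : |f (x (Fin.last m))| / |w (Fin.last m)| ≤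
      B / m.factorial + m * (δ / η ^ m) := by
    rw [← abs_div, hlast]
    refine (abs_sub _ _).trans (add_le_add ?_ hnodes)
    rw [abs_div, Nat.abs_cast]
    gcongr
    exact hB c
  rw [div_le_iff₀ hwpos, mul_comm] at hquot
  refine hquot.trans (mul_le_mul_of_nonneg_right hwlast ?_)
  by_contra! hneg
  linarith [mul_neg_of_pos_of_neg hwpos hneg, abs_nonneg (f (x (Fin.last m)))]

theorem abs_le_of_small_on_Icc {m : ℕ} {f : ℝ → ℝ} (hf : ContDiff ℝ m f)
    {B δ h T : ℝ} (hh : 0 < h) (hT : h ≤ T) (hB : ∀ t, |iteratedDeriv m f t| ≤ B)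
    (hδ : ∀ t ∈ Set.Icc 0 h, |f t| ≤ δ) :
    |f T| ≤ T ^ m * (B / m.factorial + m * (δ / (h / m) ^ m)) := by
  rcases m.eq_zero_or_pos with rfl | hm
  · simpa using hB T
  have hstep (i : Fin m) : 0 ≤ h / m * i ∧ h / m * i + h / m ≤ h := by
    have hi : ((i : ℕ) : ℝ) + 1 ≤ m := by exact_mod_cast i.2
    refine ⟨by positivity, ?_⟩
    calc h / m * i + h / m = h / m * (i + 1) := by ring
      _ ≤ h / m * m := by gcongr
      _ = h := by field_simp
  set x : Fin (m + 1) → ℝ := Fin.snoc (fun i : Fin m ↦ h / m * (i : ℕ)) T with hxdef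
  have hxcast (i : Fin m) : x i.castSucc = h / m * i := by simp [hxdef]
  have hxlast : x (Fin.last m) = T := by simp [hxdef]
  have hx (i j : Fin (m + 1)) (hij : i < j) : h / m ≤ x j - x i := by
    induction i using Fin.lastCases with
    | last => exact absurd hij (by simp [Fin.le_last])
    | cast i =>
      induction j using Fin.lastCases with
      | last => rw [hxlast, hxcast]; linarith [hstep i]
      | cast j =>
        have hij' : ((i : ℕ) : ℝ) + 1 ≤ j := by exact_mod_cast hij
        rw [hxcast, hxcast, ← mul_sub]
        exact le_mul_of_one_le_right (by positivity) (by linarith)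
  have hx0 : x 0 = 0 := by
    have := hxcast ⟨0, hm⟩
    simpa using this
  have hbound := abs_le_of_separated_nodes hf (by positivity) hB hx fun i ↦ hδ _ <| by
    rw [hxcast]
    exact ⟨(hstep i).1, by linarith [hstep i, (by positivity : 0 ≤ h / m)]⟩
  rwa [hxlast, hx0, sub_zero] at hbound

end Interpolation

section Torus

open scoped RealInnerProductSpace ComplexConjugate

variable {n : ℕ}

local instance : MeasureSpace UnitAddCircle := ⟨AddCircle.haarAddCircle⟩

local instance : Measure.IsAddHaarMeasure (volume : Measure UnitAddCircle) :=
  inferInstanceAs (Measure.IsAddHaarMeasure AddCircle.haarAddCircle)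

local instance : IsProbabilityMeasure (volume : Measure UnitAddCircle) :=
  inferInstanceAs (IsProbabilityMeasure AddCircle.haarAddCircle)

/-- The covering map `ℝⁿ → ℝⁿ/ℤⁿ`. -/
def torusProj (x : EuclideanSpace ℝ (Fin n)) : UnitAddTorus (Fin n) :=
  fun i ↦ (x i : UnitAddCircle)

/-- The wave vector `2πk` of the character of `ℝⁿ/ℤⁿ` indexed by `k ∈ ℤⁿ`. -/
def waveVector (k : Fin n → ℤ) : EuclideanSpace ℝ (Fin n) :=
  WithLp.toLp 2 fun i ↦ 2 * π * k i

theorem isOpenQuotientMap_torusProj : IsOpenQuotientMap (torusProj (n := n)) :=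
  (IsOpenQuotientMap.piMap fun _ ↦ QuotientAddGroup.isOpenQuotientMap_mk).comp
    (EuclideanSpace.equiv (Fin n) ℝ).toHomeomorph.isOpenQuotientMap

theorem torusProj_add (x y : EuclideanSpace ℝ (Fin n)) :
    torusProj (x + y) = torusProj x + torusProj y := by
  ext i; simp [torusProj]

theorem mFourier_torusProj (k : Fin n → ℤ) (x : EuclideanSpace ℝ (Fin n)) :
    UnitAddTorus.mFourier k (torusProj x) = Complex.exp (⟪waveVector k, x⟫ * Complex.I) := by
  simp only [UnitAddTorus.mFourier, ContinuousMap.coe_mk, torusProj, fourier_coe_apply,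
    ← Complex.exp_sum, PiLp.inner_apply, waveVector, Complex.ofReal_sum, Finset.sum_mul]
  congr 1
  refine Finset.sum_congr rfl fun i _ ↦ ?_
  simp
  ring

theorem ZnPeriodic.eq_of_torusProj_eq {f : EuclideanSpace ℝ (Fin n) → ℝ} (hf : ZnPeriodic n f)
    {x y : EuclideanSpace ℝ (Fin n)} (h : torusProj x = torusProj y) : f x = f y := by
  have hint (i : Fin n) : ∃ m : ℤ, (m : ℝ) = x i - y i := by
    have h0 : ((x i - y i : ℝ) : UnitAddCircle) = 0 := by
      rw [AddCircle.coe_sub, sub_eq_zero]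
      exact congrFun h i
    simpa using AddCircle.coe_eq_zero_iff (1 : ℝ) |>.1 h0
  choose v hv using hint
  rw [← hf y v]
  congr 1
  ext i
  simp [hv]

theorem ZnPeriodic.exists_torus_lift {f : EuclideanSpace ℝ (Fin n) → ℝ} (hf : ZnPeriodic n f)
    (hc : Continuous f) :
    ∃ F : C(UnitAddTorus (Fin n), ℂ), ∀ x, F (torusProj x) = (f x : ℂ) := by
  let g : C(EuclideanSpace ℝ (Fin n), ℂ) := ⟨fun x ↦ (f x : ℂ), by fun_prop⟩
  let p : C(EuclideanSpace ℝ (Fin n), UnitAddTorus (Fin n)) :=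
    ⟨torusProj, isOpenQuotientMap_torusProj.continuous⟩
  have hp : Topology.IsQuotientMap p := isOpenQuotientMap_torusProj.isQuotientMap
  have hg : Function.FactorsThrough g p := fun x y h ↦
    congrArg Complex.ofReal (hf.eq_of_torusProj_eq h)
  exact ⟨hp.lift g hg, fun x ↦ DFunLike.congr_fun (hp.lift_comp g hg) x⟩

theorem ZnPeriodic.fderiv_apply {f : EuclideanSpace ℝ (Fin n) → ℝ} (hf : ZnPeriodic n f)
    (e : EuclideanSpace ℝ (Fin n)) : ZnPeriodic n (fun y ↦ fderiv ℝ f y e) := by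
  intro x v
  have hshift (y : EuclideanSpace ℝ (Fin n)) :
      (WithLp.toLp 2 fun i ↦ y i + (v i : ℝ)) = y + WithLp.toLp 2 fun i ↦ (v i : ℝ) := by
    ext i; simp
  have hinv : (fun y ↦ f (y + WithLp.toLp 2 fun i ↦ (v i : ℝ))) = f := by
    ext y; rw [← hshift]; exact hf y v
  change fderiv ℝ f (WithLp.toLp 2 fun i ↦ x i + (v i : ℝ)) e = _
  rw [hshift, ← fderiv_comp_add_right, hinv]

theorem integrable_torus {F : UnitAddTorus (Fin n) → ℂ} (hF : Continuous F) : Integrable F :=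
  hF.integrable_of_hasCompactSupport (HasCompactSupport.of_compactSpace _)

theorem integral_torus_eq_zero_of_hasLineDerivAt {F F' : C(UnitAddTorus (Fin n), ℂ)}
    {v : EuclideanSpace ℝ (Fin n)}
    (h : ∀ x, HasLineDerivAt ℝ (fun y ↦ F (torusProj y)) (F' (torusProj x)) x v) :
    ∫ τ, F' τ = 0 := by
  have hconst (t : ℝ) : ∫ τ, F (τ + torusProj (t • v)) = ∫ τ, F τ :=
    integral_add_right_eq_self (fun τ ↦ F τ) _
  have hderiv : HasDerivAt (fun t : ℝ ↦ ∫ τ, F (τ + torusProj (t • v)))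
      (∫ τ, F' (τ + torusProj ((0 : ℝ) • v))) 0 := by
    refine (hasDerivAt_integral_of_dominated_loc_of_deriv_le (bound := fun _ ↦ ‖F'‖)
      (s := Set.univ) (F' := fun t τ ↦ F' (τ + torusProj (t • v))) Filter.univ_mem
      (.of_forall fun t ↦ (by fun_prop : Continuous _).aestronglyMeasurable)
      (integrable_torus (by fun_prop)) (by fun_prop : Continuous _).aestronglyMeasurable
      (.of_forall fun τ t _ ↦ F'.norm_coe_le_norm _) (integrable_const _)
      (.of_forall fun τ t _ ↦ ?_)).2
    obtain ⟨x, rfl⟩ := isOpenQuotientMap_torusProj.surjective τ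
    simp only [← torusProj_add]
    have hline := HasDerivAt.comp_sub_const
      (f := fun u : ℝ ↦ F (torusProj (x + t • v + u • v))) t t (by
        rw [sub_self]; exact h (x + t • v))
    refine hline.congr_of_eventuallyEq (.of_forall fun u ↦ ?_)
    simp only [add_assoc, ← add_smul, add_sub_cancel]
  simp only [hconst, zero_smul] at hderiv
  rw [← hderiv.unique (hasDerivAt_const (0 : ℝ) _)]
  exact (integral_add_right_eq_self (fun τ ↦ F' τ) _).symm

theorem mFourierCoeff_of_hasLineDerivAt {F F' : C(UnitAddTorus (Fin n), ℂ)}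
    {v : EuclideanSpace ℝ (Fin n)}
    (h : ∀ x, HasLineDerivAt ℝ (fun y ↦ F (torusProj y)) (F' (torusProj x)) x v)
    (k : Fin n → ℤ) :
    UnitAddTorus.mFourierCoeff F' k =
      ⟪waveVector k, v⟫ * Complex.I * UnitAddTorus.mFourierCoeff F k := by
  set c : ℂ := ⟪waveVector k, v⟫ * Complex.I with hc
  set χ := UnitAddTorus.mFourier (-k)
  have hχ (x : EuclideanSpace ℝ (Fin n)) :
      HasLineDerivAt ℝ (fun y ↦ χ (torusProj y)) (-c * χ (torusProj x)) x v := by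
    have hneg : waveVector (-k) = -waveVector k := by ext i; simp [waveVector]
    simp only [χ, mFourier_torusProj, HasLineDerivAt, inner_add_right, inner_smul_right, hneg,
      inner_neg_left, hc]
    have hlin : HasDerivAt (fun t : ℝ ↦ ((-⟪waveVector k, x⟫ + t * -⟪waveVector k, v⟫ : ℝ) : ℂ) *
        Complex.I) (((1 * -⟪waveVector k, v⟫ : ℝ) : ℂ) * Complex.I) 0 :=
      ((((hasDerivAt_id (0 : ℝ)).mul_const _).const_add _).ofReal_comp).mul_const _
    refine hlin.cexp.congr_deriv ?_
    simp only [zero_mul, add_zero, one_mul]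
    push_cast
    ring
  have hprod := integral_torus_eq_zero_of_hasLineDerivAt (F := χ * F)
    (F' := -c • (χ * F) + χ * F') (v := v) fun x ↦ by
      have hmul := HasDerivAt.fun_mul (hχ x) (h x)
      simp only [zero_smul, add_zero] at hmul
      simpa [HasLineDerivAt, mul_assoc] using hmul
  simp only [ContinuousMap.add_apply, ContinuousMap.smul_apply, ContinuousMap.mul_apply] at hprod
  rw [integral_add (integrable_torus (by fun_prop)) (integrable_torus (by fun_prop)),
    integral_smul, smul_eq_mul] at hprod
  simp only [UnitAddTorus.mFourierCoeff, smul_eq_mul]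
  linear_combination hprod

theorem norm_sq_waveVector (k : Fin n → ℤ) :
    ‖waveVector k‖ ^ 2 = ∑ i, ⟪waveVector k, EuclideanSpace.single i 1⟫ ^ 2 := by
  simp [EuclideanSpace.norm_sq_eq, EuclideanSpace.inner_single_right]

theorem waveVector_injective : Function.Injective (waveVector (n := n)) := by
  intro k l h
  ext i
  have hi := congrArg (fun x : EuclideanSpace ℝ (Fin n) ↦ x i) h
  simpa [waveVector, pi_ne_zero] using hi

theorem exists_finset_waveVector_norm_eq {κ : ℝ} (hκ : 0 ≤ κ) :
    ∃ s : Finset (Fin n → ℤ), (∀ k, k ∈ s ↔ ‖waveVector k‖ = κ) ∧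
      (s.card : ℝ) ≤ (2 * κ + 1) ^ n := by
  classical
  set box : Finset (Fin n → ℤ) := Fintype.piFinset fun _ ↦ Finset.Icc (-⌊κ⌋) ⌊κ⌋ with hbox
  have hmem {k : Fin n → ℤ} (hk : ‖waveVector k‖ = κ) : k ∈ box := by
    refine Fintype.mem_piFinset.2 fun i ↦ ?_
    have hcoord : |(2 * π * k i : ℝ)| ≤ κ := hk ▸ PiLp.norm_apply_le (waveVector k) i
    have hki : |(k i : ℝ)| ≤ κ := by
      rw [abs_mul, abs_of_pos (by positivity)] at hcoord
      nlinarith [abs_nonneg (k i : ℝ), pi_gt_three]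
    rw [abs_le] at hki
    rw [Finset.mem_Icc, neg_le, Int.le_floor, Int.le_floor]
    push_cast
    exact ⟨by linarith, hki.2⟩
  have hcard : (box.card : ℝ) ≤ (2 * κ + 1) ^ n := by
    have h0 : 0 ≤ ⌊κ⌋ := Int.floor_nonneg.2 hκ
    have hside : ((⌊κ⌋ + 1 - -⌊κ⌋).toNat : ℝ) = 2 * ⌊κ⌋ + 1 := by
      rw [← Int.cast_natCast, Int.toNat_of_nonneg (by lia)]
      push_cast
      ring
    simp only [hbox, Fintype.card_piFinset, Int.card_Icc, Finset.prod_const, Finset.card_univ,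
      Fintype.card_fin, Nat.cast_pow, hside]
    gcongr
    exact Int.floor_le κ
  refine ⟨box.filter fun k ↦ ‖waveVector k‖ = κ, fun k ↦ ?_, le_trans ?_ hcard⟩
  · simpa using hmem
  · exact_mod_cast Finset.card_filter_le _ _

theorem norm_mFourierCoeff_le {F : C(UnitAddTorus (Fin n), ℂ)} {S : ℝ} (hS : ∀ τ, ‖F τ‖ ≤ S)
    (k : Fin n → ℤ) : ‖UnitAddTorus.mFourierCoeff F k‖ ≤ S := by
  have hbound := norm_integral_le_of_norm_le_const (μ := volume)
    (f := fun τ ↦ UnitAddTorus.mFourier (-k) τ • F τ) (C := S) (.of_forall fun τ ↦ ?_)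
  · simpa [UnitAddTorus.mFourierCoeff] using hbound
  · have hchar : ‖UnitAddTorus.mFourier (-k) τ‖ ≤ 1 :=
      (ContinuousMap.norm_coe_le_norm _ τ).trans UnitAddTorus.mFourier_norm.le
    rw [norm_smul]
    exact (mul_le_of_le_one_left (norm_nonneg _) hchar).trans (hS τ)

theorem mFourierCoeff_lap {f : EuclideanSpace ℝ (Fin n) → ℝ} (hf : ContDiff ℝ 2 f)
    (hper : ZnPeriodic n f) {F L : C(UnitAddTorus (Fin n), ℂ)}
    (hF : ∀ x, F (torusProj x) = (f x : ℂ)) (hL : ∀ x, L (torusProj x) = (lap n f x : ℂ))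
    (k : Fin n → ℤ) :
    UnitAddTorus.mFourierCoeff L k = -‖waveVector k‖ ^ 2 * UnitAddTorus.mFourierCoeff F k := by
  set e : Fin n → EuclideanSpace ℝ (Fin n) := fun i ↦ EuclideanSpace.single i 1
  set f₁ : Fin n → EuclideanSpace ℝ (Fin n) → ℝ := fun i y ↦ fderiv ℝ f y (e i)
  have hf₁ (i : Fin n) : ContDiff ℝ 1 (f₁ i) :=
    (hf.fderiv_right (m := 1) (by norm_num)).clm_apply contDiff_const
  have hper₁ (i : Fin n) : ZnPeriodic n (f₁ i) := hper.fderiv_apply _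
  choose F₁ hF₁ using fun i ↦ (hper₁ i).exists_torus_lift (hf₁ i).continuous
  choose F₂ hF₂ using fun i ↦ ((hper₁ i).fderiv_apply (e i)).exists_torus_lift
    ((hf₁ i).continuous_fderiv_apply one_ne_zero |>.comp (by fun_prop : Continuous (·, e i)))
  have hline {g : EuclideanSpace ℝ (Fin n) → ℝ} (hg : Differentiable ℝ g) (i : Fin n)
      (x : EuclideanSpace ℝ (Fin n)) :
      HasLineDerivAt ℝ (fun y ↦ (g y : ℂ)) (fderiv ℝ g x (e i) : ℂ) x (e i) :=
    HasDerivAt.ofReal_comp ((hg x).hasFDerivAt.hasLineDerivAt (e i))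
  have hcoeff (i : Fin n) : UnitAddTorus.mFourierCoeff (F₂ i) k =
      -(⟪waveVector k, e i⟫ : ℂ) ^ 2 * UnitAddTorus.mFourierCoeff F k := by
    rw [mFourierCoeff_of_hasLineDerivAt (F := F₁ i) (v := e i) (fun x ↦ by
        simpa only [hF₁, hF₂] using hline ((hf₁ i).differentiable one_ne_zero) i x),
      mFourierCoeff_of_hasLineDerivAt (F := F) (v := e i) (fun x ↦ by
        simpa only [hF, hF₁] using hline (hf.differentiable two_ne_zero) i x)]
    linear_combination
      (⟪waveVector k, e i⟫ : ℂ) ^ 2 * UnitAddTorus.mFourierCoeff F k * Complex.I_sq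
  have hLsum : (L : UnitAddTorus (Fin n) → ℂ) = fun τ ↦ ∑ i, F₂ i τ := by
    ext τ
    obtain ⟨x, rfl⟩ := isOpenQuotientMap_torusProj.surjective τ
    simp [hL, hF₂, lap, f₁, e]
  have hsum : UnitAddTorus.mFourierCoeff L k = ∑ i, UnitAddTorus.mFourierCoeff (F₂ i) k := by
    simp only [UnitAddTorus.mFourierCoeff, hLsum, Finset.smul_sum]
    exact integral_finsetSum _ fun i _ ↦ integrable_torus (by fun_prop)
  rw [hsum, Finset.sum_congr rfl fun i _ ↦ hcoeff i, ← Finset.sum_mul, Finset.sum_neg_distrib]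
  rw [← Complex.ofReal_pow, norm_sq_waveVector]
  push_cast
  rfl

theorem mFourierCoeff_eq_zero_of_lap_eq {f : EuclideanSpace ℝ (Fin n) → ℝ} (hf : ContDiff ℝ 2 f)
    (hper : ZnPeriodic n f) {κ : ℝ} (hκ : 0 ≤ κ) (heig : ∀ x, lap n f x = -κ ^ 2 * f x)
    {F : C(UnitAddTorus (Fin n), ℂ)} (hF : ∀ x, F (torusProj x) = (f x : ℂ)) {k : Fin n → ℤ}
    (hk : ‖waveVector k‖ ≠ κ) : UnitAddTorus.mFourierCoeff F k = 0 := by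
  have hlap := mFourierCoeff_lap hf hper hF (L := (-κ ^ 2 : ℂ) • F) (by simp [hF, heig]) k
  have hsmul : UnitAddTorus.mFourierCoeff ⇑((-κ ^ 2 : ℂ) • F) k =
      (-κ ^ 2 : ℂ) * UnitAddTorus.mFourierCoeff F k := by
    simp only [UnitAddTorus.mFourierCoeff, ContinuousMap.coe_smul, Pi.smul_apply,
      ← integral_const_mul, smul_eq_mul]
    exact integral_congr_ae (.of_forall fun τ ↦ by ring)
  have hfactor : ((‖waveVector k‖ ^ 2 - κ ^ 2 : ℝ) : ℂ) * UnitAddTorus.mFourierCoeff F k = 0 := by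
    push_cast
    linear_combination hlap - hsmul
  refine (mul_eq_zero.1 hfactor).resolve_left fun h ↦ hk ?_
  exact (sq_eq_sq₀ (norm_nonneg _) hκ).1 (sub_eq_zero.1 (Complex.ofReal_eq_zero.1 h))

end Torus

section WaveSum

open scoped RealInnerProductSpace

/-- `f` is a finite superposition of plane waves `A_ξ cos (⟪ξ, x⟫ + θ_ξ)` whose frequencies `ξ` all
lie on the sphere of radius `κ` and whose amplitudes satisfy `∑ |A_ξ| ≤ B`. -/
def IsWaveSum {E : Type*} [NormedAddCommGroup E] [InnerProductSpace ℝ E] (κ B : ℝ)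
    (f : E → ℝ) : Prop :=
  ∃ (s : Finset E) (A θ : E → ℝ), (∀ ξ ∈ s, ‖ξ‖ = κ) ∧ ∑ ξ ∈ s, |A ξ| ≤ B ∧
    ∀ x, f x = ∑ ξ ∈ s, A ξ * cos (⟪ξ, x⟫ + θ ξ)

theorem re_mul_exp_mul_I (c : ℂ) (t : ℝ) :
    (c * Complex.exp (t * Complex.I)).re = ‖c‖ * cos (t + c.arg) := by
  conv_lhs => rw [← Complex.norm_mul_exp_arg_mul_I c]
  rw [mul_assoc, ← Complex.exp_add, Complex.re_ofReal_mul, ← add_mul, ← Complex.ofReal_add,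
    Complex.exp_ofReal_mul_I_re, add_comm]

theorem isWaveSum_of_lap_eq {n : ℕ} {f : EuclideanSpace ℝ (Fin n) → ℝ} (hf : ContDiff ℝ 2 f)
    (hper : ZnPeriodic n f) {κ S : ℝ} (hκ : 0 ≤ κ) (heig : ∀ x, lap n f x = -κ ^ 2 * f x)
    (hS : ∀ x, |f x| ≤ S) : IsWaveSum κ (S * (2 * κ + 1) ^ n) f := by
  classical
  obtain ⟨F, hF⟩ := hper.exists_torus_lift hf.continuous
  set c := UnitAddTorus.mFourierCoeff F with hc
  have hcS (k : Fin n → ℤ) : ‖c k‖ ≤ S := norm_mFourierCoeff_le (fun τ ↦ by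
    obtain ⟨x, rfl⟩ := isOpenQuotientMap_torusProj.surjective τ
    simpa [hF] using hS x) k
  obtain ⟨s, hs, hcard⟩ := exists_finset_waveVector_norm_eq (n := n) hκ
  have hzero (k : Fin n → ℤ) (hk : k ∉ s) : c k = 0 :=
    mFourierCoeff_eq_zero_of_lap_eq hf hper hκ heig hF fun h ↦ hk ((hs k).2 h)
  have hexpand (x : EuclideanSpace ℝ (Fin n)) :
      f x = ∑ k ∈ s, ‖c k‖ * cos (⟪waveVector k, x⟫ + (c k).arg) := by
    have hseries := UnitAddTorus.hasSum_mFourier_series_apply_of_summable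
      (summable_of_ne_finset_zero (s := s) hzero) (torusProj x)
    have hfinite := hseries.unique (hasSum_sum_of_ne_finset_zero (s := s) fun k hk ↦ by
      rw [← hc, hzero k hk, zero_smul])
    have hre := congrArg Complex.re (hfinite.symm.trans (hF x)).symm
    simpa only [Complex.ofReal_re, Complex.re_sum, smul_eq_mul, mFourier_torusProj,
      re_mul_exp_mul_I] using hre
  have hinv := Function.leftInverse_invFun (waveVector_injective (n := n))
  refine ⟨s.map ⟨waveVector, waveVector_injective⟩, fun ξ ↦ ‖c (Function.invFun waveVector ξ)‖,
    fun ξ ↦ (c (Function.invFun waveVector ξ)).arg, ?_, ?_, fun x ↦ ?_⟩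
  · simpa using fun k hk ↦ (hs k).1 hk
  · have hsum : ∑ k ∈ s, ‖c k‖ ≤ s.card * S := by
      simpa using Finset.sum_le_sum fun k (_ : k ∈ s) ↦ hcS k
    have hS0 : 0 ≤ S := (norm_nonneg _).trans (hcS 0)
    simpa [hinv _, mul_comm S] using hsum.trans (mul_le_mul_of_nonneg_right hcard hS0)
  · simpa [hinv _] using hexpand x

end WaveSum

section MeanValue

open Module
open scoped RealInnerProductSpace Topology

variable {E : Type*} [NormedAddCommGroup E] [InnerProductSpace ℝ E] [FiniteDimensional ℝ E]
  [MeasurableSpace E] [BorelSpace E]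

/-- `f` satisfies the mean value property of solutions of `Δf = -κ²f`: its integral over a ball of
radius `s` is a multiple of its value at the centre. The factor, common to all solutions, is read
off from the plane waves `cos ⟪ξ, ·⟫` with `‖ξ‖ = κ`. -/
structure HasMeanValueProperty (κ : ℝ) (f : E → ℝ) : Prop where
  continuous : Continuous f
  setIntegral_ball (ξ : E) (hξ : ‖ξ‖ = κ) (x : E) (s : ℝ) :
    ∫ y in ball x s, f y = (∫ y in ball (0 : E) s, cos ⟪ξ, y⟫) * f x

theorem integrableOn_ball_of_continuous {f : E → ℝ} (hf : Continuous f) (x : E) (s : ℝ) :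
    IntegrableOn f (ball x s) :=
  (hf.continuousOn.integrableOn_compact (isCompact_closedBall x s)).mono_set ball_subset_closedBall

theorem setIntegral_ball_add_left (f : E → ℝ) (x : E) (s : ℝ) :
    ∫ y in ball x s, f y = ∫ y in ball (0 : E) s, f (x + y) := by
  rw [← (measurePreserving_add_left volume x).setIntegral_preimage_emb
    (measurableEmbedding_addLeft x) f (ball x s), preimage_add_ball, sub_self]

theorem setIntegral_ball_sin_inner (ξ : E) (s : ℝ) :
    ∫ y in ball (0 : E) s, sin ⟪ξ, y⟫ = 0 := by
  have hodd := (Measure.measurePreserving_neg (volume : Measure E)).setIntegral_preimage_emb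
    (Homeomorph.neg E).measurableEmbedding (fun y ↦ sin ⟪ξ, y⟫) (ball 0 s)
  have hball : Neg.neg ⁻¹' ball (0 : E) s = ball 0 s := by ext y; simp
  simp only [hball, inner_neg_right, sin_neg, integral_neg] at hodd
  linarith

theorem setIntegral_ball_cos_inner_congr {ξ η : E} (h : ‖ξ‖ = ‖η‖) (s : ℝ) :
    ∫ y in ball (0 : E) s, cos ⟪ξ, y⟫ = ∫ y in ball (0 : E) s, cos ⟪η, y⟫ := by
  set R := (ℝ ∙ (ξ - η))ᗮ.reflection
  have hR : R ξ = η := Submodule.reflection_sub h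
  have hball : R ⁻¹' ball (0 : E) s = ball 0 s := by simp
  rw [← R.measurePreserving.setIntegral_preimage_emb R.toHomeomorph.measurableEmbedding
    (fun y ↦ cos ⟪η, y⟫) (ball 0 s), hball]
  simp only [← hR, R.inner_map_map]

theorem hasMeanValueProperty_cos (ξ : E) (θ : ℝ) :
    HasMeanValueProperty ‖ξ‖ fun x : E ↦ cos (⟪ξ, x⟫ + θ) := by
  refine ⟨by fun_prop, fun η hη x s ↦ ?_⟩
  have hadd (y : E) : cos (⟪ξ, x + y⟫ + θ) =
      cos (⟪ξ, x⟫ + θ) * cos ⟪ξ, y⟫ - sin (⟪ξ, x⟫ + θ) * sin ⟪ξ, y⟫ := by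
    rw [← cos_add, inner_add_right, add_right_comm]
  rw [setIntegral_ball_add_left]
  simp_rw [hadd]
  rw [integral_sub (integrableOn_ball_of_continuous (by fun_prop) 0 s)
    (integrableOn_ball_of_continuous (by fun_prop) 0 s), integral_const_mul, integral_const_mul,
    setIntegral_ball_sin_inner, mul_zero, sub_zero, setIntegral_ball_cos_inner_congr hη.symm,
    mul_comm]

namespace HasMeanValueProperty

variable {κ : ℝ} {f g : E → ℝ}

theorem const_mul (hf : HasMeanValueProperty κ f) (c : ℝ) :
    HasMeanValueProperty κ fun x ↦ c * f x where
  continuous := hf.continuous.const_mul c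
  setIntegral_ball ξ hξ x s := by
    rw [integral_const_mul, hf.setIntegral_ball ξ hξ, mul_left_comm]

theorem sub (hf : HasMeanValueProperty κ f) (hg : HasMeanValueProperty κ g) :
    HasMeanValueProperty κ fun x ↦ f x - g x where
  continuous := hf.continuous.sub hg.continuous
  setIntegral_ball ξ hξ x s := by
    rw [integral_sub (integrableOn_ball_of_continuous hf.continuous x s)
      (integrableOn_ball_of_continuous hg.continuous x s), hf.setIntegral_ball ξ hξ,
      hg.setIntegral_ball ξ hξ, mul_sub]

theorem sum {ι : Type*} {s : Finset ι} {f : ι → E → ℝ}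
    (hf : ∀ i ∈ s, HasMeanValueProperty κ (f i)) :
    HasMeanValueProperty κ fun x ↦ ∑ i ∈ s, f i x where
  continuous := continuous_finsetSum s fun i hi ↦ (hf i hi).continuous
  setIntegral_ball ξ hξ x r := by
    rw [integral_finsetSum s fun i hi ↦
      integrableOn_ball_of_continuous (hf i hi).continuous x r, Finset.mul_sum]
    exact Finset.sum_congr rfl fun i hi ↦ (hf i hi).setIntegral_ball ξ hξ x r

end HasMeanValueProperty

theorem IsWaveSum.hasMeanValueProperty {κ B : ℝ} {f : E → ℝ} (hf : IsWaveSum κ B f) :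
    HasMeanValueProperty κ f := by
  obtain ⟨s, A, θ, hξ, -, hfx⟩ := hf
  obtain rfl : f = fun x ↦ ∑ ξ ∈ s, A ξ * cos (⟪ξ, x⟫ + θ ξ) := funext hfx
  exact .sum fun ξ hs ↦ hξ ξ hs ▸ (hasMeanValueProperty_cos ξ (θ ξ)).const_mul (A ξ)

variable [Nontrivial E] {κ : ℝ} {f : E → ℝ}

theorem volume_real_ball_eq_pow_mul (x : E) {s : ℝ} (hs : 0 ≤ s) :
    volume.real (ball x s) = s ^ finrank ℝ E * volume.real (ball (0 : E) 1) := by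
  rw [← Measure.addHaar_real_closedBall_eq_addHaar_real_ball,
    Measure.addHaar_real_closedBall volume x hs]

theorem setIntegral_ball_cos_inner_le (ξ : E) {s : ℝ} (hs : 0 ≤ s) :
    ∫ y in ball (0 : E) s, cos ⟪ξ, y⟫ ≤ s ^ finrank ℝ E * volume.real (ball (0 : E) 1) := by
  have hmono : ∫ y in ball (0 : E) s, cos ⟪ξ, y⟫ ≤ ∫ _ in ball (0 : E) s, (1 : ℝ) :=
    setIntegral_mono (integrableOn_ball_of_continuous (by fun_prop) 0 s)
      (integrableOn_ball_of_continuous (by fun_prop) 0 s) fun _ ↦ cos_le_one _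
  simpa [volume_real_ball_eq_pow_mul (0 : E) hs] using hmono

theorem le_setIntegral_ball_cos_inner (ξ : E) {s : ℝ} (hs : 0 ≤ s) :
    (1 - ‖ξ‖ ^ 2 * s ^ 2 / 2) * (s ^ finrank ℝ E * volume.real (ball (0 : E) 1)) ≤
      ∫ y in ball (0 : E) s, cos ⟪ξ, y⟫ := by
  have hmono : ∫ y in ball (0 : E) s, (1 - ‖ξ‖ ^ 2 * s ^ 2 / 2) ≤
      ∫ y in ball (0 : E) s, cos ⟪ξ, y⟫ := by
    refine setIntegral_mono_on (integrableOn_ball_of_continuous (by fun_prop) 0 s)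
      (integrableOn_ball_of_continuous (by fun_prop) 0 s) measurableSet_ball fun y hy ↦ ?_
    have hinner : |⟪ξ, y⟫| ≤ ‖ξ‖ * s := (abs_real_inner_le_norm ξ y).trans <| by
      gcongr
      exact (mem_ball_zero_iff.1 hy).le
    have hsq := sq_le_sq' (by linarith [neg_le_of_abs_le hinner]) (le_of_abs_le hinner)
    linarith [one_sub_sq_div_two_le_cos (x := ⟪ξ, y⟫)]
  simpa [volume_real_ball_eq_pow_mul (0 : E) hs, mul_comm] using hmono

namespace HasMeanValueProperty

/-- The ball of radius `(1 - θ) s` about `x` lies in the ball of radius `s` about `y`, so the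
integrals of `f ≥ 0` over the two balls compare. -/
theorem harnack (hf : HasMeanValueProperty κ f) (hκ : 0 ≤ κ) {x y : E} {s θ : ℝ} (hs : 0 < s)
    (hθ : θ < 1) (hpos : ∀ w ∈ ball y s, 0 ≤ f w) (hxy : dist x y ≤ θ * s) :
    (1 - κ ^ 2 * s ^ 2 / 2) * (1 - θ) ^ finrank ℝ E * f x ≤ f y := by
  obtain ⟨ξ, rfl⟩ := exists_norm_eq E hκ
  set V := volume.real (ball (0 : E) 1)
  have hV : 0 < V :=
    ENNReal.toReal_pos (measure_ball_pos _ _ one_pos).ne' measure_ball_lt_top.ne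
  have hθ0 : 0 ≤ θ := nonneg_of_mul_nonneg_left (dist_nonneg.trans hxy) hs
  have hs' : 0 < (1 - θ) * s := mul_pos (by linarith) hs
  have hsub : ball x ((1 - θ) * s) ⊆ ball y s := ball_subset_ball' (by linarith)
  have hfx : 0 ≤ f x := hpos x (hsub (mem_ball_self hs'))
  have hfy : 0 ≤ f y := hpos y (mem_ball_self hs)
  have hlow : (1 - ‖ξ‖ ^ 2 * s ^ 2 / 2) * (((1 - θ) * s) ^ finrank ℝ E * V) ≤
      ∫ w in ball (0 : E) ((1 - θ) * s), cos ⟪ξ, w⟫ := by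
    refine le_trans ?_ (le_setIntegral_ball_cos_inner ξ hs'.le)
    gcongr
    nlinarith
  have hint : ∫ w in ball x ((1 - θ) * s), f w ≤ ∫ w in ball y s, f w :=
    setIntegral_mono_set (integrableOn_ball_of_continuous hf.continuous y s)
      ((ae_restrict_iff' measurableSet_ball).2 (.of_forall hpos)) hsub.eventuallyLE
  rw [hf.setIntegral_ball ξ rfl, hf.setIntegral_ball ξ rfl] at hint
  refine le_of_mul_le_mul_left ?_ (show 0 < s ^ finrank ℝ E * V by positivity)
  calc s ^ finrank ℝ E * V * ((1 - ‖ξ‖ ^ 2 * s ^ 2 / 2) * (1 - θ) ^ finrank ℝ E * f x)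
      = (1 - ‖ξ‖ ^ 2 * s ^ 2 / 2) * (((1 - θ) * s) ^ finrank ℝ E * V) * f x := by
        rw [mul_pow]; ring
    _ ≤ (∫ w in ball (0 : E) ((1 - θ) * s), cos ⟪ξ, w⟫) * f x := by gcongr
    _ ≤ (∫ w in ball (0 : E) s, cos ⟪ξ, w⟫) * f y := hint
    _ ≤ s ^ finrank ℝ E * V * f y := by gcongr; exact setIntegral_ball_cos_inner_le ξ hs.le

theorem eventually_eq_zero (hf : HasMeanValueProperty κ f) (hκ : 0 ≤ κ) {y : E}
    (hpos : ∀ᶠ x in 𝓝 y, 0 ≤ f x) (hy : f y = 0) : ∀ᶠ x in 𝓝 y, f x = 0 := by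
  obtain ⟨ε, hε, hball⟩ := eventually_nhds_iff_ball.1 hpos
  have hsmall : ∀ᶠ s in 𝓝[>] (0 : ℝ), κ ^ 2 * s ^ 2 / 2 < 1 :=
    (show Continuous fun s : ℝ ↦ κ ^ 2 * s ^ 2 / 2 by fun_prop).continuousWithinAt.eventually_lt
      continuousWithinAt_const (by simp)
  obtain ⟨s, hs1, hs0, hsε⟩ := (hsmall.and (Ioo_mem_nhdsGT hε)).exists
  filter_upwards [ball_mem_nhds y (half_pos hs0)] with x hx
  have hle := hf.harnack hκ hs0 one_half_lt_one (fun w hw ↦ hball w (ball_subset_ball hsε.le hw))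
    (x := x) (by linarith [mem_ball.1 hx])
  have hc : 0 < (1 - κ ^ 2 * s ^ 2 / 2) * (1 - 1 / 2 : ℝ) ^ finrank ℝ E :=
    mul_pos (by linarith) (by positivity)
  refine le_antisymm (nonpos_of_mul_nonpos_right (hle.trans_eq hy) hc) (hball x ?_)
  exact ball_subset_ball (by linarith) hx

theorem exists_eq_zero_on_sphere (hf : HasMeanValueProperty κ f) (hκ : 0 ≤ κ) {z y : E} {r : ℝ}
    (hpos : ∀ x ∈ closedBall z r, 0 ≤ f x) (hy : y ∈ closedBall z r) (hfy : f y = 0) :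
    ∃ x ∈ sphere z r, f x = 0 := by
  obtain hyr | hyr := eq_or_lt_of_le (mem_closedBall.1 hy)
  · exact ⟨y, hyr, hfy⟩
  have hr : 0 < r := dist_nonneg.trans_lt hyr
  have hopen {x : E} (hx : x ∈ ball z r) (hfx : f x = 0) : x ∈ interior {x | f x = 0} :=
    mem_interior_iff_mem_nhds.2 (hf.eventually_eq_zero hκ
      ((isOpen_ball.eventually_mem hx).mono fun w hw ↦ hpos w (ball_subset_closedBall hw)) hfx)
  have hclosed : IsClosed {x | f x = 0} := isClosed_eq hf.continuous continuous_const
  have hball : ball z r ⊆ {x | f x = 0} :=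
    ((convex_ball z r).isPreconnected.subset_of_closure_inter_subset isOpen_interior
      ⟨y, hyr, hopen hyr hfy⟩ fun x hx ↦
        hopen hx.2 (closure_minimal interior_subset hclosed hx.1)).trans interior_subset
  obtain ⟨x, hx⟩ := NormedSpace.sphere_nonempty (x := z).2 hr.le
  refine ⟨x, hx, closure_minimal hball hclosed ?_⟩
  rw [closure_ball z hr.ne']
  exact sphere_subset_closedBall hx

end HasMeanValueProperty

end MeanValue

section Growth

open scoped RealInnerProductSpace

variable {E : Type*} [NormedAddCommGroup E] [InnerProductSpace ℝ E] {κ B : ℝ} {f : E → ℝ}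

theorem abs_iteratedDeriv_cos_linear_le (b c : ℝ) (m : ℕ) (t : ℝ) :
    |iteratedDeriv m (fun u ↦ cos (b * u + c)) t| ≤ |b| ^ m := by
  have hshift : iteratedDeriv m (fun u ↦ cos (u + c)) = fun u ↦ iteratedDeriv m cos (u + c) :=
    iteratedDeriv_comp_add_const m cos c
  have hcos : ContDiff ℝ m fun u ↦ cos (u + c) := by fun_prop
  rw [iteratedDeriv_comp_const_mul hcos b, hshift, abs_mul, abs_pow]
  exact mul_le_of_le_one_right (by positivity) (abs_iteratedDeriv_cos_le_one m _)

namespace IsWaveSum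

theorem contDiff_line (hf : IsWaveSum κ B f) (m : ℕ) (z e : E) :
    ContDiff ℝ m fun t : ℝ ↦ f (z + t • e) := by
  obtain ⟨s, A, θ, -, -, hfx⟩ := hf
  simp only [hfx, inner_add_right, inner_smul_right]
  fun_prop

theorem abs_iteratedDeriv_line_le (hf : IsWaveSum κ B f) (hκ : 0 ≤ κ) (z : E) {e : E} (he : ‖e‖ = 1)
    (m : ℕ) (t : ℝ) : |iteratedDeriv m (fun u : ℝ ↦ f (z + u • e)) t| ≤ B * κ ^ m := by
  obtain ⟨s, A, θ, hξ, hA, hfx⟩ := hf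
  have hline : (fun u : ℝ ↦ f (z + u • e)) =
      fun u ↦ ∑ ξ ∈ s, A ξ * cos (⟪ξ, e⟫ * u + (⟪ξ, z⟫ + θ ξ)) := by
    ext u
    simp only [hfx, inner_add_right, inner_smul_right]
    exact Finset.sum_congr rfl fun ξ _ ↦ by ring_nf
  rw [hline, iteratedDeriv_fun_sum fun ξ _ ↦ by fun_prop]
  simp only [iteratedDeriv_const_mul_field]
  have hterm (ξ : E) (hs : ξ ∈ s) :
      |A ξ * iteratedDeriv m (fun u ↦ cos (⟪ξ, e⟫ * u + (⟪ξ, z⟫ + θ ξ))) t| ≤ |A ξ| * κ ^ m := by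
    rw [abs_mul]
    gcongr
    refine (abs_iteratedDeriv_cos_linear_le _ _ m t).trans ?_
    gcongr
    simpa [hξ ξ hs, he] using abs_real_inner_le_norm ξ e
  calc _ ≤ ∑ ξ ∈ s, |A ξ| * κ ^ m := (Finset.abs_sum_le_sum_abs _ _).trans (Finset.sum_le_sum hterm)
    _ = (∑ ξ ∈ s, |A ξ|) * κ ^ m := (Finset.sum_mul ..).symm
    _ ≤ B * κ ^ m := by gcongr

theorem abs_le_of_small_on_closedBall (hf : IsWaveSum κ B f) (hκ : 0 ≤ κ) {z p : E} {h δ : ℝ}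
    (hh : 0 < h) (hp : h ≤ dist p z) (hδ : ∀ x ∈ closedBall z h, |f x| ≤ δ) (m : ℕ) :
    |f p| ≤ dist p z ^ m * (B * κ ^ m / m.factorial + m * (δ / (h / m) ^ m)) := by
  have hT : 0 < dist p z := hh.trans_le hp
  set e : E := (dist p z)⁻¹ • (p - z) with he
  have hnorm : ‖e‖ = 1 := by
    rw [he, norm_smul, ← dist_eq_norm, norm_inv, Real.norm_of_nonneg hT.le, inv_mul_cancel₀ hT.ne']
  have hend : z + dist p z • e = p := by rw [he, smul_inv_smul₀ hT.ne', add_sub_cancel]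
  have := abs_le_of_small_on_Icc (hf.contDiff_line m z e) hh hp
    (hf.abs_iteratedDeriv_line_le hκ z hnorm m) fun t ht ↦ hδ _ <| by
      simp [norm_smul, hnorm, abs_of_nonneg ht.1, ht.2]
  rwa [hend] at this

end IsWaveSum

theorem pow_div_factorial_le_half_pow {x : ℝ} {m : ℕ} (hx : 0 ≤ x) (hxm : 6 * x ≤ m) :
    x ^ m / m.factorial ≤ (1 / 2) ^ m := by
  have hexp : exp m ≤ 3 ^ m := by
    rw [← exp_one_pow]
    gcongr
    exact exp_one_lt_three.le
  calc x ^ m / m.factorial = (6 * x) ^ m / m.factorial / 6 ^ m := by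
        rw [mul_pow]; field_simp
    _ ≤ (m : ℝ) ^ m / m.factorial / 6 ^ m := by gcongr
    _ ≤ 3 ^ m / 6 ^ m := by
        gcongr
        exact (pow_div_factorial_le_exp (m : ℝ) m.cast_nonneg m).trans hexp
    _ = (1 / 2) ^ m := by rw [← div_pow]; norm_num

theorem two_mul_two_mul_add_one_pow_le {d N : ℕ} (hd : 0 < d) (hN : 0 < N) (hκ : 0 ≤ κ)
    (hκN : κ ≤ N) : 2 * (2 * κ + 1) ^ d ≤ 2 ^ (6 * d * N) := by
  have hbase : 2 * κ + 1 ≤ 4 ^ N := by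
    calc 2 * κ + 1 ≤ 1 + N * 3 := by linarith
      _ ≤ (1 + 3) ^ N := one_add_mul_le_pow (by norm_num) N
      _ = 4 ^ N := by norm_num
  calc 2 * (2 * κ + 1) ^ d ≤ 2 ^ 1 * ((2 ^ 2) ^ N) ^ d := by
        norm_num only
        gcongr
    _ = 2 ^ (1 + 2 * N * d) := by simp only [← pow_mul, ← pow_add]
    _ ≤ 2 ^ (6 * d * N) := by
        gcongr
        · norm_num
        · nlinarith [Nat.mul_pos hd hN]

/-- The frequencies are so small compared with the interpolation degree `m = 6dN` that the
interpolation error is at most half of the maximum. -/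
theorem IsWaveSum.le_mul_of_small_on_closedBall {S : ℝ} {d N : ℕ} (hd : 0 < d) (hN : 0 < N)
    (hκ : 0 ≤ κ) (hκN : κ ≤ N) (hf : IsWaveSum κ (S * (2 * κ + 1) ^ d) f) {z p : E} {h δ : ℝ}
    (hh : 0 < h) (hh1 : h ≤ 1) (hδ : ∀ x ∈ closedBall z h, |f x| ≤ δ) (hp : dist p z ≤ d)
    (hfp : |f p| = S) :
    S ≤ (3 * d * (6 * d * N : ℕ) / h) ^ (6 * d * N) * δ := by
  set m := 6 * d * N with hm
  have hd1 : (1 : ℝ) ≤ d := by exact_mod_cast hd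
  have hm1 : (1 : ℝ) ≤ m := by exact_mod_cast (by positivity : 0 < m)
  have hS : 0 ≤ S := hfp ▸ abs_nonneg _
  have hδ0 : 0 ≤ δ := (abs_nonneg _).trans (hδ z (mem_closedBall_self hh.le))
  rcases le_total (dist p z) h with hph | hph
  · have hone : 1 ≤ 3 * d * m / h := (one_le_div hh).2 (by nlinarith)
    exact hfp ▸ (hδ p hph).trans (le_mul_of_one_le_left hδ0 (one_le_pow₀ hone))
  have herror : d ^ m * (S * (2 * κ + 1) ^ d * κ ^ m / m.factorial) ≤ S / 2 := by
    have hpow := pow_div_factorial_le_half_pow (x := d * κ) (m := m) (by positivity) (by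
      rw [hm]; push_cast; nlinarith)
    have hamp : (2 * κ + 1) ^ d ≤ 2 ^ m / 2 := by
      linarith [two_mul_two_mul_add_one_pow_le hd hN hκ hκN]
    calc d ^ m * (S * (2 * κ + 1) ^ d * κ ^ m / m.factorial)
        = S * (2 * κ + 1) ^ d * ((d * κ) ^ m / m.factorial) := by rw [mul_pow]; ring
      _ ≤ S * (2 ^ m / 2) * (1 / 2) ^ m := by gcongr
      _ = S / 2 := by rw [div_pow, one_pow]; field_simp
  have hthree : 2 * (m : ℝ) ≤ 3 ^ m := by
    have := one_add_mul_le_pow (show (-2 : ℝ) ≤ 2 by norm_num) m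
    norm_num at this
    linarith
  have hmain : S ≤ d ^ m * (S * (2 * κ + 1) ^ d * κ ^ m / m.factorial + m * (δ / (h / m) ^ m)) := by
    have hinterp := hf.abs_le_of_small_on_closedBall hκ hh hph hδ m
    rw [hfp] at hinterp
    exact hinterp.trans (by gcongr)
  calc S ≤ 2 * m * (d ^ m * (δ / (h / m) ^ m)) := by linarith
    _ ≤ 3 ^ m * (d ^ m * (δ / (h / m) ^ m)) := by gcongr
    _ = (3 * d * m / h) ^ m * δ := by simp only [div_pow, mul_pow]; field_simp

end Growth

section SlowBlocks

/-- In a fast block each step multiplies `μ` by more than `4`, so `m` fast blocks give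
`μ (K * q) ≥ 4 ^ (q * m) * μ 0`. -/
theorem exists_half_slow_blocks {μ : ℕ → ℝ} {q K : ℕ} (hmono : Monotone μ) (h0 : 0 < μ 0)
    (hlt : μ (K * q) < 2 ^ (K * q) * μ 0) :
    ∃ G ⊆ Finset.range K, K ≤ 2 * G.card ∧
      ∀ k ∈ G, ∃ i, k * q ≤ i ∧ i < (k + 1) * q ∧ μ (i + 1) ≤ 4 * μ i := by
  classical
  set slow : ℕ → Prop := fun k ↦ ∃ i, k * q ≤ i ∧ i < (k + 1) * q ∧ μ (i + 1) ≤ 4 * μ i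
  have hstep (k : ℕ) : (if slow k then 1 else (4 : ℝ) ^ q) * μ (k * q) ≤ μ ((k + 1) * q) := by
    split_ifs with hk
    · exact (one_mul _).trans_le (hmono (by grind))
    · have hfast (j : ℕ) (hj : j < q) : 4 * μ (k * q + j) ≤ μ (k * q + j + 1) := by
        by_contra! hcon
        exact hk ⟨k * q + j, by grind, by grind, hcon.le⟩
      simpa [add_mul] using geom_le (u := fun j ↦ μ (k * q + j)) (by norm_num) q hfast
  have hprod (k : ℕ) :
      (∏ j ∈ Finset.range k, if slow j then 1 else (4 : ℝ) ^ q) * μ 0 ≤ μ (k * q) := by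
    induction k with
    | zero => simp
    | succ k ih =>
      rw [Finset.prod_range_succ_comm, mul_assoc]
      refine le_trans ?_ (hstep k)
      gcongr
  refine ⟨(Finset.range K).filter slow, Finset.filter_subset _ _, ?_,
    fun k hk ↦ (Finset.mem_filter.1 hk).2⟩
  by_contra! hfew
  have hcard := Finset.card_filter_add_card_filter_not (s := Finset.range K) slow
  rw [Finset.card_range] at hcard
  have hpow := hprod K
  rw [Finset.prod_ite, Finset.prod_const_one, one_mul, Finset.prod_const, ← pow_mul] at hpow
  refine absurd (hpow.trans_lt hlt) (not_lt.2 ?_)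
  gcongr
  rw [show (4 : ℝ) = 2 ^ 2 by norm_num, ← pow_mul]
  exact pow_le_pow_right₀ one_le_two (by nlinarith)

end SlowBlocks

section LocalAsymmetry

open Module
open scoped RealInnerProductSpace

/-- `m` is the maximum of the quotient `w / φ` over the closed ball of radius `r` about `z`, and it
is attained at the point `y` of the bounding sphere. -/
structure IsQuotientMax {X : Type*} [PseudoMetricSpace X] (w φ : X → ℝ) (z : X) (r m : ℝ)
    (y : X) : Prop where
  dist_eq : dist y z = r
  eq_mul : w y = m * φ y
  le_mul : ∀ x ∈ closedBall z r, w x ≤ m * φ x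

/-- The points `y k`, `k ∈ G`, lie in distinct shells of thickness `ρ / K` partitioning
`ρ ≤ |x - z| ≤ 2ρ`, and at least half of the `K` shells are occupied. -/
structure IsShellFamily {X : Type*} [PseudoMetricSpace X] (z : X) (ρ : ℝ) (K : ℕ) (G : Finset ℕ)
    (y : ℕ → X) : Prop where
  subset_range : G ⊆ Finset.range K
  card_le : K ≤ 2 * G.card
  dist_mem : ∀ k ∈ G, dist (y k) z ∈ Set.Icc (ρ * (1 + k / K)) (ρ * (1 + (k + 1) / K))

theorem IsQuotientMax.mono {X : Type*} [PseudoMetricSpace X] {w φ : X → ℝ} {z : X}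
    {r r' m m' : ℝ} {y y' : X} (h : IsQuotientMax w φ z r m y) (h' : IsQuotientMax w φ z r' m' y')
    (hr : r ≤ r') (hφ : 0 < φ y) : m ≤ m' :=
  le_of_mul_le_mul_right (h.eq_mul ▸ h'.le_mul y (mem_closedBall.2 (h.dist_eq.trans_le hr))) hφ

theorem IsQuotientMax.le_two_mul {X : Type*} [PseudoMetricSpace X] {w φ : X → ℝ} {z : X}
    {r m S : ℝ} {y : X} (h : IsQuotientMax w φ z r m y) (hm : 0 ≤ m) (hφ : 1 / 2 ≤ φ y)
    (hw : w y ≤ S) : m ≤ 2 * S := by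
  nlinarith [h.eq_mul]

variable {E : Type*} [NormedAddCommGroup E] [InnerProductSpace ℝ E] [FiniteDimensional ℝ E]
  [MeasurableSpace E] [BorelSpace E] [Nontrivial E] {κ : ℝ} {w φ : E → ℝ} {z : E}

theorem exists_hasMeanValueProperty_near_one (hκ : 0 ≤ κ) (z : E) :
    ∃ φ : E → ℝ, HasMeanValueProperty κ φ ∧ φ z = 1 ∧ (∀ x, φ x ≤ 1) ∧
      ∀ x, κ * dist x z ≤ 1 / 10 → 199 / 200 ≤ φ x := by
  obtain ⟨ξ, rfl⟩ := exists_norm_eq E hκ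
  refine ⟨fun x ↦ cos (⟪ξ, x⟫ + -⟪ξ, z⟫), hasMeanValueProperty_cos ξ _, by simp,
    fun x ↦ cos_le_one _, fun x hx ↦ ?_⟩
  have hinner : |⟪ξ, x⟫ + -⟪ξ, z⟫| ≤ 1 / 10 := by
    rw [← sub_eq_add_neg, ← inner_sub_right]
    exact (abs_real_inner_le_norm ξ _).trans (dist_eq_norm x z ▸ hx)
  have hsq : (⟪ξ, x⟫ + -⟪ξ, z⟫) ^ 2 ≤ (1 / 10) ^ 2 :=
    sq_le_sq' (neg_le_of_abs_le hinner) (le_of_abs_le hinner)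
  linarith [one_sub_sq_div_two_le_cos (x := ⟪ξ, x⟫ + -⟪ξ, z⟫)]

theorem HasMeanValueProperty.exists_isQuotientMax (hw : HasMeanValueProperty κ w)
    (hφ : HasMeanValueProperty κ φ) (hκ : 0 ≤ κ) {r : ℝ} (hr : 0 ≤ r)
    (hpos : ∀ x ∈ closedBall z r, 0 < φ x) : ∃ m y, IsQuotientMax w φ z r m y := by
  obtain ⟨y, hy, hmax⟩ := (isCompact_closedBall z r).exists_isMaxOn ⟨z, mem_closedBall_self hr⟩
    (hw.continuous.continuousOn.div hφ.continuous.continuousOn fun x hx ↦ (hpos x hx).ne')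
  have hle (x : E) (hx : x ∈ closedBall z r) : w x ≤ w y / φ y * φ x :=
    (div_le_iff₀ (hpos x hx)).1 (hmax hx)
  obtain ⟨x, hx, hzero⟩ := ((hφ.const_mul (w y / φ y)).sub hw).exists_eq_zero_on_sphere hκ
    (fun x hx ↦ sub_nonneg.2 (hle x hx)) hy (by simp [div_mul_cancel₀ _ (hpos y hy).ne'])
  exact ⟨w y / φ y, x, hx, (sub_eq_zero.1 hzero).symm, hle⟩

/-- Harnack's inequality for `m φ - w ≥ 0`, whose value at the zero `z` of `w` is `m`. -/
theorem IsQuotientMax.abs_le_two_pow_mul (hw : HasMeanValueProperty κ w)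
    (hφ : HasMeanValueProperty κ φ) (hκ : 0 ≤ κ) {ρ m : ℝ} {y : E}
    (h : IsQuotientMax w φ z ρ m y) (hρ : 0 < ρ) (hκρ : κ * ρ ≤ 1) (hwz : w z = 0)
    (hφz : φ z = 1) (hφ1 : ∀ x, φ x ≤ 1) (hφ0 : ∀ x ∈ closedBall z ρ, 0 ≤ φ x)
    {x : E} (hx : x ∈ closedBall z (ρ / 2)) : |w x| ≤ 2 ^ (finrank ℝ E + 1) * m := by
  have hm : 0 ≤ m := by simpa [hwz, hφz] using h.le_mul z (mem_closedBall_self hρ.le)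
  have hxρ : x ∈ closedBall z ρ := closedBall_subset_closedBall (by linarith) hx
  have hharnack := ((hφ.const_mul m).sub hw).harnack hκ hρ one_half_lt_one (x := x) (y := z)
    (fun u hu ↦ sub_nonneg.2 (h.le_mul u (ball_subset_closedBall hu)))
    (by linarith [mem_closedBall.1 hx])
  have hnonneg : 0 ≤ m * φ x - w x := sub_nonneg.2 (h.le_mul x hxρ)
  have hsmall : κ ^ 2 * ρ ^ 2 ≤ 1 := by
    rw [← mul_pow]; exact pow_le_one₀ (by positivity) hκρ
  have hle : m * φ x - w x ≤ 2 ^ (finrank ℝ E + 1) * m := by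
    calc m * φ x - w x
        = 2 ^ (finrank ℝ E + 1) * (1 / 2 * (1 - 1 / 2) ^ finrank ℝ E * (m * φ x - w x)) := by
          norm_num only
          rw [pow_succ, one_div_pow]
          field_simp
      _ ≤ 2 ^ (finrank ℝ E + 1) *
          ((1 - κ ^ 2 * ρ ^ 2 / 2) * (1 - 1 / 2) ^ finrank ℝ E * (m * φ x - w x)) := by
          gcongr
          linarith
      _ ≤ 2 ^ (finrank ℝ E + 1) * m := by
          gcongr
          simpa [hwz, hφz] using hharnack
  have hpow : m * φ x ≤ 2 ^ (finrank ℝ E + 1) * m := by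
    rw [mul_comm m]
    gcongr
    exact (hφ1 x).trans (one_le_pow₀ one_le_two)
  have := mul_nonneg hm (hφ0 x hxρ)
  exact abs_le.2 ⟨by linarith, by linarith⟩

theorem seven_eighths_le_pow {d : ℕ} (hd : 0 < d) : 7 / 8 ≤ (1 - 1 / (8 * d : ℝ)) ^ d := by
  have hd' : (1 : ℝ) ≤ d := by exact_mod_cast hd
  have hsmall : 1 / (8 * d : ℝ) ≤ 1 := (div_le_one (by positivity)).2 (by linarith)
  calc (7 / 8 : ℝ) = 1 + d * -(1 / (8 * d)) := by field_simp; norm_num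
    _ ≤ (1 + -(1 / (8 * d))) ^ d := one_add_mul_le_pow (by linarith) d
    _ = (1 - 1 / (8 * d : ℝ)) ^ d := by rw [sub_eq_add_neg]

/-- Harnack's inequality for `4 m φ - w ≥ 0`, whose value at `y` is `3 m φ y`. -/
theorem IsQuotientMax.pos_of_slow (hw : HasMeanValueProperty κ w) (hφ : HasMeanValueProperty κ φ)
    (hκ : 0 ≤ κ) {r s m m' : ℝ} {y y' : E} (h : IsQuotientMax w φ z r m y)
    (h' : IsQuotientMax w φ z (r + s) m' y') (hslow : m' ≤ 4 * m) (hm : 0 < m) (hs : 0 < s)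
    (hκs : κ * s ≤ 1 / 20) (hφ1 : ∀ x, φ x ≤ 1)
    (hφ0 : ∀ x ∈ closedBall z (r + s), 199 / 200 ≤ φ x) {x : E}
    (hx : x ∈ closedBall y (s / (8 * finrank ℝ E))) : 0 < w x := by
  set d := finrank ℝ E
  have hd : 0 < d := finrank_pos
  have hd1 : (1 : ℝ) ≤ d := by exact_mod_cast hd
  have hθ : 1 / (8 * d : ℝ) < 1 := (div_lt_one (by positivity)).2 (by linarith)
  have hxy : dist x y ≤ 1 / (8 * d) * s := (mem_closedBall.1 hx).trans_eq (by ring)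
  have hball {u : E} (hu : u ∈ ball y s) : u ∈ closedBall z (r + s) := by
    rw [mem_closedBall]
    linarith [dist_triangle u y z, h.dist_eq, mem_ball.1 hu]
  have hpos (u : E) (hu : u ∈ ball y s) : 0 ≤ 4 * m * φ u - w u :=
    sub_nonneg.2 <| (h'.le_mul u (hball hu)).trans <|
      mul_le_mul_of_nonneg_right hslow (by linarith [hφ0 u (hball hu)])
  have hxs : x ∈ ball y s := hxy.trans_lt (mul_lt_of_lt_one_left hs hθ)
  have hharnack := ((hφ.const_mul (4 * m)).sub hw).harnack hκ hs hθ hpos hxy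
  rw [h.eq_mul] at hharnack
  have hsmall : κ ^ 2 * s ^ 2 ≤ (1 / 20) ^ 2 := by rw [← mul_pow]; gcongr
  have hlow : 199 / 200 * (7 / 8) * (4 * m * φ x - w x) ≤ 3 * m := by
    calc 199 / 200 * (7 / 8) * (4 * m * φ x - w x)
        ≤ (1 - κ ^ 2 * s ^ 2 / 2) * (1 - 1 / (8 * d)) ^ d * (4 * m * φ x - w x) := by
          have := hpos x hxs
          have := seven_eighths_le_pow hd
          gcongr
          · linarith
          · linarith
      _ ≤ 4 * m * φ y - m * φ y := hharnack
      _ = 3 * m * φ y := by ring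
      _ ≤ 3 * m := mul_le_of_le_one_right (by positivity) (hφ1 y)
  nlinarith [hφ0 x (hball hxs)]

/-- The radius `ρ (1 + i / L)`, frozen at `2ρ` for `i ≥ L` so that the whole sequence stays in the
region where the comparison function is close to `1`. -/
def stepRadius (ρ : ℝ) (L i : ℕ) : ℝ := ρ * (1 + min (i / L : ℝ) 1)

theorem stepRadius_zero (ρ : ℝ) (L : ℕ) : stepRadius ρ L 0 = ρ := by simp [stepRadius]

theorem stepRadius_of_le {ρ : ℝ} {L i : ℕ} (hi : i ≤ L) :
    stepRadius ρ L i = ρ * (1 + i / L) := by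
  rw [stepRadius, min_eq_left (div_le_one_of_le₀ (by exact_mod_cast hi) (Nat.cast_nonneg L))]

theorem stepRadius_succ {ρ : ℝ} {L i : ℕ} (hi : i < L) :
    stepRadius ρ L (i + 1) = stepRadius ρ L i + ρ / L := by
  rw [stepRadius_of_le hi, stepRadius_of_le hi.le]
  push_cast
  ring

theorem monotone_stepRadius {ρ : ℝ} (hρ : 0 ≤ ρ) (L : ℕ) : Monotone (stepRadius ρ L) :=
  fun i j hij ↦ by unfold stepRadius; gcongr

theorem stepRadius_mem_Icc {ρ : ℝ} (hρ : 0 ≤ ρ) (L i : ℕ) :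
    stepRadius ρ L i ∈ Set.Icc ρ (2 * ρ) := by
  have h0 : 0 ≤ min (i / L : ℝ) 1 := le_min (by positivity) zero_le_one
  have h1 : min (i / L : ℝ) 1 ≤ 1 := min_le_right _ _
  constructor <;> unfold stepRadius <;> nlinarith

theorem stepRadius_mem_shell {ρ : ℝ} (hρ : 0 ≤ ρ) {q K k i : ℕ} (hq : 0 < q) (hk : k < K)
    (hlow : k * q ≤ i) (hup : i ≤ (k + 1) * q) :
    stepRadius ρ (K * q) i ∈ Set.Icc (ρ * (1 + k / K)) (ρ * (1 + (k + 1) / K)) := by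
  have hlow' : (k * q : ℝ) ≤ i := by exact_mod_cast hlow
  have hup' : (i : ℝ) ≤ (k + 1) * q := by exact_mod_cast hup
  have hq' : (q : ℝ) ≠ 0 := by positivity
  rw [stepRadius_of_le (hup.trans (Nat.mul_le_mul_right q hk)), ← mul_div_mul_right (k : ℝ) K hq',
    ← mul_div_mul_right (k + 1 : ℝ) K hq', Nat.cast_mul]
  constructor <;> gcongr

theorem IsQuotientMax.pos_and_lt_of_growth (hw : HasMeanValueProperty κ w)
    (hφ : HasMeanValueProperty κ φ) (hκ : 0 ≤ κ) {ρ r m m' S Q A : ℝ} {y y' : E}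
    (h : IsQuotientMax w φ z ρ m y) (h' : IsQuotientMax w φ z r m' y') (hρr : ρ ≤ r)
    (hρ : 0 < ρ) (hκρ : κ * ρ ≤ 1) (hwz : w z = 0) (hφz : φ z = 1) (hφ1 : ∀ x, φ x ≤ 1)
    (hφ0 : ∀ x ∈ closedBall z r, 1 / 2 ≤ φ x) (hS : 0 < S) (hwS : ∀ x, w x ≤ S)
    (hgrow : ∀ δ, (∀ x ∈ closedBall z (ρ / 2), |w x| ≤ δ) → S ≤ Q * δ)
    (hQ : 2 ^ (finrank ℝ E + 2) * Q < A) : 0 < m ∧ m' < A * m := by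
  have hφρ (x : E) (hx : x ∈ closedBall z ρ) : 1 / 2 ≤ φ x :=
    hφ0 x (closedBall_subset_closedBall hρr hx)
  have hle : S ≤ Q * (2 ^ (finrank ℝ E + 1) * m) := hgrow _ fun x hx ↦
    h.abs_le_two_pow_mul hw hφ hκ hρ hκρ hwz hφz hφ1 (fun x hx ↦ by linarith [hφρ x hx]) hx
  have hnonneg : 0 ≤ m := by simpa [hwz, hφz] using h.le_mul z (mem_closedBall_self hρ.le)
  have hm : 0 < m := hnonneg.lt_of_ne fun h0 ↦ hS.not_ge (hle.trans_eq (by simp [← h0]))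
  have hmm' : m ≤ m' := h.mono h' hρr (by linarith [hφρ y h.dist_eq.le])
  refine ⟨hm, ?_⟩
  calc m' ≤ 2 * S := h'.le_two_mul (hm.le.trans hmm') (hφ0 y' h'.dist_eq.le) (hwS y')
    _ ≤ 2 * (Q * (2 ^ (finrank ℝ E + 1) * m)) := by gcongr
    _ = 2 ^ (finrank ℝ E + 2) * Q * m := by ring
    _ < A * m := by gcongr

theorem HasMeanValueProperty.exists_isShellFamily_pos {ρ S Q : ℝ} {q K : ℕ}
    (hw : HasMeanValueProperty κ w) (hκ : 0 ≤ κ) (hwz : w z = 0) (hwS : ∀ x, w x ≤ S) (hS : 0 < S)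
    (hρ : 0 < ρ) (hκρ : κ * ρ ≤ 1 / 20) (hq : 0 < q) (hK : 0 < K)
    (hgrow : ∀ δ, (∀ x ∈ closedBall z (ρ / 2), |w x| ≤ δ) → S ≤ Q * δ)
    (hQ : 2 ^ (finrank ℝ E + 2) * Q < 2 ^ (K * q)) :
    ∃ G y, IsShellFamily z ρ K G y ∧
      ∀ k ∈ G, ∀ x ∈ closedBall (y k) (ρ / (K * q) / (8 * finrank ℝ E)), 0 < w x := by
  obtain ⟨φ, hφ, hφz, hφ1, hφ0⟩ := exists_hasMeanValueProperty_near_one hκ z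
  set r := stepRadius ρ (K * q)
  have hr (i : ℕ) : r i ∈ Set.Icc ρ (2 * ρ) := stepRadius_mem_Icc hρ.le _ i
  have hφr (i : ℕ) (x : E) (hx : x ∈ closedBall z (r i)) : 199 / 200 ≤ φ x :=
    hφ0 x (by nlinarith [mem_closedBall.1 hx, (hr i).2])
  choose μ p hμ using fun i ↦ hw.exists_isQuotientMax hφ hκ (hρ.le.trans (hr i).1)
    fun x hx ↦ by linarith [hφr i x hx]
  have hmono : Monotone μ := fun i j hij ↦
    (hμ i).mono (hμ j) (monotone_stepRadius hρ.le _ hij) (by linarith [hφr i _ (hμ i).dist_eq.le])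
  have hμρ : IsQuotientMax w φ z ρ (μ 0) (p 0) := by
    simpa only [r, stepRadius_zero] using hμ 0
  obtain ⟨hμ0, hμlt⟩ := hμρ.pos_and_lt_of_growth hw hφ hκ (hμ (K * q)) (hr _).1 hρ (by linarith)
    hwz hφz hφ1 (fun x hx ↦ by linarith [hφr _ x hx]) hS hwS hgrow hQ
  obtain ⟨G, hG, hcard, hslow⟩ := exists_half_slow_blocks hmono hμ0 hμlt
  choose! i hlow hup hi using hslow
  have hkK {k : ℕ} (hk : k ∈ G) : k < K := Finset.mem_range.1 (hG hk)
  refine ⟨G, fun k ↦ p (i k), ⟨hG, hcard, fun k hk ↦ ?_⟩, fun k hk x hx ↦ ?_⟩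
  · rw [(hμ _).dist_eq]
    exact stepRadius_mem_shell hρ.le hq (hkK hk) (hlow k hk) (hup k hk).le
  · have hsucc : r (i k + 1) = r (i k) + ρ / (K * q) := by
      rw [← Nat.cast_mul]
      exact stepRadius_succ ((hup k hk).trans_le (Nat.mul_le_mul_right q (hkK hk)))
    have hKq : (1 : ℝ) ≤ K * q := by exact_mod_cast Nat.mul_pos hK hq
    have hκs : κ * (ρ / (K * q)) ≤ 1 / 20 :=
      (mul_le_mul_of_nonneg_left (div_le_self hρ.le hKq) hκ).trans hκρ
    exact (hμ (i k)).pos_of_slow hw hφ hκ (hsucc ▸ hμ (i k + 1)) (hi k hk)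
      (hμ0.trans_le (hmono (Nat.zero_le _))) (by positivity) hκs hφ1
      (hsucc ▸ hφr (i k + 1)) hx

end LocalAsymmetry

section Laplacian

open Module InnerProductSpace
open scoped Topology Laplacian RealInnerProductSpace

variable {E : Type*} [NormedAddCommGroup E]

theorem nonpos_of_isLocalMax_of_hasDerivAt {g g' : ℝ → ℝ} {a c : ℝ} (hmax : IsLocalMax g a)
    (hg : ∀ᶠ t in 𝓝 a, HasDerivAt g (g' t) t) (hg' : HasDerivAt g' c a) : c ≤ 0 := by
  by_contra! hc
  have hderiv : deriv (deriv g) a = c := by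
    have hEq : deriv g =ᶠ[𝓝 a] g' := hg.mono fun t ht ↦ ht.deriv
    rw [hEq.deriv_eq, hg'.deriv]
  have hmin : IsLocalMin g a := isLocalMin_of_deriv_deriv_pos (hderiv.symm ▸ hc)
    hmax.deriv_eq_zero hg.self_of_nhds.continuousAt
  have hconst : g =ᶠ[𝓝 a] fun _ ↦ g a := by
    filter_upwards [hmax, hmin] with t h₁ h₂ using le_antisymm h₁ h₂
  have hzero : deriv (deriv g) a = 0 := by simpa using hconst.deriv.deriv_eq
  exact hc.ne' (hderiv.symm.trans hzero)

theorem hasDerivAt_comp_add_smul [NormedSpace ℝ E] {f : E → ℝ} {x v : E} {t : ℝ}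
    (hf : DifferentiableAt ℝ f (x + t • v)) :
    HasDerivAt (fun t : ℝ ↦ f (x + t • v)) (fderiv ℝ f (x + t • v) v) t :=
  hf.hasFDerivAt.comp_hasDerivAt t (((hasDerivAt_id t).smul_const v).const_add x |>.congr_deriv
    (one_smul ℝ v))

theorem hasDerivAt_fderiv_comp_add_smul [NormedSpace ℝ E] {f : E → ℝ} {x : E}
    (hf : ContDiffAt ℝ 2 f x) (v : E) :
    HasDerivAt (fun t : ℝ ↦ fderiv ℝ f (x + t • v) v) (iteratedFDeriv ℝ 2 f x ![v, v]) 0 := by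
  have hdiff : DifferentiableAt ℝ (fun u ↦ fderiv ℝ f u v) x :=
    ((hf.fderiv_right (m := 1) le_rfl).differentiableAt one_ne_zero).clm_apply
      (differentiableAt_const v)
  convert hasDerivAt_comp_add_smul (x := x) (v := v) (t := 0) (by simpa using hdiff) using 1
  rw [zero_smul, add_zero, iteratedFDeriv_two_apply, fderiv_clm_apply
    ((hf.fderiv_right (m := 1) le_rfl).differentiableAt one_ne_zero) (differentiableAt_const v)]
  simp

theorem eventually_hasDerivAt_comp_add_smul [NormedSpace ℝ E] {f : E → ℝ} {x : E}
    (hf : ContDiffAt ℝ 2 f x) (v : E) :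
    ∀ᶠ t in 𝓝 (0 : ℝ), HasDerivAt (fun t : ℝ ↦ f (x + t • v)) (fderiv ℝ f (x + t • v) v) t := by
  have hline : Tendsto (fun t : ℝ ↦ x + t • v) (𝓝 0) (𝓝 x) :=
    Continuous.tendsto' (by fun_prop) _ _ (by simp)
  filter_upwards [hline.eventually (hf.eventually (by simp))] with t ht
  exact hasDerivAt_comp_add_smul (ht.differentiableAt two_ne_zero)

theorem iteratedFDeriv_two_eq_of_hasDerivAt [NormedSpace ℝ E] {f : E → ℝ} {x v : E} {g' : ℝ → ℝ}
    {c : ℝ} (hf : ContDiffAt ℝ 2 f x)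
    (hg : ∀ᶠ t in 𝓝 (0 : ℝ), HasDerivAt (fun t : ℝ ↦ f (x + t • v)) (g' t) t)
    (hg' : HasDerivAt g' c 0) : iteratedFDeriv ℝ 2 f x ![v, v] = c :=
  (hasDerivAt_fderiv_comp_add_smul hf v).unique <| hg'.congr_of_eventuallyEq <|
    ((eventually_hasDerivAt_comp_add_smul hf v).and hg).mono fun _ ht ↦ ht.1.unique ht.2

variable [InnerProductSpace ℝ E]

theorem contDiff_norm_sub_sq (y : E) {m : WithTop ℕ∞} : ContDiff ℝ m fun x : E ↦ ‖x - y‖ ^ 2 :=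
  (contDiff_norm_sq ℝ).comp (contDiff_id.sub contDiff_const)

theorem iteratedFDeriv_two_comp_norm_sub_sq {g g' : ℝ → ℝ} {g'' : ℝ} {x y v : E}
    (hC : ContDiffAt ℝ 2 g (‖x - y‖ ^ 2)) (hg : ∀ᶠ u in 𝓝 (‖x - y‖ ^ 2), HasDerivAt g (g' u) u)
    (hg' : HasDerivAt g' g'' (‖x - y‖ ^ 2)) :
    iteratedFDeriv ℝ 2 (fun x ↦ g (‖x - y‖ ^ 2)) x ![v, v] =
      4 * g'' * ⟪v, x - y⟫ ^ 2 + 2 * g' (‖x - y‖ ^ 2) * ‖v‖ ^ 2 := by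
  set b : ℝ := ⟪v, x - y⟫
  set u : ℝ → ℝ := fun t ↦ ‖x - y‖ ^ 2 + 2 * b * t + ‖v‖ ^ 2 * t ^ 2 with hu
  have hline (t : ℝ) : ‖x + t • v - y‖ ^ 2 = u t := by
    rw [add_sub_right_comm, norm_add_sq_real, inner_smul_right, real_inner_comm, norm_smul,
      mul_pow, norm_eq_abs, sq_abs]
    ring
  have hu0 : u 0 = ‖x - y‖ ^ 2 := by simp [hu]
  have hderiv (t : ℝ) : HasDerivAt u (2 * b + 2 * ‖v‖ ^ 2 * t) t := by
    refine ((((hasDerivAt_id t).const_mul (2 * b)).const_add (‖x - y‖ ^ 2)).add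
      ((hasDerivAt_pow 2 t).const_mul (‖v‖ ^ 2))).congr_deriv ?_
    norm_num
    ring
  have hlin : HasDerivAt (fun t : ℝ ↦ 2 * b + 2 * ‖v‖ ^ 2 * t) (2 * ‖v‖ ^ 2) 0 := by
    simpa using ((hasDerivAt_id (0 : ℝ)).const_mul (2 * ‖v‖ ^ 2)).const_add (2 * b)
  refine iteratedFDeriv_two_eq_of_hasDerivAt
    (g' := fun t ↦ g' (u t) * (2 * b + 2 * ‖v‖ ^ 2 * t)) ?_ ?_ ?_
  · exact hC.comp x (contDiff_norm_sub_sq y).contDiffAt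
  · have htend : Tendsto u (𝓝 0) (𝓝 (‖x - y‖ ^ 2)) := hu0 ▸ (hderiv 0).continuousAt
    filter_upwards [htend.eventually hg] with t ht
    simp only [hline]
    exact ht.comp t (hderiv t)
  · refine (((hu0.symm ▸ hg').comp 0 (hderiv 0)).mul hlin).congr_deriv ?_
    simp only [hu0, Function.comp_apply]
    ring

/-- The Newton potential `|x - y| ^ (2 - d)` of a point `y` in dimension `d ≥ 3`, up to a
normalising constant. -/
def newtonPotential (y x : E) : ℝ := (dist x y ^ (finrank ℝ E - 2))⁻¹

theorem newtonPotential_eq_rpow (y : E) :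
    newtonPotential y = fun x ↦ (‖x - y‖ ^ 2) ^ (-((finrank ℝ E - 2 : ℕ) / 2 : ℝ)) := by
  ext x
  rw [newtonPotential, dist_eq_norm, rpow_neg (by positivity), ← rpow_natCast, ← rpow_natCast,
    ← rpow_mul (norm_nonneg _)]
  congr 2
  push_cast
  ring

theorem contDiffAt_newtonPotential {x y : E} (hxy : x ≠ y) :
    ContDiffAt ℝ 2 (newtonPotential y) x := by
  rw [newtonPotential_eq_rpow]
  exact (contDiff_norm_sub_sq y).contDiffAt.rpow_const_of_ne (by simpa [sub_eq_zero] using hxy)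

variable [FiniteDimensional ℝ E]

theorem laplacian_nonpos_of_isLocalMax {f : E → ℝ} {x : E} (hf : ContDiffAt ℝ 2 f x)
    (hmax : IsLocalMax f x) : Δ f x ≤ 0 := by
  rw [laplacian_eq_iteratedFDeriv_stdOrthonormalBasis]
  refine Finset.sum_nonpos fun i _ ↦ ?_
  set v := stdOrthonormalBasis ℝ E i
  have hline : Tendsto (fun t : ℝ ↦ x + t • v) (𝓝 0) (𝓝 x) :=
    Continuous.tendsto' (by fun_prop) _ _ (by simp)
  refine nonpos_of_isLocalMax_of_hasDerivAt (g := fun t : ℝ ↦ f (x + t • v)) ?_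
    (eventually_hasDerivAt_comp_add_smul hf v) (hasDerivAt_fderiv_comp_add_smul hf v)
  simpa [IsLocalMax, IsMaxFilter] using hline.eventually hmax

theorem laplacian_comp_norm_sub_sq {g g' : ℝ → ℝ} {g'' : ℝ} {x y : E}
    (hC : ContDiffAt ℝ 2 g (‖x - y‖ ^ 2)) (hg : ∀ᶠ u in 𝓝 (‖x - y‖ ^ 2), HasDerivAt g (g' u) u)
    (hg' : HasDerivAt g' g'' (‖x - y‖ ^ 2)) :
    Δ (fun x ↦ g (‖x - y‖ ^ 2)) x =
      4 * g'' * ‖x - y‖ ^ 2 + 2 * finrank ℝ E * g' (‖x - y‖ ^ 2) := by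
  rw [laplacian_eq_iteratedFDeriv_stdOrthonormalBasis]
  simp_rw [iteratedFDeriv_two_comp_norm_sub_sq hC hg hg', (stdOrthonormalBasis ℝ E).norm_eq_one]
  rw [Finset.sum_add_distrib, ← Finset.mul_sum, (stdOrthonormalBasis ℝ E).sum_sq_inner_right,
    Finset.sum_const, Finset.card_univ, Fintype.card_fin, nsmul_eq_mul]
  ring

theorem laplacian_norm_sub_sq (x y : E) : Δ (fun x ↦ ‖x - y‖ ^ 2) x = 2 * finrank ℝ E := by
  simpa using laplacian_comp_norm_sub_sq (x := x) (y := y) (g := fun u ↦ u) contDiffAt_id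
    (Eventually.of_forall hasDerivAt_id) (hasDerivAt_const _ (1 : ℝ))

theorem laplacian_newtonPotential (hd : 2 ≤ finrank ℝ E) {x y : E} (hxy : x ≠ y) :
    Δ (newtonPotential y) x = 0 := by
  set a := ‖x - y‖ ^ 2
  have ha : 0 < a := by
    have := norm_pos_iff.2 (sub_ne_zero.2 hxy)
    positivity
  set s : ℝ := -((finrank ℝ E - 2 : ℕ) / 2)
  rw [newtonPotential_eq_rpow,
    laplacian_comp_norm_sub_sq (g := fun u ↦ u ^ s) (g' := fun u ↦ s * u ^ (s - 1))
      (g'' := s * ((s - 1) * a ^ (s - 1 - 1))) (contDiffAt_rpow_const_of_ne ha.ne')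
      ((eventually_ne_nhds ha.ne').mono fun u hu ↦ hasDerivAt_rpow_const (Or.inl hu))
      ((hasDerivAt_rpow_const (Or.inl ha.ne')).const_mul s)]
  have hpow : a ^ (s - 1) = a ^ (s - 1 - 1) * a := by
    rw [← rpow_add_one ha.ne', sub_add_cancel]
  have hs : (finrank ℝ E : ℝ) = 2 - 2 * s := by
    simp only [s, Nat.cast_sub hd]
    push_cast
    ring
  rw [hpow, hs]
  ring

theorem lap_eq_laplacian {n : ℕ} {f : EuclideanSpace ℝ (Fin n) → ℝ} (hf : ContDiff ℝ 2 f)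
    (x : EuclideanSpace ℝ (Fin n)) : lap n f x = Δ f x := by
  rw [lap, laplacian_eq_iteratedFDeriv_orthonormalBasis f (EuclideanSpace.basisFun (Fin n) ℝ)]
  refine Finset.sum_congr rfl fun i _ ↦ ?_
  have h : DifferentiableAt ℝ (fderiv ℝ f) x :=
    (hf.fderiv_right (m := 1) le_rfl).differentiable one_ne_zero x
  rw [iteratedFDeriv_two_apply, fderiv_clm_apply h (differentiableAt_const _)]
  simp

end Laplacian

section Periodic

open scoped Laplacian

variable {n : ℕ} {f : EuclideanSpace ℝ (Fin n) → ℝ}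

theorem ZnPeriodic.comp (hf : ZnPeriodic n f) (g : ℝ → ℝ) : ZnPeriodic n fun x ↦ g (f x) :=
  fun x v ↦ congrArg g (hf x v)

theorem ZnPeriodic.exists_dist_le (hf : ZnPeriodic n f) (z x : EuclideanSpace ℝ (Fin n)) :
    ∃ p, f p = f x ∧ dist p z ≤ n := by
  refine ⟨WithLp.toLp 2 fun i ↦ x i + (⌊z i - x i⌋ : ℤ), hf x _, ?_⟩
  have hcoord (i : Fin n) : dist (x i + (⌊z i - x i⌋ : ℤ)) (z i) ^ 2 ≤ 1 := by
    have h₁ := Int.floor_le (z i - x i)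
    have h₂ := Int.lt_floor_add_one (z i - x i)
    rw [Real.dist_eq, sq_abs, sq_le_one_iff_abs_le_one, abs_le]
    constructor <;> linarith
  rw [EuclideanSpace.dist_eq]
  refine Real.sqrt_le_iff.2 ⟨n.cast_nonneg, (Finset.sum_le_sum fun i _ ↦ hcoord i).trans ?_⟩
  simpa using mod_cast Nat.le_self_pow two_ne_zero n

theorem ZnPeriodic.exists_forall_le (hf : ZnPeriodic n f) (hc : Continuous f) :
    ∃ x₀, ∀ x, f x ≤ f x₀ := by
  obtain ⟨x₀, -, hx₀⟩ := (isCompact_closedBall (0 : EuclideanSpace ℝ (Fin n)) n).exists_isMaxOn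
    ⟨0, mem_closedBall_self n.cast_nonneg⟩ hc.continuousOn
  refine ⟨x₀, fun x ↦ ?_⟩
  obtain ⟨p, hp, hpd⟩ := hf.exists_dist_le 0 x
  exact hp ▸ hx₀ hpd

theorem ZnPeriodic.radius_le_of_pos (hper : ZnPeriodic n f) (hf : ContDiff ℝ 2 f)
    (hΔ : ∀ x, 0 < f x → Δ f x < 0) {c : EuclideanSpace ℝ (Fin n)} {ρ : ℝ}
    (hpos : ∀ x ∈ ball c ρ, 0 < f x) : ρ ≤ n := by
  by_contra! hρ
  have hpos' (x) : 0 < f x := by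
    obtain ⟨p, hp, hpd⟩ := hper.exists_dist_le c x
    exact hp ▸ hpos p (hpd.trans_lt hρ)
  obtain ⟨x₀, hx₀⟩ := (hper.comp Neg.neg).exists_forall_le hf.continuous.neg
  have h := laplacian_nonpos_of_isLocalMax hf.neg.contDiffAt (Eventually.of_forall hx₀)
  have hneg : Δ (-f) x₀ = -Δ f x₀ := congrFun InnerProductSpace.laplacian_neg x₀
  have : Δ (fun x ↦ -f x) x₀ = Δ (-f) x₀ := rfl
  linarith [hΔ x₀ (hpos' x₀)]

end Periodic

section PositiveDomain

variable {X : Type*} [TopologicalSpace X] {f : X → ℝ} {Ω : Set X}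

/-- A positive domain of `f`: a nonempty open union of connected components of `{f ≠ 0}` on which
`f` is positive. The last field expresses that `f` vanishes on the boundary of `Ω`. -/
structure IsPositiveDomain (f : X → ℝ) (Ω : Set X) : Prop where
  isOpen : IsOpen Ω
  nonempty : Ω.Nonempty
  pos : ∀ x ∈ Ω, 0 < f x
  mem_of_mem_closure : ∀ x ∈ closure Ω, f x ≠ 0 → x ∈ Ω

theorem IsPositiveDomain.subset_of_isPreconnected (hΩ : IsPositiveDomain f Ω) {t : Set X}
    (ht : IsPreconnected t) (hf : ∀ x ∈ t, f x ≠ 0) (h : (t ∩ Ω).Nonempty) : t ⊆ Ω :=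
  ht.subset_of_closure_inter_subset hΩ.isOpen h fun x hx ↦
    hΩ.mem_of_mem_closure x hx.1 (hf x hx.2)

theorem isPositiveDomain_connectedComponentIn [LocallyConnectedSpace X] (hf : Continuous f) {x : X}
    (hx : 0 < f x) : IsPositiveDomain f (connectedComponentIn {y | f y ≠ 0} x) := by
  set C := connectedComponentIn {y | f y ≠ 0} x
  have hCsub : C ⊆ {y | f y ≠ 0} := connectedComponentIn_subset _ _
  have hxC : x ∈ C := mem_connectedComponentIn hx.ne'
  have hC : IsPreconnected C := isPreconnected_connectedComponentIn
  refine ⟨(isOpen_ne_fun hf continuous_const).connectedComponentIn, ⟨x, hxC⟩, ?_, ?_⟩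
  · intro y hy
    by_contra! hle
    obtain ⟨w, hw, hw0⟩ := hC.intermediate_value hy hxC hf.continuousOn ⟨hle, hx.le⟩
    exact hCsub hw hw0
  · intro y hy hy0
    refine (hC.subset_closure (Set.subset_insert y C) ?_).subset_connectedComponentIn
      (Set.mem_insert_of_mem y hxC) (Set.insert_subset hy0 hCsub) (Set.mem_insert y C)
    exact Set.insert_subset hy subset_closure

theorem IsNodalDomain.exists_isPositiveDomain {n : ℕ} {ψ : EuclideanSpace ℝ (Fin n) → ℝ}
    (hψ : Continuous ψ) {Ω : Set (EuclideanSpace ℝ (Fin n))} (hΩ : IsNodalDomain ψ Ω) :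
    ∃ σ : ℝ, |σ| = 1 ∧ IsPositiveDomain (fun x ↦ σ * ψ x) Ω := by
  obtain ⟨x, hx, rfl⟩ := hΩ
  obtain ⟨σ, hσ, hpos⟩ : ∃ σ : ℝ, |σ| = 1 ∧ 0 < σ * ψ x := by
    rcases hx.lt_or_gt with h | h
    · exact ⟨-1, by simp, by linarith⟩
    · exact ⟨1, by simp, by linarith⟩
  have hσ0 : σ ≠ 0 := by rintro rfl; simp at hσ
  refine ⟨σ, hσ, ?_⟩
  simpa [hσ0] using isPositiveDomain_connectedComponentIn (hψ.const_mul σ) hpos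

end PositiveDomain

section ShellPotential

open Module InnerProductSpace
open scoped Laplacian

variable {E : Type*} [NormedAddCommGroup E] [InnerProductSpace ℝ E]

theorem newtonPotential_nonneg (y x : E) : 0 ≤ newtonPotential y x := by
  unfold newtonPotential
  positivity

theorem newtonPotential_le {x y : E} {a : ℝ} (ha : 0 < a) (h : a ≤ dist x y) :
    newtonPotential y x ≤ (a ^ (finrank ℝ E - 2))⁻¹ := by
  unfold newtonPotential
  gcongr

theorem le_newtonPotential {x y : E} {b : ℝ} (hxy : x ≠ y) (h : dist x y ≤ b) :
    (b ^ (finrank ℝ E - 2))⁻¹ ≤ newtonPotential y x := by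
  have := dist_pos.2 hxy
  unfold newtonPotential
  gcongr

theorem card_le_three_of_mem_Ioo {G : Finset ℕ} {t : ℝ}
    (h : ∀ k ∈ G, (k : ℝ) ∈ Set.Ioo (t - 2) (t + 1)) : G.card ≤ 3 := by
  rcases G.eq_empty_or_nonempty with rfl | hG
  · simp
  have hsub : G ⊆ Finset.Ico (G.min' hG) (G.min' hG + 3) := fun k hk ↦ by
    have hmin := (h _ (G.min'_mem hG)).1
    have hlt : (k : ℝ) < (G.min' hG + 3 : ℕ) := by
      push_cast
      linarith [(h k hk).2]
    exact Finset.mem_Ico.2 ⟨G.min'_le k hk, mod_cast hlt⟩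
  simpa using Finset.card_le_card hsub

theorem IsShellFamily.card_filter_dist_lt_le {X : Type*} [PseudoMetricSpace X] {z : X} {ρ : ℝ}
    {K : ℕ} {G : Finset ℕ} {y : ℕ → X} (hG : IsShellFamily z ρ K G y) (hρ : 0 < ρ) (hK : 0 < K)
    (x : X) : (G.filter fun k ↦ dist x (y k) < ρ / K).card ≤ 3 := by
  refine card_le_three_of_mem_Ioo (t := (dist x z - ρ) / (ρ / K)) fun k hk ↦ ?_
  obtain ⟨hk, hnear⟩ := Finset.mem_filter.1 hk
  obtain ⟨hlo, hhi⟩ := hG.dist_mem k hk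
  have hlo' : ρ * (1 + k / K) = ρ + k * (ρ / K) := by ring
  have hhi' : ρ * (1 + (k + 1) / K) = ρ + (k + 1) * (ρ / K) := by ring
  have htri₁ := dist_triangle x (y k) z
  have htri₂ := dist_triangle_left (y k) z x
  constructor
  · rw [sub_lt_iff_lt_add, div_lt_iff₀ (by positivity)]
    linarith
  · rw [← sub_lt_iff_lt_add, lt_div_iff₀ (by positivity)]
    linarith

theorem IsShellFamily.sum_newtonPotential_le {z x : E} {ρ r : ℝ} {K : ℕ} {G : Finset ℕ}
    {y : ℕ → E} (hG : IsShellFamily z ρ K G y) (hρ : 0 < ρ) (hK : 0 < K) (hr : 0 < r)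
    (hfar : ∀ k ∈ G, r ≤ dist x (y k)) :
    ∑ k ∈ G, newtonPotential (y k) x ≤
      3 * (r ^ (finrank ℝ E - 2))⁻¹ + K * ((ρ / K) ^ (finrank ℝ E - 2))⁻¹ := by
  rw [← Finset.sum_filter_add_sum_filter_not G fun k ↦ dist x (y k) < ρ / K]
  refine add_le_add ?_ ?_
  · refine (Finset.sum_le_card_nsmul _ _ _ fun k hk ↦
      newtonPotential_le hr (hfar k (Finset.mem_filter.1 hk).1)).trans ?_
    rw [nsmul_eq_mul]
    gcongr
    exact mod_cast hG.card_filter_dist_lt_le hρ hK x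
  · refine (Finset.sum_le_card_nsmul _ _ _ fun k hk ↦ newtonPotential_le (by positivity)
      (not_lt.1 (Finset.mem_filter.1 hk).2)).trans ?_
    rw [nsmul_eq_mul]
    gcongr
    simpa using Finset.card_le_card ((Finset.filter_subset _ G).trans hG.subset_range)

theorem IsShellFamily.dist_le {X : Type*} [PseudoMetricSpace X] {z : X} {ρ : ℝ} {K k : ℕ}
    {G : Finset ℕ} {y : ℕ → X} (hG : IsShellFamily z ρ K G y) (hρ : 0 ≤ ρ) (hk : k ∈ G) :
    dist (y k) z ≤ 2 * ρ := by
  have hkK : k < K := Finset.mem_range.1 (hG.subset_range hk)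
  have hle : ((k : ℝ) + 1) / K ≤ 1 := div_le_one_of_le₀ (mod_cast hkK) K.cast_nonneg
  calc dist (y k) z ≤ ρ * (1 + (k + 1) / K) := (hG.dist_mem k hk).2
    _ ≤ ρ * (1 + 1) := by gcongr
    _ = 2 * ρ := by ring

theorem IsShellFamily.le_sum_newtonPotential_sub (hd : 3 ≤ finrank ℝ E) {z x x₀ : E} {ρ : ℝ}
    {K : ℕ} {G : Finset ℕ} {y : ℕ → E} (hG : IsShellFamily z ρ K G y) (hρ : 0 < ρ)
    (hx₀ : dist x₀ z ≤ ρ) (hx₀y : ∀ k ∈ G, x₀ ≠ y k) (hx : dist x x₀ = 9 * ρ) :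
    K / 4 * ((3 * ρ) ^ (finrank ℝ E - 2))⁻¹ ≤
      ∑ k ∈ G, newtonPotential (y k) x₀ - ∑ k ∈ G, newtonPotential (y k) x := by
  have hhalf : ((6 * ρ) ^ (finrank ℝ E - 2))⁻¹ ≤ ((3 * ρ) ^ (finrank ℝ E - 2))⁻¹ / 2 := by
    have h2 : (2 : ℝ) ≤ 2 ^ (finrank ℝ E - 2) := le_self_pow₀ one_le_two (by lia)
    rw [show 6 * ρ = 2 * (3 * ρ) by ring, mul_pow, mul_inv, div_eq_inv_mul]
    gcongr
  have hterm (k) (hk : k ∈ G) : ((3 * ρ) ^ (finrank ℝ E - 2))⁻¹ / 2 ≤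
      newtonPotential (y k) x₀ - newtonPotential (y k) x := by
    have hyz := hG.dist_le hρ.le hk
    have h₀ : dist x₀ (y k) ≤ 3 * ρ := by linarith [dist_triangle_right x₀ (y k) z]
    have h : 6 * ρ ≤ dist x (y k) := by
      linarith [dist_triangle x (y k) x₀, dist_comm x₀ (y k)]
    have := le_newtonPotential (hx₀y k hk) h₀
    have := newtonPotential_le (by positivity) h
    linarith
  have hcard : (K : ℝ) / 2 ≤ G.card := by
    have : (K : ℝ) ≤ 2 * G.card := mod_cast hG.card_le
    linarith
  calc K / 4 * ((3 * ρ) ^ (finrank ℝ E - 2))⁻¹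
      = K / 2 * (((3 * ρ) ^ (finrank ℝ E - 2))⁻¹ / 2) := by ring
    _ ≤ G.card * (((3 * ρ) ^ (finrank ℝ E - 2))⁻¹ / 2) := by gcongr
    _ ≤ ∑ k ∈ G, (newtonPotential (y k) x₀ - newtonPotential (y k) x) := by
      rw [← nsmul_eq_mul]
      exact Finset.card_nsmul_le_sum _ _ _ hterm
    _ = _ := Finset.sum_sub_distrib _ _

theorem contDiffAt_sum_newtonPotential {G : Finset ℕ} {y : ℕ → E} {x : E}
    (h : ∀ k ∈ G, x ≠ y k) : ContDiffAt ℝ 2 (fun x ↦ ∑ k ∈ G, newtonPotential (y k) x) x :=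
  ContDiffAt.sum fun k hk ↦ contDiffAt_newtonPotential (h k hk)

theorem laplacian_sum_newtonPotential [FiniteDimensional ℝ E] (hd : 2 ≤ finrank ℝ E)
    {G : Finset ℕ} {y : ℕ → E} {x : E} (h : ∀ k ∈ G, x ≠ y k) :
    Δ (fun x ↦ ∑ k ∈ G, newtonPotential (y k) x) x = 0 := by
  induction G using Finset.induction_on with
  | empty => simp
  | insert k G hk ih =>
    have hk' := h k (Finset.mem_insert_self k G)
    have hG := fun i hi ↦ h i (Finset.mem_insert_of_mem hi)
    have hadd := (contDiffAt_newtonPotential hk').laplacian_add (contDiffAt_sum_newtonPotential hG)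
    simp_rw [Finset.sum_insert hk]
    exact hadd.trans (by rw [laplacian_newtonPotential hd hk', ih hG, add_zero])

end ShellPotential

section Barrier

open Module InnerProductSpace
open scoped Laplacian

theorem IsPositiveDomain.exists_near_max {X : Type*} [TopologicalSpace X] {f : X → ℝ} {Ω : Set X}
    (hΩ : IsPositiveDomain f Ω) {S ε : ℝ} (hfS : ∀ x, f x ≤ S) (hε : 0 < ε) :
    ∃ M, (∀ x ∈ Ω, f x ≤ M) ∧ ∃ x₀ ∈ Ω, (1 - ε) * M ≤ f x₀ := by
  have hbdd : BddAbove (f '' Ω) := ⟨S, Set.forall_mem_image.2 fun x _ ↦ hfS x⟩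
  have hle (x : X) (hx : x ∈ Ω) : f x ≤ sSup (f '' Ω) := le_csSup hbdd (Set.mem_image_of_mem f hx)
  obtain ⟨x, hx⟩ := hΩ.nonempty
  have hM : 0 < sSup (f '' Ω) := (hΩ.pos x hx).trans_le (hle x hx)
  obtain ⟨_, ⟨x₀, hx₀, rfl⟩, hlt⟩ := exists_lt_of_lt_csSup (hΩ.nonempty.image f)
    (show (1 - ε) * sSup (f '' Ω) < sSup (f '' Ω) by nlinarith)
  exact ⟨_, hle, x₀, hx₀, hlt.le⟩

variable {E : Type*} [NormedAddCommGroup E] [InnerProductSpace ℝ E] {f v : E → ℝ} {Ω : Set E}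
  {κ M : ℝ} {x₀ : E}

/-- The comparison function of the barrier argument: on a positive domain of a solution `f` of
`Δf = -κ²f` with supremum `M` it is strictly subharmonic wherever `v` is harmonic. -/
def barrier (f v : E → ℝ) (κ M c : ℝ) (x₀ : E) : E → ℝ :=
  f + (c • v + (κ ^ 2 * M) • fun x ↦ ‖x - x₀‖ ^ 2)

theorem contDiffAt_barrier {x : E} (hf : ContDiffAt ℝ 2 f x) (hv : ContDiffAt ℝ 2 v x) (c : ℝ) :
    ContDiffAt ℝ 2 (barrier f v κ M c x₀) x :=
  hf.add ((contDiffAt_const.smul hv).add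
    (contDiffAt_const.smul (contDiff_norm_sub_sq x₀).contDiffAt))

variable [FiniteDimensional ℝ E]

theorem laplacian_barrier {x : E} (hf : ContDiffAt ℝ 2 f x) (hv : ContDiffAt ℝ 2 v x) (c : ℝ) :
    Δ (barrier f v κ M c x₀) x = Δ f x + (c * Δ v x + κ ^ 2 * M * (2 * finrank ℝ E)) := by
  have hsq : ContDiffAt ℝ 2 (fun x ↦ ‖x - x₀‖ ^ 2) x := (contDiff_norm_sub_sq x₀).contDiffAt
  have hcv : ContDiffAt ℝ 2 (c • v) x := hv.const_smul c
  have hcsq : ContDiffAt ℝ 2 ((κ ^ 2 * M) • fun x ↦ ‖x - x₀‖ ^ 2) x :=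
    contDiffAt_const.smul hsq
  rw [barrier, hf.laplacian_add (f₂ := c • v + _) (hcv.add hcsq), hcv.laplacian_add hcsq,
    laplacian_smul _ hv, laplacian_smul _ hsq, laplacian_norm_sub_sq, smul_eq_mul, smul_eq_mul]

theorem not_isLocalMax_barrier [Nontrivial E] {x : E} (hf : ContDiffAt ℝ 2 f x)
    (hΔ : Δ f x = -κ ^ 2 * f x) (hv : ContDiffAt ℝ 2 v x) (hvΔ : Δ v x = 0) (hκ : 0 < κ)
    (hM : 0 < M) (hfM : f x ≤ M) (c : ℝ) : ¬ IsLocalMax (barrier f v κ M c x₀) x := by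
  intro hmax
  have hle := laplacian_nonpos_of_isLocalMax (contDiffAt_barrier hf hv c) hmax
  rw [laplacian_barrier hf hv, hΔ, hvΔ] at hle
  have hd : (1 : ℝ) ≤ finrank ℝ E := mod_cast finrank_pos
  have hpos : 0 < κ ^ 2 * M := by positivity
  nlinarith [mul_le_mul_of_nonneg_left hfM (sq_nonneg κ)]

/-- The point `x` maximizes the barrier over the part of `Ω` within distance `R` of `x₀`. -/
theorem IsPositiveDomain.exists_sphere_le_add [Nontrivial E] (hΩ : IsPositiveDomain f Ω)
    (hf : ContDiff ℝ 2 f) (hΔ : ∀ x, Δ f x = -κ ^ 2 * f x) (hκ : 0 < κ) (hM : ∀ x ∈ Ω, f x ≤ M)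
    {R V : ℝ} (hκR : (κ * R) ^ 2 < 1 / 4) (hR : 0 ≤ R) (hx₀ : x₀ ∈ Ω)
    (hfx₀ : (1 - (κ * R) ^ 2) * M ≤ f x₀) (hV : 0 < V)
    (hv : ∀ x ∈ closure Ω, ContDiffAt ℝ 2 v x) (hvΔ : ∀ x ∈ Ω, Δ v x = 0)
    (hv0 : ∀ x ∈ closure Ω, v x ∈ Set.Icc 0 V) :
    ∃ x, dist x x₀ = R ∧ v x₀ ≤ v x + 4 * (κ * R) ^ 2 * V := by
  have hM0 : 0 < M := (hΩ.pos x₀ hx₀).trans_le (hM x₀ hx₀)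
  set c := M / (2 * V)
  have hc : 0 < c := by positivity
  have hcV : c * V = M / 2 := by simp only [c]; field_simp
  have hx₀D : x₀ ∈ closedBall x₀ R ∩ closure Ω := ⟨mem_closedBall_self hR, subset_closure hx₀⟩
  obtain ⟨x, ⟨hxR, hxΩ⟩, hmax⟩ := ((isCompact_closedBall x₀ R).inter_right
    isClosed_closure).exists_isMaxOn ⟨x₀, hx₀D⟩ fun x hx ↦ (contDiffAt_barrier (κ := κ) (M := M)
      (x₀ := x₀) hf.contDiffAt (hv x hx.2) c).continuousAt.continuousWithinAt
  have hle : f x₀ + c * v x₀ ≤ f x + c * v x + (κ * R) ^ 2 * M := by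
    have hquad : κ ^ 2 * M * ‖x - x₀‖ ^ 2 ≤ κ ^ 2 * M * R ^ 2 := by
      rw [← dist_eq_norm]
      gcongr
      exact hxR
    have : barrier f v κ M c x₀ x₀ ≤ barrier f v κ M c x₀ x := hmax hx₀D
    simp only [barrier, Pi.add_apply, Pi.smul_apply, smul_eq_mul, sub_self, norm_zero] at this
    linarith
  have hx : x ∈ Ω := by
    by_contra hx
    have hfx : f x = 0 := of_not_not fun h ↦ hx (hΩ.mem_of_mem_closure x hxΩ h)
    have := mul_le_mul_of_nonneg_left (hv0 x hxΩ).2 hc.le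
    have := mul_nonneg hc.le (hv0 x₀ hx₀D.2).1
    nlinarith
  refine ⟨x, (mem_closedBall.1 hxR).eq_of_not_lt fun hlt ↦ ?_, ?_⟩
  · refine not_isLocalMax_barrier (x₀ := x₀) hf.contDiffAt (hΔ x) (hv x hxΩ) (hvΔ x hx) hκ hM0
      (hM x hx) c ?_
    filter_upwards [(isOpen_ball.inter hΩ.isOpen).mem_nhds ⟨mem_ball.2 hlt, hx⟩] with u hu
    exact hmax ⟨ball_subset_closedBall hu.1, subset_closure hu.2⟩
  · refine le_of_mul_le_mul_left ?_ hc
    calc c * v x₀ ≤ c * v x + 4 * (κ * R) ^ 2 * (M / 2) := by linarith [hM x hx]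
      _ = c * (v x + 4 * (κ * R) ^ 2 * V) := by rw [← hcV]; ring

theorem IsPositiveDomain.shell_count_le {z : E} {ρ r : ℝ} {K : ℕ} {G : Finset ℕ} {y : ℕ → E}
    (hd : 3 ≤ finrank ℝ E) (hΩ : IsPositiveDomain f Ω) (hf : ContDiff ℝ 2 f)
    (hΔ : ∀ x, Δ f x = -κ ^ 2 * f x) (hκ : 0 < κ) (hM : ∀ x ∈ Ω, f x ≤ M) (hρ : 0 < ρ)
    (hκR : (κ * (9 * ρ)) ^ 2 < 1 / 4) (hx₀ : x₀ ∈ Ω) (hfx₀ : (1 - (κ * (9 * ρ)) ^ 2) * M ≤ f x₀)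
    (hx₀z : dist x₀ z ≤ ρ) (hK : 0 < K) (hG : IsShellFamily z ρ K G y) (hr : 0 < r)
    (hneg : ∀ k ∈ G, ∀ x ∈ closedBall (y k) r, f x < 0) :
    K / 4 * ((3 * ρ) ^ (finrank ℝ E - 2))⁻¹ ≤ 4 * (κ * (9 * ρ)) ^ 2 *
      (3 * (r ^ (finrank ℝ E - 2))⁻¹ + K * ((ρ / K) ^ (finrank ℝ E - 2))⁻¹) := by
  have : Nontrivial E := nontrivial_of_finrank_pos (R := ℝ) (by lia)
  have hcl (x : E) (hx : x ∈ closure Ω) : 0 ≤ f x :=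
    closure_minimal (fun x hx ↦ (hΩ.pos x hx).le) (isClosed_le continuous_const hf.continuous) hx
  have hfar (x : E) (hx : x ∈ closure Ω) (k : ℕ) (hk : k ∈ G) : r ≤ dist x (y k) := by
    by_contra! hlt
    exact (hneg k hk x hlt.le).not_ge (hcl x hx)
  have hne (x : E) (hx : x ∈ closure Ω) (k : ℕ) (hk : k ∈ G) : x ≠ y k :=
    dist_pos.1 (hr.trans_le (hfar x hx k hk))
  obtain ⟨x, hxR, hle⟩ := hΩ.exists_sphere_le_add hf hΔ hκ hM hκR (by positivity) hx₀ hfx₀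
    (V := 3 * (r ^ (finrank ℝ E - 2))⁻¹ + K * ((ρ / K) ^ (finrank ℝ E - 2))⁻¹) (by positivity)
    (fun x hx ↦ contDiffAt_sum_newtonPotential (hne x hx))
    (fun x hx ↦ laplacian_sum_newtonPotential (by lia) (hne x (subset_closure hx)))
    (fun x hx ↦ ⟨Finset.sum_nonneg fun k _ ↦ newtonPotential_nonneg _ _,
      hG.sum_newtonPotential_le hρ hK hr (hfar x hx)⟩)
  linarith [hG.le_sum_newtonPotential_sub hd hρ hx₀z (hne x₀ (subset_closure hx₀)) hxR]

theorem IsPositiveDomain.exists_ball_subset [MeasurableSpace E] [BorelSpace E] {ρ S Q : ℝ}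
    {q K : ℕ} (hd : 3 ≤ finrank ℝ E) (hΩ : IsPositiveDomain f Ω) (hf : ContDiff ℝ 2 f)
    (hΔ : ∀ x, Δ f x = -κ ^ 2 * f x) (hmv : HasMeanValueProperty κ f) (hκ : 0 < κ)
    (hfS : ∀ x, |f x| ≤ S) (hρ : 0 < ρ) (hκρ : κ * ρ ≤ 1 / 20) (hq : 0 < q) (hK : 0 < K)
    (hgrow : ∀ z δ, (∀ x ∈ closedBall z (ρ / 2), |f x| ≤ δ) → S ≤ Q * δ)
    (hQ : 2 ^ (finrank ℝ E + 2) * Q < 2 ^ (K * q))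
    (hW : 1296 * 3 ^ (finrank ℝ E - 2) * (κ * ρ) ^ 2 * (3 * (8 * finrank ℝ E * (K * q)) ^
      (finrank ℝ E - 2) + K * K ^ (finrank ℝ E - 2)) < (K : ℝ)) :
    ∃ x₀, ball x₀ ρ ⊆ Ω := by
  have : Nontrivial E := nontrivial_of_finrank_pos (R := ℝ) (by lia)
  have hκρ0 : 0 < κ * ρ := mul_pos hκ hρ
  have hκR : (κ * (9 * ρ)) ^ 2 < 1 / 4 := by nlinarith
  obtain ⟨M, hM, x₀, hx₀, hfx₀⟩ := hΩ.exists_near_max (fun x ↦ (le_abs_self _).trans (hfS x))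
    (ε := (κ * (9 * ρ)) ^ 2) (by positivity)
  refine ⟨x₀, hΩ.subset_of_isPreconnected (convex_ball x₀ ρ).isPreconnected ?_
    ⟨x₀, mem_ball_self hρ, hx₀⟩⟩
  intro z hz hfz
  obtain ⟨G, y, hG, hneg⟩ := (hmv.const_mul (-1)).exists_isShellFamily_pos (z := z) hκ.le
    (by simp [hfz]) (fun x ↦ by simpa using (neg_le_abs _).trans (hfS x))
    ((abs_pos.2 (hΩ.pos x₀ hx₀).ne').trans_le (hfS x₀)) hρ hκρ hq hK
    (by simpa [abs_mul] using hgrow z) hQ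
  have hcount := hΩ.shell_count_le hd hf hΔ hκ hM hρ hκR hx₀ hfx₀ (mem_ball'.1 hz).le hK hG
    (r := ρ / (K * q) / (8 * finrank ℝ E)) (by positivity) (by simpa using hneg)
  refine hW.not_ge ?_
  calc (K : ℝ) = K / 4 * ((3 * ρ) ^ (finrank ℝ E - 2))⁻¹ * (4 * (3 * ρ) ^ (finrank ℝ E - 2)) := by
        field_simp
    _ ≤ _ := mul_le_mul_of_nonneg_right hcount (by positivity)
    _ = _ := by
      simp only [div_pow, mul_pow]
      field_simp
      ring

end Barrier

section Parameters

/-- The constraints on the radius `ρ`, the degree parameter `N`, the number `q` of steps per shell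
and the number `K` of shells under which the barrier argument produces a ball of radius `ρ` in every
nodal domain of an eigenfunction with eigenvalue `κ²` on the `n`-dimensional torus. -/
structure IsAdmissible (n : ℕ) (κ ρ : ℝ) (N q K : ℕ) : Prop where
  degree_pos : 0 < N
  steps_pos : 0 < q
  shells_pos : 0 < K
  le_degree : κ ≤ N
  radius_pos : 0 < ρ
  radius_le_one : ρ ≤ 1
  mul_radius_le : κ * ρ ≤ 1 / 20
  growth_lt : (12 * n * (6 * n * N : ℕ) / ρ) ^ (6 * n * N) < 2 ^ (K * q)
  source_lt : 1296 * 3 ^ (n - 2) * (κ * ρ) ^ 2 *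
    (3 * (8 * n * (K * q)) ^ (n - 2) + K * K ^ (n - 2)) < (K : ℝ)

theorem eventually_pow_lt_two_pow {a p C : ℝ} (ha : 1 < a) (hp : 0 ≤ p) (hC : 0 ≤ C) :
    ∀ᶠ κ : ℝ in atTop, ∀ (m L : ℕ) (x : ℝ), 0 < x → x ≤ κ ^ p → m ≤ C * κ → κ ^ a ≤ L →
      x ^ m < 2 ^ L := by
  have : 0 < log 2 := log_pos one_lt_two
  have hc : 0 < log 2 / (C * p + 1) := by positivity
  filter_upwards [(isLittleO_log_rpow_atTop (sub_pos.2 ha)).bound hc, eventually_ge_atTop 1]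
    with κ hlog hκ m L x hx hxκ hm hL
  have hκ0 : 0 < κ := one_pos.trans_le hκ
  have hlogκ : log κ ≤ log 2 / (C * p + 1) * κ ^ (a - 1) := by
    simpa [abs_of_pos (rpow_pos_of_pos hκ0 (a - 1))] using (le_abs_self _).trans hlog
  have hlogx : log x ≤ p * log κ := (log_le_log hx hxκ).trans_eq (log_rpow hκ0 p)
  have hκa : κ * κ ^ (a - 1) = κ ^ a := by rw [mul_comm, ← rpow_add_one hκ0.ne', sub_add_cancel]
  rw [← log_lt_log_iff (by positivity) (by positivity), log_pow, log_pow]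
  calc m * log x ≤ m * (p * log κ) := by gcongr
    _ ≤ C * κ * (p * (log 2 / (C * p + 1) * κ ^ (a - 1))) := by
      have := log_nonneg hκ
      gcongr
    _ = log 2 * (C * p / (C * p + 1)) * κ ^ a := by rw [← hκa]; ring
    _ < log 2 * 1 * κ ^ a := by
      gcongr
      rw [div_lt_one (by positivity)]
      exact lt_add_one _
    _ ≤ L * log 2 := by rw [mul_one, mul_comm]; gcongr

theorem natCeil_le_two_mul {x : ℝ} (hx : 1 ≤ x) : (⌈x⌉₊ : ℝ) ≤ 2 * x := by
  linarith [Nat.ceil_lt_add_one (zero_le_one.trans hx)]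

theorem eventually_growth_lt {n : ℕ} (hn : 0 < n) {A s b : ℝ} (hA : 0 < A) (hs : 0 ≤ s)
    (hb : 1 < b * (n - 1)) :
    ∀ᶠ κ : ℝ in atTop, (12 * n * (6 * n * ⌈κ⌉₊ : ℕ) / (A * κ ^ (-(1 + s)))) ^ (6 * n * ⌈κ⌉₊) <
      (2 : ℝ) ^ (⌈κ ^ b⌉₊ ^ (n - 1)) := by
  filter_upwards [eventually_pow_lt_two_pow (p := 3 + s) (C := 12 * n) hb (by linarith)
    (by positivity), eventually_ge_atTop 1, eventually_ge_atTop (144 * n ^ 2 / A)] with κ hlt hκ hκA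
  have hκ0 : 0 < κ := one_pos.trans_le hκ
  have hm : ((6 * n * ⌈κ⌉₊ : ℕ) : ℝ) ≤ 12 * n * κ := by
    push_cast
    nlinarith [natCeil_le_two_mul hκ]
  have hceil : 0 < ⌈κ⌉₊ := Nat.ceil_pos.2 hκ0
  refine hlt _ _ _ (by positivity) ?_ hm ?_
  · rw [div_le_iff₀' hA] at hκA
    rw [div_le_iff₀ (by positivity), mul_left_comm, ← rpow_add hκ0]
    calc 12 * n * ((6 * n * ⌈κ⌉₊ : ℕ) : ℝ) ≤ 12 * n * (12 * n * κ) := by gcongr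
      _ = 144 * n ^ 2 * κ := by ring
      _ ≤ A * κ * κ := by gcongr
      _ = A * κ ^ (3 + s + -(1 + s)) := by ring_nf; norm_num
  · rw [rpow_mul hκ0.le, ← Nat.cast_pred hn, rpow_natCast, Nat.cast_pow]
    gcongr
    exact Nat.le_ceil _

theorem source_sum_eq (n e q : ℕ) :
    (3 * (8 * n * ((q ^ e : ℕ) * q)) ^ e + (q ^ e : ℕ) * (q ^ e : ℕ) ^ e : ℝ) =
      (3 * (8 * n) ^ e + 1) * q ^ e ^ 2 * q ^ e := by
  push_cast
  rw [mul_pow, mul_pow, ← pow_mul, sq]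
  ring

theorem eventually_source_lt (n e : ℕ) {A s b : ℝ} (hb : 0 ≤ b) (hs : b * e ^ 2 < 2 * s) :
    ∀ᶠ κ : ℝ in atTop, 1296 * 3 ^ e * (κ * (A * κ ^ (-(1 + s)))) ^ 2 *
      (3 * (8 * n * ((⌈κ ^ b⌉₊ ^ e : ℕ) * ⌈κ ^ b⌉₊)) ^ e +
        (⌈κ ^ b⌉₊ ^ e : ℕ) * (⌈κ ^ b⌉₊ ^ e : ℕ) ^ e) < ((⌈κ ^ b⌉₊ ^ e : ℕ) : ℝ) := by
  set C : ℝ := 1296 * 3 ^ e * A ^ 2 * ((3 * (8 * n) ^ e + 1) * 2 ^ e ^ 2)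
  have hlim : Tendsto (fun κ : ℝ ↦ C * κ ^ (-(2 * s - b * e ^ 2))) atTop (nhds 0) := by
    simpa using (tendsto_rpow_neg_atTop (sub_pos.2 hs)).const_mul C
  filter_upwards [hlim.eventually_lt_const one_pos, eventually_ge_atTop 1] with κ hlt hκ
  have hκ0 : 0 < κ := one_pos.trans_le hκ
  have hceil : (⌈κ ^ b⌉₊ : ℝ) ≤ 2 * κ ^ b := natCeil_le_two_mul (one_le_rpow hκ hb)
  have : (0 : ℝ) < ⌈κ ^ b⌉₊ := Nat.cast_pos.2 (Nat.ceil_pos.2 (rpow_pos_of_pos hκ0 b))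
  have hκρ : (κ * (A * κ ^ (-(1 + s)))) ^ 2 = A ^ 2 * κ ^ (-(2 * s)) := by
    rw [mul_left_comm, mul_comm κ, ← rpow_add_one hκ0.ne', mul_pow, ← rpow_mul_natCast hκ0.le]
    congr 2
    push_cast
    ring
  have hpow : (κ ^ b) ^ e ^ 2 * κ ^ (-(2 * s)) = κ ^ (-(2 * s - b * e ^ 2)) := by
    rw [← rpow_mul_natCast hκ0.le, ← rpow_add hκ0]
    congr 1
    push_cast
    ring
  rw [source_sum_eq, hκρ, Nat.cast_pow]
  calc 1296 * 3 ^ e * (A ^ 2 * κ ^ (-(2 * s))) *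
        ((3 * (8 * n) ^ e + 1) * ⌈κ ^ b⌉₊ ^ e ^ 2 * ⌈κ ^ b⌉₊ ^ e)
      ≤ 1296 * 3 ^ e * (A ^ 2 * κ ^ (-(2 * s))) *
        ((3 * (8 * n) ^ e + 1) * (2 * κ ^ b) ^ e ^ 2 * ⌈κ ^ b⌉₊ ^ e) := by gcongr
    _ = C * κ ^ (-(2 * s - b * e ^ 2)) * ⌈κ ^ b⌉₊ ^ e := by rw [← hpow]; ring
    _ < 1 * ⌈κ ^ b⌉₊ ^ e := by gcongr
    _ = ⌈κ ^ b⌉₊ ^ e := one_mul _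

theorem eventually_exists_isAdmissible {n : ℕ} (hn : 3 ≤ n) {A s : ℝ} (hA : 0 < A)
    (hs : ((n : ℝ) - 2) ^ 2 / (2 * (n - 1)) < s) :
    ∀ᶠ κ : ℝ in atTop, ∃ N q K, IsAdmissible n κ (A * κ ^ (-(1 + s))) N q K := by
  have hn3 : (3 : ℝ) ≤ n := mod_cast hn
  have hn1 : (0 : ℝ) < n - 1 := by linarith
  have hn2 : (0 : ℝ) < ((n : ℝ) - 2) ^ 2 := pow_pos (by linarith) 2
  have hs0 : 0 < s := lt_of_le_of_lt (by positivity) hs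
  have hn2' : ((n - 2 : ℕ) : ℝ) = n - 2 := by push_cast [Nat.cast_sub (by lia : 2 ≤ n)]; ring
  obtain ⟨b, hb₁, hb₂⟩ : ∃ b, 1 / ((n : ℝ) - 1) < b ∧ b < 2 * s / ((n : ℝ) - 2) ^ 2 := by
    refine exists_between ?_
    rw [div_lt_iff₀ (by positivity)] at hs
    rw [div_lt_div_iff₀ hn1 hn2]
    linarith
  have hb0 : 0 < b := lt_trans (by positivity) hb₁
  rw [div_lt_iff₀ hn1] at hb₁
  rw [lt_div_iff₀ hn2, ← hn2'] at hb₂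
  have hρ : Tendsto (fun κ : ℝ ↦ A * κ ^ (-(1 + s))) atTop (nhds 0) := by
    simpa using (tendsto_rpow_neg_atTop (by linarith : 0 < 1 + s)).const_mul A
  have hκρ : Tendsto (fun κ : ℝ ↦ A * κ ^ (-s)) atTop (nhds 0) := by
    simpa using (tendsto_rpow_neg_atTop hs0).const_mul A
  filter_upwards [eventually_growth_lt (by lia) hA hs0.le hb₁, eventually_source_lt n (n - 2)
    (A := A) hb0.le hb₂, hρ.eventually_le_const one_pos, hκρ.eventually_le_const
    (show (0 : ℝ) < 1 / 20 by norm_num), eventually_gt_atTop 0] with κ hgrowth hsource hρ hκρ hκ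
  have hq : 0 < ⌈κ ^ b⌉₊ := Nat.ceil_pos.2 (by positivity)
  refine ⟨⌈κ⌉₊, ⌈κ ^ b⌉₊, ⌈κ ^ b⌉₊ ^ (n - 2), Nat.ceil_pos.2 hκ, hq, pow_pos hq _, Nat.le_ceil κ,
    by positivity, hρ, ?_, ?_, hsource⟩
  · rwa [mul_left_comm, mul_comm κ, ← rpow_add_one hκ.ne', neg_add_rev, neg_add_cancel_right]
  · rwa [← pow_succ, show n - 2 + 1 = n - 1 by lia]

end Parameters

section Torus

open scoped Laplacian

variable {n : ℕ} {ψ : EuclideanSpace ℝ (Fin n) → ℝ} {κ ρ : ℝ} {N q K : ℕ}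

theorem IsAdmissible.le_mul_of_small_on_closedBall {z : EuclideanSpace ℝ (Fin n)} {S δ : ℝ}
    (h : IsAdmissible n κ ρ N q K) (hn : 0 < n) (hκ : 0 ≤ κ)
    (hwave : IsWaveSum κ (S * (2 * κ + 1) ^ n) ψ) (hper : ZnPeriodic n ψ)
    (hS : ∃ p, |ψ p| = S) (hδ : ∀ x ∈ closedBall z (ρ / 2), |ψ x| ≤ δ) :
    S ≤ (6 * n * (6 * n * N : ℕ) / ρ) ^ (6 * n * N) * δ := by
  obtain ⟨x, hx⟩ := hS
  obtain ⟨p, hpx, hpz⟩ := (hper.comp abs).exists_dist_le z x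
  have hρ := h.radius_pos
  have hρ' := h.radius_le_one
  convert hwave.le_mul_of_small_on_closedBall hn h.degree_pos hκ h.le_degree (half_pos hρ)
    (by linarith) hδ hpz (hpx.trans hx) using 3
  field_simp
  ring

theorem IsAdmissible.two_pow_mul_lt (h : IsAdmissible n κ ρ N q K) (hn : 0 < n) :
    2 ^ (n + 2) * (6 * n * (6 * n * N : ℕ) / ρ) ^ (6 * n * N) < (2 : ℝ) ^ (K * q) := by
  have hρ := h.radius_pos
  have hN := h.degree_pos
  calc 2 ^ (n + 2) * (6 * n * (6 * n * N : ℕ) / ρ) ^ (6 * n * N)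
      ≤ 2 ^ (6 * n * N) * (6 * n * (6 * n * N : ℕ) / ρ) ^ (6 * n * N) := by
        gcongr
        · exact one_le_two
        · nlinarith
    _ = (12 * n * (6 * n * N : ℕ) / ρ) ^ (6 * n * N) := by rw [← mul_pow]; ring
    _ < 2 ^ (K * q) := h.growth_lt

theorem IsAdmissible.exists_ball_subset {Ω : Set (EuclideanSpace ℝ (Fin n))}
    (h : IsAdmissible n κ ρ N q K) (hn : 3 ≤ n) (hκ : 0 < κ) (hψ : ContDiff ℝ 2 ψ)
    (hper : ZnPeriodic n ψ) (hΔ : ∀ x, Δ ψ x = -κ ^ 2 * ψ x) (hΩ : IsPositiveDomain ψ Ω) :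
    ∃ c, ball c ρ ⊆ Ω := by
  obtain ⟨p, hp⟩ := (hper.comp abs).exists_forall_le hψ.continuous.abs
  have hwave := isWaveSum_of_lap_eq hψ hper hκ.le
    (fun x ↦ (lap_eq_laplacian hψ x).trans (hΔ x)) hp
  have hfin : Module.finrank ℝ (EuclideanSpace ℝ (Fin n)) = n := finrank_euclideanSpace_fin
  exact hΩ.exists_ball_subset (by rwa [hfin]) hψ hΔ hwave.hasMeanValueProperty hκ hp h.radius_pos
    h.mul_radius_le h.steps_pos h.shells_pos
    (fun z δ hδ ↦ h.le_mul_of_small_on_closedBall (by lia) hκ.le hwave hper ⟨p, rfl⟩ hδ)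
    (by rw [hfin]; exact h.two_pow_mul_lt (by lia)) (by rw [hfin]; exact h.source_lt)

theorem IsAdmissible.le_innerRadius {Ω : Set (EuclideanSpace ℝ (Fin n))}
    (h : IsAdmissible n κ ρ N q K) (hn : 3 ≤ n) (hκ : 0 < κ) (hψ : ContDiff ℝ 2 ψ)
    (hper : ZnPeriodic n ψ) (hΔ : ∀ x, Δ ψ x = -κ ^ 2 * ψ x) (hΩ : IsNodalDomain ψ Ω) :
    ρ ≤ innerRadius Ω := by
  obtain ⟨σ, -, hσΩ⟩ := hΩ.exists_isPositiveDomain hψ.continuous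
  have hσψ : ContDiff ℝ 2 fun x ↦ σ * ψ x := contDiff_const.mul hψ
  have hσper : ZnPeriodic n fun x ↦ σ * ψ x := hper.comp (σ * ·)
  have hσΔ (x) : Δ (fun x ↦ σ * ψ x) x = -κ ^ 2 * (σ * ψ x) := by
    have hsmul : Δ (fun x ↦ σ * ψ x) x = σ * Δ ψ x :=
      InnerProductSpace.laplacian_smul σ hψ.contDiffAt
    rw [hsmul, hΔ, mul_left_comm]
  refine le_csSup ⟨n, ?_⟩ ⟨h.radius_pos, h.exists_ball_subset hn hκ hσψ hσper hσΔ hσΩ⟩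
  rintro r ⟨-, c, hc⟩
  refine hσper.radius_le_of_pos hσψ (fun x hx ↦ ?_) fun x hx ↦ hσΩ.pos x (hc hx)
  rw [hσΔ]
  exact mul_neg_of_neg_of_pos (neg_neg_of_pos (by positivity)) hx

theorem IsAdmissible.le_sInf_innerRadius (h : IsAdmissible n κ ρ N q K) (hn : 3 ≤ n) (hκ : 0 < κ)
    (hψ : ContDiff ℝ 2 ψ) (hper : ZnPeriodic n ψ) (hΔ : ∀ x, Δ ψ x = -κ ^ 2 * ψ x)
    (hne : ∃ x, ψ x ≠ 0) : ρ ≤ sInf (innerRadius '' {Ω | IsNodalDomain ψ Ω}) := by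
  obtain ⟨x, hx⟩ := hne
  refine le_csInf ⟨_, _, ⟨x, hx, rfl⟩, rfl⟩ ?_
  rintro _ ⟨Ω, hΩ, rfl⟩
  exact h.le_innerRadius hn hκ hψ hper hΔ hΩ

theorem exists_ne_zero_of_setIntegral_fundDom_sq (h : ∫ x in fundDom n, ψ x ^ 2 = 1) :
    ∃ x, ψ x ≠ 0 := by
  by_contra! h0
  simp [h0] at h

theorem half_add_sq_div_lt {x : ℝ} (hx : 2 < x) :
    1 / 2 + (x - 2) ^ 2 / (4 * (x - 1)) < 1 / 2 + (x - 1) * (x - 2) / (4 * x) := by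
  gcongr 1 / 2 + ?_
  rw [div_lt_div_iff₀ (by linarith) (by linarith)]
  nlinarith

theorem eventually_le_sInf_innerRadius (hn : 3 ≤ n) {β A : ℝ}
    (hβ : 1 / 2 + ((n : ℝ) - 2) ^ 2 / (4 * (n - 1)) < β) (hA : 0 < A) :
    ∀ᶠ μ : ℝ in atTop, ∀ ψ : EuclideanSpace ℝ (Fin n) → ℝ, ContDiff ℝ 2 ψ → ZnPeriodic n ψ →
      (∀ x, lap n ψ x = -μ * ψ x) → (∃ x, ψ x ≠ 0) →
        A * μ ^ (-β) ≤ sInf (innerRadius '' {Ω | IsNodalDomain ψ Ω}) := by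
  have hs : ((n : ℝ) - 2) ^ 2 / (2 * (n - 1)) < 2 * β - 1 := by
    have hn1 : (0 : ℝ) < n - 1 := sub_pos.2 (mod_cast (by lia : 1 < n))
    rw [← lt_sub_iff_add_lt', div_lt_iff₀ (by positivity)] at hβ
    rw [div_lt_iff₀ (by positivity)]
    linarith
  filter_upwards [tendsto_sqrt_atTop.eventually (eventually_exists_isAdmissible hn hA hs),
    eventually_gt_atTop 0] with μ ⟨N, q, K, h⟩ hμ ψ hψ hper heig hne
  have hexp : √μ ^ (-(1 + (2 * β - 1))) = μ ^ (-β) := by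
    rw [sqrt_eq_rpow, ← rpow_mul hμ.le]
    ring_nf
  rw [hexp] at h
  refine h.le_sInf_innerRadius hn (sqrt_pos.2 hμ) hψ hper (fun x ↦ ?_) hne
  rw [sq_sqrt hμ.le, ← lap_eq_laplacian hψ, heig]

end Torus

theorem qe_inner_radius_superpolynomial_general {ι : Type*} {l : Filter ι} (n : ℕ) (hn : 3 ≤ n)
    (ψ : ι → EuclideanSpace ℝ (Fin n) → ℝ) (lam : ι → ℝ) (hψ : ∀ j, ContDiff ℝ 2 (ψ j))
    (hper : ∀ j, ZnPeriodic n (ψ j)) (heig : ∀ j x, lap n (ψ j) x = -(lam j) * ψ j x)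
    (hne : ∀ j, ∃ x, ψ j x ≠ 0) (hlam : Tendsto lam l atTop) (β : ℝ)
    (hβ : 1 / 2 + ((n : ℝ) - 2) ^ 2 / (4 * (n - 1)) < β) :
    Tendsto (fun j ↦ lam j ^ β * sInf (innerRadius '' {Ω | IsNodalDomain (ψ j) Ω})) l atTop := by
  refine tendsto_atTop.2 fun B ↦ ?_
  have hA : 0 < max B 1 := lt_max_of_lt_right one_pos
  filter_upwards [hlam.eventually (eventually_le_sInf_innerRadius hn hβ hA),
    hlam.eventually_gt_atTop 0] with j hj hlamj
  have hρ := hj (ψ j) (hψ j) (hper j) (heig j) (hne j)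
  calc B ≤ max B 1 := le_max_left B 1
    _ = lam j ^ β * (max B 1 * lam j ^ (-β)) := by
      rw [mul_left_comm, ← rpow_add hlamj, add_neg_cancel, rpow_zero, mul_one]
    _ ≤ lam j ^ β * sInf (innerRadius '' {Ω | IsNodalDomain (ψ j) Ω}) := by gcongr

theorem qe_inner_radius_superpolynomial
    (n : ℕ) (hn : 3 ≤ n)
    (ψ : ℕ → EuclideanSpace ℝ (Fin n) → ℝ) (lam : ℕ → ℝ)
    (hsmooth : ∀ j, ContDiff ℝ (⊤ : ℕ∞) (ψ j)) (hper : ∀ j, ZnPeriodic n (ψ j))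
    (heig : ∀ j x, lap n (ψ j) x = -(lam j) * ψ j x)
    (hnorm : ∀ j, (∫ x in fundDom n, (ψ j x)^2) = 1)
    (hlam : Tendsto lam atTop atTop)
    (R₀ : ℝ) (hR₀ : 0 < R₀)
    (hequi : ∀ r : ℝ, 0 < r → r < R₀ → ∀ x : EuclideanSpace ℝ (Fin n),
      Tendsto (fun j => ∫ y in Metric.ball x r, (ψ j y)^2) atTop
        (nhds (volume (Metric.ball x r)).toReal)) :
    Tendsto (fun j =>
        lam j ^ ((1:ℝ)/2 + ((n:ℝ)-1)*((n:ℝ)-2)/(4*(n:ℝ))) *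
          sInf (innerRadius '' {Ω | IsNodalDomain (ψ j) Ω}))
      atTop atTop := by
  have hn2 : (2 : ℝ) < n := mod_cast hn
  exact qe_inner_radius_superpolynomial_general n hn ψ lam (fun j ↦ contDiff_infty.1 (hsmooth j) 2)
    hper heig (fun j ↦ exists_ne_zero_of_setIntegral_fundDom_sq (hnorm j)) hlam _
    (half_add_sq_div_lt hn2)
end
end

section
/- There exists a constant a₁ > 0 such that for every smooth ℤ²-periodic real-valued eigenfunction ψ : ℝ² → ℝ of the Euclidean Laplacian with eigenvalue λ ≥ 1, every nodal domain Ω of ψ satisfies in(Ω) ≥ a₁ λ^{-1/2}. -/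
open MeasureTheory Metric Filter Real

noncomputable section

/-! Let `φ` be `ψ ^ 4` cut off to the nodal domain `Ω`, and let `φ x₀` be at least half the supremum
of `φ`. Write `B t` for the integral of `φ` over angles on the circle of radius `exp t` about `x₀`.
Then `B'' + 4 λ exp (2 t) B` is the angular integral of `exp (2 t) (Δφ + 4 λ φ) ≥ 0`. If `φ` has
a zero on the circle, a one-dimensional Poincaré inequality along it makes this quantity at least
a fixed multiple of `B`. Since `B t → 2 π φ x₀` as `t → -∞` and `B ≤ 4 π φ x₀`, such convex growth
cannot persist over a long interval of `t`. Hence some circle of radius comparable to `λ ^ (-1/2)`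
lies in `Ω`. The circle is small enough for the maximum principle on the disc it bounds, so the disc
lies in `Ω` as well. -/

open InnerProductSpace Laplacian Module Topology Set

section SecondOrderCalculus

variable {E F : Type*} [NormedAddCommGroup E] [NormedSpace ℝ E] [NormedAddCommGroup F]
  [NormedSpace ℝ F]

lemma differentiable_fderiv_of_contDiff {f : E → F} (hf : ContDiff ℝ 2 f) :
    Differentiable ℝ (fderiv ℝ f) :=
  (hf.fderiv_right (m := 1) le_rfl).differentiable one_ne_zero

lemma hasDerivAt_fderiv_apply_comp {f : E → F} {γ v : ℝ → E} {γ' v' : E} {s : ℝ}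
    (hf : ContDiff ℝ 2 f) (hγ : HasDerivAt γ γ' s) (hv : HasDerivAt v v' s) :
    HasDerivAt (fun s => fderiv ℝ f (γ s) (v s))
      (fderiv ℝ (fderiv ℝ f) (γ s) γ' (v s) + fderiv ℝ f (γ s) v') s :=
  ((differentiable_fderiv_of_contDiff hf _).hasFDerivAt.comp_hasDerivAt s hγ).clm_apply hv

lemma hasFDerivAt_fderiv_pow {f : E → ℝ} (hf : ContDiff ℝ 2 f) (k : ℕ)
    (x : E) :
    HasFDerivAt (fderiv ℝ fun y => f y ^ (k + 2))
      (((k + 2) * f x ^ (k + 1)) • fderiv ℝ (fderiv ℝ f) x +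
        ((k + 2) * (k + 1) * f x ^ k) • (fderiv ℝ f x).smulRight (fderiv ℝ f x)) x := by
  have hf1 : Differentiable ℝ f := hf.differentiable two_ne_zero
  have hpow : fderiv ℝ (fun y => f y ^ (k + 2)) =
      fun y => ((k + 2) * f y ^ (k + 1)) • fderiv ℝ f y := by
    ext1 y
    simpa using fderiv_fun_pow (k + 2) (hf1 y)
  rw [hpow]
  refine ((((hf1 x).hasFDerivAt.pow (k + 1)).const_mul (k + 2 : ℝ)).smul
    (differentiable_fderiv_of_contDiff hf x).hasFDerivAt).congr_fderiv ?_
  ext v w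
  simp
  ring

lemma deriv_deriv_nonneg_of_isLocalMin {g : ℝ → ℝ} {a : ℝ} (hg : ContinuousAt g a)
    (hmin : IsLocalMin g a) : 0 ≤ deriv (deriv g) a := by
  by_contra! hneg
  have hmax := isLocalMax_of_deriv_deriv_neg hneg hmin.deriv_eq_zero hg
  have hconst : g =ᶠ[𝓝 a] fun _ => g a := by
    filter_upwards [hmin, hmax] with y h₁ h₂ using le_antisymm h₂ h₁
  rw [hconst.deriv.deriv_eq] at hneg
  simp at hneg

lemma fderiv_fderiv_nonneg_of_isLocalMin {f : E → ℝ} {x : E} (hf : ContDiff ℝ 2 f)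
    (hmin : IsLocalMin f x) (v : E) :
    0 ≤ fderiv ℝ (fderiv ℝ f) x v v := by
  have hline (s : ℝ) : HasDerivAt (fun s : ℝ => x + s • v) v s := by
    simpa using ((hasDerivAt_id s).smul_const v).const_add x
  have hderiv : deriv (fun s : ℝ => f (x + s • v)) = fun s => fderiv ℝ f (x + s • v) v :=
    funext fun s => ((hf.differentiable two_ne_zero _).hasFDerivAt.comp_hasDerivAt s
      (hline s)).deriv
  have hderiv2 : deriv (fun s : ℝ => fderiv ℝ f (x + s • v) v) 0 = fderiv ℝ (fderiv ℝ f) x v v := by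
    simpa using (hasDerivAt_fderiv_apply_comp hf (hline 0) (hasDerivAt_const 0 v)).deriv
  rw [← hderiv2, ← hderiv]
  refine deriv_deriv_nonneg_of_isLocalMin (by have := hf.continuous; fun_prop) ?_
  have hmin₀ : IsLocalMin f (x + (0 : ℝ) • v) := by simpa using hmin
  exact (hline 0).continuousAt.eventually hmin₀

end SecondOrderCalculus

section Indicator

variable {E F : Type*} [NormedAddCommGroup E] [NormedSpace ℝ E] [NormedAddCommGroup F]
  [NormedSpace ℝ F] {f : E → F} {s : Set E}

lemma hasFDerivAt_indicator {f' : E →L[ℝ] F} {x : E} (hf : HasFDerivAt f f' x)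
    (h₀ : x ∈ frontier s → f x = 0) (h₁ : x ∈ frontier s → f' = 0) :
    HasFDerivAt (s.indicator f) (s.indicator (fun _ => f') x) x := by
  by_cases hx : x ∈ frontier s
  · have hsf : s.indicator f x = 0 := by simp [h₀ hx]
    rw [hasFDerivAt_iff_isLittleO, hsf]
    rw [hasFDerivAt_iff_isLittleO, h₀ hx] at hf
    simp only [h₁ hx, zero_apply, sub_zero, indicator_zero] at hf ⊢
    exact (Asymptotics.isBigO_of_le _ fun y => norm_indicator_le_norm_self f y).trans_isLittleO hf
  · rcases compl_frontier_eq_union_interior (s := s) ▸ (mem_compl hx) with hx | hx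
    · rw [indicator_of_mem (interior_subset hx)]
      refine hf.congr_of_eventuallyEq ?_
      filter_upwards [mem_interior_iff_mem_nhds.1 hx] with y hy using indicator_of_mem hy f
    · rw [indicator_of_notMem (interior_subset hx)]
      refine (hasFDerivAt_const 0 x).congr_of_eventuallyEq ?_
      filter_upwards [mem_interior_iff_mem_nhds.1 hx] with y hy using indicator_of_notMem hy f

lemma fderiv_indicator (hf : Differentiable ℝ f) (h₀ : ∀ x ∈ frontier s, f x = 0)
    (h₁ : ∀ x ∈ frontier s, fderiv ℝ f x = 0) :
    fderiv ℝ (s.indicator f) = s.indicator (fderiv ℝ f) :=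
  funext fun x => (hasFDerivAt_indicator (hf x).hasFDerivAt (h₀ x) (h₁ x)).fderiv

lemma contDiff_one_indicator (hf : ContDiff ℝ 1 f) (h₀ : ∀ x ∈ frontier s, f x = 0)
    (h₁ : ∀ x ∈ frontier s, fderiv ℝ f x = 0) : ContDiff ℝ 1 (s.indicator f) := by
  have hdiff := hf.differentiable one_ne_zero
  rw [contDiff_one_iff_fderiv, fderiv_indicator hdiff h₀ h₁]
  exact ⟨fun x => (hasFDerivAt_indicator (hdiff x).hasFDerivAt (h₀ x) (h₁ x)).differentiableAt,
    (hf.continuous_fderiv one_ne_zero).indicator h₁⟩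

lemma contDiff_two_indicator (hf : ContDiff ℝ 2 f) (h₀ : ∀ x ∈ frontier s, f x = 0)
    (h₁ : ∀ x ∈ frontier s, fderiv ℝ f x = 0)
    (h₂ : ∀ x ∈ frontier s, fderiv ℝ (fderiv ℝ f) x = 0) : ContDiff ℝ 2 (s.indicator f) := by
  have hdiff := hf.differentiable two_ne_zero
  refine (contDiff_succ_iff_fderiv (n := 1)).2 ⟨fun x =>
    (hasFDerivAt_indicator (hdiff x).hasFDerivAt (h₀ x) (h₁ x)).differentiableAt, by simp, ?_⟩
  rw [fderiv_indicator hdiff h₀ h₁]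
  exact contDiff_one_indicator (hf.fderiv_right le_rfl) h₁ h₂

end Indicator

section Laplacian

variable {E F : Type*} [NormedAddCommGroup E] [InnerProductSpace ℝ E] [FiniteDimensional ℝ E]
  [NormedAddCommGroup F] [NormedSpace ℝ F] {ι : Type*} [Fintype ι]

lemma laplacian_eq_sum_fderiv_fderiv (b : OrthonormalBasis ι ℝ E) (f : E → F) (x : E) :
    Δ f x = ∑ i, fderiv ℝ (fderiv ℝ f) x (b i) (b i) := by
  simp only [laplacian_eq_iteratedFDeriv_orthonormalBasis f b, iteratedFDeriv_two_apply,
    Matrix.cons_val_zero, Matrix.cons_val_one]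

lemma laplacian_eq_sum_of_hasFDerivAt_fderiv (b : OrthonormalBasis ι ℝ E) {f : E → F} {x : E}
    {f'' : E →L[ℝ] E →L[ℝ] F} (h : HasFDerivAt (fderiv ℝ f) f'' x) :
    Δ f x = ∑ i, f'' (b i) (b i) := by
  rw [laplacian_eq_sum_fderiv_fderiv b, h.fderiv]

lemma continuous_laplacian {f : E → F} (hf : ContDiff ℝ 2 f) : Continuous (Δ f) := by
  have := (hf.fderiv_right (m := 1) le_rfl).continuous_fderiv one_ne_zero
  rw [funext (laplacian_eq_sum_fderiv_fderiv (stdOrthonormalBasis ℝ E) f)]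
  fun_prop

lemma laplacian_sub_const (f : E → F) (a : F) : Δ (fun y => f y - a) = Δ f := by
  ext1 x
  have hfderiv : fderiv ℝ (fun y => f y - a) = fderiv ℝ f := funext fun y => fderiv_sub_const a
  simp only [laplacian_eq_sum_fderiv_fderiv (stdOrthonormalBasis ℝ E), hfderiv]

lemma laplacian_indicator {f : E → F} {s : Set E} (hf : ContDiff ℝ 2 f)
    (h₀ : ∀ x ∈ frontier s, f x = 0) (h₁ : ∀ x ∈ frontier s, fderiv ℝ f x = 0)
    (h₂ : ∀ x ∈ frontier s, fderiv ℝ (fderiv ℝ f) x = 0) :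
    Δ (s.indicator f) = s.indicator (Δ f) := by
  ext1 x
  simp only [laplacian_eq_sum_fderiv_fderiv (stdOrthonormalBasis ℝ E),
    fderiv_indicator (hf.differentiable two_ne_zero) h₀ h₁,
    fderiv_indicator (differentiable_fderiv_of_contDiff hf) h₁ h₂]
  by_cases hx : x ∈ s <;> simp [hx, laplacian_eq_sum_fderiv_fderiv (stdOrthonormalBasis ℝ E)]

lemma laplacian_smul_eq_neg_mul {u : E → ℝ} {lam : ℝ} (hu : ContDiff ℝ 2 u)
    (hΔ : ∀ x, Δ u x = -lam * u x) (a : ℝ) (x : E) : Δ (a • u) x = -lam * (a • u) x := by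
  rw [laplacian_smul a hu.contDiffAt, hΔ, Pi.smul_apply, smul_eq_mul, smul_eq_mul, mul_left_comm]

variable {n : ℕ} {ψ : EuclideanSpace ℝ (Fin n) → ℝ} {Ω : Set (EuclideanSpace ℝ (Fin n))}

lemma laplacian_pow {f : E → ℝ} (hf : ContDiff ℝ 2 f) (k : ℕ) (x : E) :
    Δ (fun y => f y ^ (k + 2)) x =
      (k + 2) * f x ^ (k + 1) * Δ f x + (k + 2) * (k + 1) * f x ^ k * ‖fderiv ℝ f x‖ ^ 2 := by
  let b := stdOrthonormalBasis ℝ E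
  rw [laplacian_eq_sum_of_hasFDerivAt_fderiv b (hasFDerivAt_fderiv_pow hf k x),
    laplacian_eq_sum_fderiv_fderiv b, b.norm_dual, Finset.mul_sum, Finset.mul_sum,
    ← Finset.sum_add_distrib]
  exact Finset.sum_congr rfl fun i _ => by simp [sq]

lemma laplacian_nonneg_of_isLocalMin {f : E → ℝ} {x : E} (hf : ContDiff ℝ 2 f)
    (hmin : IsLocalMin f x) : 0 ≤ Δ f x := by
  rw [laplacian_eq_sum_fderiv_fderiv (stdOrthonormalBasis ℝ E)]
  exact Finset.sum_nonneg fun i _ => fderiv_fderiv_nonneg_of_isLocalMin hf hmin _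

end Laplacian

section TouchingFunctions

variable {E : Type*} [NormedAddCommGroup E] [InnerProductSpace ℝ E]

lemma hasFDerivAt_sub_mul_norm_sub_sq (a b : ℝ) (c x : E) :
    HasFDerivAt (fun y => a - b * ‖y - c‖ ^ 2) ((-2 * b) • innerSL ℝ (x - c)) x := by
  refine ((((hasFDerivAt_id x).sub_const c).norm_sq).const_mul b |>.const_sub a).congr_fderiv ?_
  ext v
  simp
  ring

lemma contDiff_sub_mul_norm_sub_sq (a b : ℝ) (c : E) :
    ContDiff ℝ 2 fun y => a - b * ‖y - c‖ ^ 2 :=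
  contDiff_const.sub (contDiff_const.mul ((contDiff_id.sub contDiff_const).norm_sq ℝ))

lemma norm_fderiv_sub_mul_norm_sub_sq (a b : ℝ) (c x : E) :
    ‖fderiv ℝ (fun y => a - b * ‖y - c‖ ^ 2) x‖ ^ 2 = 4 * b ^ 2 * ‖x - c‖ ^ 2 := by
  rw [(hasFDerivAt_sub_mul_norm_sub_sq a b c x).fderiv, norm_smul, innerSL_apply_norm, mul_pow,
    norm_eq_abs, sq_abs]
  ring

variable [FiniteDimensional ℝ E]

lemma laplacian_sub_mul_norm_sub_sq (a b : ℝ) (c x : E) :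
    Δ (fun y => a - b * ‖y - c‖ ^ 2) x = -2 * b * finrank ℝ E := by
  have hfderiv : fderiv ℝ (fun y : E => a - b * ‖y - c‖ ^ 2) =
      fun y => (-2 * b) • innerSL ℝ (y - c) :=
    funext fun y => (hasFDerivAt_sub_mul_norm_sub_sq a b c y).fderiv
  have hhess := ((innerSL ℝ (E := E)).hasFDerivAt.comp x
    ((hasFDerivAt_id x).sub_const c)).const_smul (-2 * b)
  let e := stdOrthonormalBasis ℝ E
  rw [laplacian_eq_sum_of_hasFDerivAt_fderiv e (f'' := (-2 * b) • innerSL ℝ)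
    (by rw [hfderiv]; exact hhess)]
  change ∑ i, -2 * b * inner ℝ (e i) (e i) = _
  simp [mul_comm]

lemma laplacian_sub_mul_norm_sub_sq_sq (a b : ℝ) (c x : E) :
    Δ (fun y => ((a - b * ‖y - c‖ ^ 2) ^ 2 : ℝ)) x =
      8 * b ^ 2 * ‖x - c‖ ^ 2 - 4 * b * finrank ℝ E * (a - b * ‖x - c‖ ^ 2) := by
  refine (laplacian_pow (contDiff_sub_mul_norm_sub_sq a b c) 0 x).trans ?_
  rw [laplacian_sub_mul_norm_sub_sq, norm_fderiv_sub_mul_norm_sub_sq]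
  push_cast
  ring

lemma exists_touching_of_isCompact {X : Type*} [TopologicalSpace X] {K : Set X} (hK : IsCompact K)
    (hne : K.Nonempty) {f g : X → ℝ} (hf : ContinuousOn f K) (hg : ContinuousOn g K)
    (hpos : ∀ x ∈ K, 0 < g x) :
    ∃ p ∈ K, ∃ s, f p = s * g p ∧ ∀ x ∈ K, s * g x ≤ f x := by
  obtain ⟨p, hp, hmin⟩ := hK.exists_isMinOn hne (hf.div hg fun x hx => (hpos x hx).ne')
  refine ⟨p, hp, f p / g p, (div_mul_cancel₀ _ (hpos p hp).ne').symm, fun x hx => ?_⟩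
  exact (le_div_iff₀ (hpos x hx)).1 (hmin hx)

lemma mul_laplacian_le_of_touching {f g : E → ℝ} {x : E} {s : ℝ} {U : Set E} (hU : U ∈ 𝓝 x)
    (hf : ContDiff ℝ 2 f) (hg : ContDiff ℝ 2 g) (hx : f x = s * g x)
    (hle : ∀ y ∈ U, s * g y ≤ f y) : s * Δ g x ≤ Δ f x := by
  have hmin : IsLocalMin (f - s • g) x := by
    filter_upwards [hU] with y hy
    simpa [hx] using hle y hy
  have := laplacian_nonneg_of_isLocalMin (f := f - s • g) (hf.sub (hg.const_smul s)) hmin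
  rw [hf.contDiffAt.laplacian_sub (f₂ := s • g) (hg.const_smul s).contDiffAt,
    laplacian_smul s hg.contDiffAt, smul_eq_mul] at this
  linarith

variable {u : E → ℝ} {c x : E} {r lam : ℝ}

lemma pos_on_closedBall_of_pos_on_sphere (hlam : 0 < lam) (hr : lam * r ^ 2 < 2 * finrank ℝ E)
    (hu : ContDiff ℝ 2 u) (hΔ : ∀ y ∈ ball c r, Δ u y ≤ -lam * u y)
    (hpos : ∀ y ∈ sphere c r, 0 < u y) (hx : x ∈ closedBall c r) : 0 < u x := by
  by_contra! hux
  obtain ⟨δ, hδ, hδu⟩ := (isCompact_sphere c r).exists_forall_le' hu.continuous.continuousOn hpos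
  set w : E → ℝ := fun y => 2 * finrank ℝ E - lam * ‖y - c‖ ^ 2
  have hw_diff : ContDiff ℝ 2 w := contDiff_sub_mul_norm_sub_sq _ _ c
  have hw_pos (y : E) (hy : y ∈ closedBall c r) : 0 < w y := by
    have : ‖y - c‖ ^ 2 ≤ r ^ 2 := by gcongr; exact mem_closedBall_iff_norm.1 hy
    exact sub_pos.2 ((mul_le_mul_of_nonneg_left this hlam.le).trans_lt hr)
  obtain ⟨p, hp, s, hps, hs⟩ := exists_touching_of_isCompact (isCompact_closedBall c r) ⟨x, hx⟩
    (hu.continuous.sub continuous_const).continuousOn hw_diff.continuous.continuousOn hw_pos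
    (f := fun y => u y - δ)
  have hs_neg : s < 0 := by
    by_contra! h
    linarith [hs x hx, mul_nonneg h (hw_pos x hx).le]
  have hp_ball : p ∈ ball c r := by
    refine (mem_closedBall.1 hp).lt_of_ne fun h => ?_
    linarith [hδu p h, mul_neg_of_neg_of_pos hs_neg (hw_pos p hp)]
  have htouch := mul_laplacian_le_of_touching (isOpen_ball.mem_nhds hp_ball)
    (hu.sub contDiff_const) hw_diff hps fun y hy => hs y (ball_subset_closedBall hy)
  rw [laplacian_sub_const, laplacian_sub_mul_norm_sub_sq] at htouch
  have hq : s * (lam ^ 2 * ‖p - c‖ ^ 2) ≤ 0 :=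
    mul_nonpos_of_nonpos_of_nonneg hs_neg.le (by positivity)
  have hup : u p = s * (2 * finrank ℝ E - lam * ‖p - c‖ ^ 2) + δ := by linarith
  have hΔp := hΔ p hp_ball
  rw [hup] at hΔp
  linarith [mul_pos hlam hδ]

lemma mul_sq_radius_le_of_pos (hr : 0 < r) (hu : ContDiff ℝ 2 u)
    (hΔ : ∀ y ∈ ball c r, Δ u y ≤ -lam * u y) (hpos : ∀ y ∈ closedBall c r, 0 < u y) :
    lam * r ^ 2 ≤ (finrank ℝ E + 2) ^ 2 / 2 := by
  set w : E → ℝ := fun y => (r ^ 2 - 1 * ‖y - c‖ ^ 2) ^ 2 with hw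
  have hw_diff : ContDiff ℝ 2 w := (contDiff_sub_mul_norm_sub_sq _ _ c).pow 2
  have hc : c ∈ closedBall c r := mem_closedBall_self hr.le
  obtain ⟨p, hp, s, hps, hs⟩ := exists_touching_of_isCompact (isCompact_closedBall c r) ⟨c, hc⟩
    hw_diff.neg.continuous.continuousOn hu.continuous.continuousOn hpos (f := -w)
  simp only [Pi.neg_apply] at hps hs
  have hs_neg : s < 0 := by
    have hwc : 0 < w c := by simpa [hw] using by positivity
    by_contra! h
    linarith [hs c hc, mul_nonneg h (hpos c hc).le]
  have hp_ball : p ∈ ball c r := by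
    refine (mem_closedBall.1 hp).lt_of_ne fun h => ?_
    have hwp : w p = 0 := by simp [hw, ← dist_eq_norm, h]
    linarith [mul_neg_of_neg_of_pos hs_neg (hpos p hp)]
  have htouch := mul_laplacian_le_of_touching (isOpen_ball.mem_nhds hp_ball) hw_diff.neg hu hps
    fun y hy => hs y (ball_subset_closedBall hy)
  change _ ≤ Δ (-w) p at htouch
  rw [laplacian_neg, Pi.neg_apply, laplacian_sub_mul_norm_sub_sq_sq] at htouch
  set n := (finrank ℝ E : ℝ)
  set q := r ^ 2 - ‖p - c‖ ^ 2 with hq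
  have hquad : lam * q ^ 2 - (4 * n + 8) * q + 8 * r ^ 2 ≤ 0 := by
    have hΔp := mul_le_mul_of_nonpos_left (hΔ p hp_ball) hs_neg.le
    have hsu : s * (-lam * u p) = lam * q ^ 2 := by
      simp only [hw, one_mul, ← hq] at hps
      linear_combination lam * hps
    linarith
  rcases le_total lam 0 with hlam | hlam
  · nlinarith [mul_nonneg (neg_nonneg.2 hlam) (sq_nonneg r), sq_nonneg (n + 2)]
  · nlinarith [mul_nonpos_of_nonneg_of_nonpos hlam hquad, sq_nonneg (lam * q - (2 * n + 4))]

end TouchingFunctions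

section QuarticSubsolution

variable {E : Type*} [NormedAddCommGroup E] [InnerProductSpace ℝ E] [FiniteDimensional ℝ E]

/-- The differential inequality satisfied by `φ = ψ ^ 4`, where `Δψ = -lam * ψ`: in that case
`‖∇φ‖² = 16 ψ⁶ ‖∇ψ‖²` and `Δφ + 4 lam φ = 12 ψ² ‖∇ψ‖²`. Unlike `ψ` itself, `ψ ^ 4` remains twice
continuously differentiable when it is cut off to a nodal domain. -/
structure IsQuarticSubsolution (φ : E → ℝ) (lam : ℝ) : Prop where
  contDiff : ContDiff ℝ 2 φ
  nonneg : ∀ x, 0 ≤ φ x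
  three_mul_norm_fderiv_sq_le :
    ∀ x, 3 * ‖fderiv ℝ φ x‖ ^ 2 ≤ 4 * φ x * (Δ φ x + 4 * lam * φ x)

lemma IsQuarticSubsolution.laplacian_add_nonneg {φ : E → ℝ} {lam : ℝ}
    (h : IsQuarticSubsolution φ lam) (x : E) : 0 ≤ Δ φ x + 4 * lam * φ x := by
  rcases (h.nonneg x).eq_or_lt with hx | hx
  · have hmin : IsLocalMin φ x := Eventually.of_forall fun y => hx ▸ h.nonneg y
    simpa [← hx] using laplacian_nonneg_of_isLocalMin h.contDiff hmin
  · have := (sq_nonneg _).trans ((le_mul_of_one_le_left (sq_nonneg _) (by norm_num)).trans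
      (h.three_mul_norm_fderiv_sq_le x))
    exact nonneg_of_mul_nonneg_right this (by positivity)

lemma isQuarticSubsolution_indicator_pow_four {ψ : E → ℝ} {Ω : Set E} {lam : ℝ}
    (hψ : ContDiff ℝ 2 ψ) (hΔ : ∀ x, Δ ψ x = -lam * ψ x) (hΩ : ∀ x ∈ frontier Ω, ψ x = 0) :
    IsQuarticSubsolution (Ω.indicator fun x => ψ x ^ 4) lam := by
  have hψ1 := hψ.differentiable two_ne_zero
  have hfderiv (x : E) : fderiv ℝ (fun x => ψ x ^ 4) x = (4 * ψ x ^ 3) • fderiv ℝ ψ x := by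
    simpa using fderiv_fun_pow 4 (hψ1 x)
  have h₀ (x : E) (hx : x ∈ frontier Ω) : ψ x ^ 4 = 0 := by simp [hΩ x hx]
  have h₁ (x : E) (hx : x ∈ frontier Ω) : fderiv ℝ (fun x => ψ x ^ 4) x = 0 := by
    simp [hfderiv, hΩ x hx]
  have h₂ (x : E) (hx : x ∈ frontier Ω) : fderiv ℝ (fderiv ℝ fun x => ψ x ^ 4) x = 0 := by
    refine (hasFDerivAt_fderiv_pow hψ 2 x).fderiv.trans ?_
    simp [hΩ x hx]
  refine ⟨contDiff_two_indicator (hψ.pow 4) h₀ h₁ h₂,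
    indicator_nonneg fun x _ => by positivity, fun x => ?_⟩
  rw [fderiv_indicator (f := fun x => ψ x ^ 4) (hψ1.pow 4) h₀ h₁,
    laplacian_indicator (f := fun x => ψ x ^ 4) (hψ.pow 4) h₀ h₁ h₂]
  by_cases hx : x ∈ Ω
  · have hΔpow : Δ (fun x => ψ x ^ 4) x =
        -(4 * lam * ψ x ^ 4) + 12 * ψ x ^ 2 * ‖fderiv ℝ ψ x‖ ^ 2 := by
      refine (laplacian_pow hψ 2 x).trans ?_
      rw [hΔ]
      push_cast
      ring
    simp only [indicator_of_mem hx, hΔpow, hfderiv, norm_smul, mul_pow, norm_eq_abs, sq_abs]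
    exact le_of_eq (by ring)
  · simp [hx]

end QuarticSubsolution

section RealLine

lemma deriv_nonneg_of_monotone_of_tendsto_atBot {F F' : ℝ → ℝ} {K : ℝ}
    (hF : ∀ t, HasDerivAt F (F' t) t) (hF' : Monotone F') (hlim : Tendsto F atBot (𝓝 K)) (a : ℝ) :
    0 ≤ F' a := by
  by_contra! ha
  have hslope (s : ℝ) (hs : s ∈ interior (Iic a)) : deriv F s ≤ F' a := by
    rw [(hF s).deriv]
    exact hF' (mem_Iic.1 (interior_subset hs))
  have hbelow (t : ℝ) (ht : t ≤ a) : F' a * (t - a) + F a ≤ F t := by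
    have := (convex_Iic a).image_sub_le_mul_sub_of_deriv_le
      (fun s _ => (hF s).continuousAt.continuousWithinAt)
      (fun s _ => (hF s).differentiableAt.differentiableWithinAt) hslope t ht a self_mem_Iic ht
    linarith
  have hline : Tendsto (fun t => F' a * (t - a) + F a) atBot atTop :=
    tendsto_atTop_add_const_right _ _
      ((tendsto_atBot_add_const_right _ (-a) tendsto_id).const_mul_atBot_of_neg ha)
  exact not_tendsto_nhds_of_tendsto_atTop
    (tendsto_atTop_mono' _ (eventually_atBot.2 ⟨a, hbelow⟩) hline) K hlim

lemma add_half_mul_sq_le_of_le_second_deriv {F F' F'' : ℝ → ℝ} {a b c : ℝ} (hab : a ≤ b)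
    (hF : ∀ t, HasDerivAt F (F' t) t) (hF' : ∀ t, HasDerivAt F' (F'' t) t) (ha : 0 ≤ F' a)
    (hc : ∀ t ∈ Icc a b, c ≤ F'' t) : F a + c / 2 * (b - a) ^ 2 ≤ F b := by
  have hF'_le (t : ℝ) (ht : t ∈ Icc a b) : c * (t - a) ≤ F' t := by
    have := (convex_Icc a b).mul_sub_le_image_sub_of_le_deriv
      (fun s _ => (hF' s).continuousAt.continuousWithinAt)
      (fun s _ => (hF' s).differentiableAt.differentiableWithinAt)
      (fun s hs => (hF' s).deriv.symm ▸ hc s (interior_subset hs)) a (left_mem_Icc.2 hab) t ht ht.1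
    linarith
  have hdiff (t : ℝ) : HasDerivAt (fun t => F t - c / 2 * (t - a) ^ 2) (F' t - c * (t - a)) t := by
    refine ((hF t).sub ((((hasDerivAt_id t).sub_const a).pow 2).const_mul (c / 2))).congr_deriv ?_
    simp
    ring
  have hmono := (convex_Icc a b).mul_sub_le_image_sub_of_le_deriv
    (fun s _ => (hdiff s).continuousAt.continuousWithinAt)
    (fun s _ => (hdiff s).differentiableAt.differentiableWithinAt) (C := 0)
    (fun s hs => (hdiff s).deriv.symm ▸ sub_nonneg.2 (hF'_le s (interior_subset hs)))
    a (left_mem_Icc.2 hab) b (right_mem_Icc.2 hab) hab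
  simp only [sub_self] at hmono
  linarith

lemma hasDerivAt_add_mul_exp {f : ℝ → ℝ} {f' t : ℝ} (hf : HasDerivAt f f' t) (c a : ℝ) :
    HasDerivAt (fun t => f t + c * exp (a * t)) (f' + c * a * exp (a * t)) t :=
  (hf.add ((((hasDerivAt_id t).const_mul a).exp).const_mul c)).congr_deriv (by simp; ring)

lemma tendsto_add_mul_exp_atBot {f : ℝ → ℝ} {K a : ℝ} (hf : Tendsto f atBot (𝓝 K)) (c : ℝ)
    (ha : 0 < a) : Tendsto (fun t => f t + c * exp (a * t)) atBot (𝓝 K) := by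
  simpa using hf.add ((tendsto_exp_atBot.comp (tendsto_id.const_mul_atBot ha)).const_mul c)

lemma mul_sq_length_le_of_second_deriv_add_mul_exp {B B' B'' : ℝ → ℝ} {K κ μ τ T : ℝ}
    (hB : ∀ t, HasDerivAt B (B' t) t) (hB' : ∀ t, HasDerivAt B' (B'' t) t) (hK : 0 < K)
    (hlim : Tendsto B atBot (𝓝 K)) (hle : ∀ t, B t ≤ 2 * K) (hμ : 0 ≤ μ)
    (hT : μ * exp (2 * T) ≤ 1) (hnonneg : ∀ t, 0 ≤ B'' t + μ * exp (2 * t) * B t)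
    (hκ : 0 ≤ κ) (hτ : τ ≤ T)
    (hgrow : ∀ t ∈ Icc τ T, κ * B t ≤ B'' t + μ * exp (2 * t) * B t) :
    κ * (T - τ) ^ 2 ≤ 6 := by
  -- `F` is convex because `B ≤ 2 * K`, and it stays close to `B` because `μ * exp (2 * T) ≤ 1`.
  set F : ℝ → ℝ := fun t => B t + μ * K / 2 * exp (2 * t)
  set F' : ℝ → ℝ := fun t => B' t + μ * K * exp (2 * t)
  set F'' : ℝ → ℝ := fun t => B'' t + μ * exp (2 * t) * (2 * K)
  have hF (t : ℝ) : HasDerivAt F (F' t) t :=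
    (hasDerivAt_add_mul_exp (hB t) (μ * K / 2) 2).congr_deriv (by ring)
  have hF' (t : ℝ) : HasDerivAt F' (F'' t) t :=
    (hasDerivAt_add_mul_exp (hB' t) (μ * K) 2).congr_deriv (by ring)
  have hB''_le (t : ℝ) : B'' t + μ * exp (2 * t) * B t ≤ F'' t :=
    add_le_add_right (mul_le_mul_of_nonneg_left (hle t) (by positivity)) _
  have hF'_mono : Monotone F' :=
    monotone_of_hasDerivAt_nonneg hF' fun t => (hnonneg t).trans (hB''_le t)
  have hF_lim : Tendsto F atBot (𝓝 K) := tendsto_add_mul_exp_atBot hlim _ two_pos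
  have hF'_nonneg := deriv_nonneg_of_monotone_of_tendsto_atBot hF hF'_mono hF_lim
  have hF_ge : ∀ t, K ≤ B t + μ * K / 2 * exp (2 * t) :=
    (monotone_of_hasDerivAt_nonneg hF hF'_nonneg).le_of_tendsto hF_lim
  have hexp_le (t : ℝ) (ht : t ≤ T) : μ * K / 2 * exp (2 * t) ≤ K / 2 := by
    have : μ * exp (2 * t) ≤ 1 := hT.trans' (by gcongr)
    nlinarith
  have hgrowth := add_half_mul_sq_le_of_le_second_deriv (c := κ * (K / 2)) hτ hF hF' (hF'_nonneg τ)
    fun t ht => by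
      refine (mul_le_mul_of_nonneg_left ?_ hκ).trans ((hgrow t ht).trans (hB''_le t))
      linarith [hF_ge t, hexp_le t ht.2]
  have : K * (κ * (T - τ) ^ 2) ≤ K * 6 := by
    simp only [F] at hgrowth
    linarith [hF_ge τ, hle T, hexp_le T le_rfl]
  exact le_of_mul_le_mul_left this hK

lemma norm_sub_le_integral_norm_deriv {E : Type*} [NormedAddCommGroup E] [NormedSpace ℝ E]
    [CompleteSpace E] {g g' : ℝ → E} {a b s t : ℝ} (hg : ∀ θ, HasDerivAt g (g' θ) θ)
    (hg' : Continuous g') (hs : s ∈ Icc a b) (ht : t ∈ Icc a b) :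
    ‖g t - g s‖ ≤ ∫ θ in a..b, ‖g' θ‖ := by
  have hab : a ≤ b := hs.1.trans hs.2
  have hsub : uIoc s t ⊆ uIoc a b := by
    rw [uIoc_of_le hab]
    exact Ioc_subset_Ioc (le_min hs.1 ht.1) (max_le hs.2 ht.2)
  calc ‖g t - g s‖ = ‖∫ θ in s..t, g' θ‖ := by
        rw [intervalIntegral.integral_eq_sub_of_hasDerivAt (fun θ _ => hg θ)
          (hg'.intervalIntegrable _ _)]
    _ ≤ |∫ θ in s..t, ‖g' θ‖| := intervalIntegral.norm_integral_le_abs_integral_norm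
    _ ≤ |∫ θ in a..b, ‖g' θ‖| := intervalIntegral.abs_integral_mono_interval hsub
        (Eventually.of_forall fun θ => norm_nonneg _) (hg'.norm.intervalIntegrable _ _)
    _ = ∫ θ in a..b, ‖g' θ‖ :=
        abs_of_nonneg (intervalIntegral.integral_nonneg hab fun θ _ => norm_nonneg _)

lemma integral_le_of_sq_deriv_le {g g' h : ℝ → ℝ} {a b C θ₀ : ℝ} (hC : 0 ≤ C)
    (hg : ∀ θ, HasDerivAt g (g' θ) θ) (hg' : Continuous g') (hh : Continuous h)
    (hg_nonneg : ∀ θ, 0 ≤ g θ) (hh_nonneg : ∀ θ, 0 ≤ h θ)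
    (hle : ∀ θ, g' θ ^ 2 ≤ C * g θ * h θ) (hθ₀ : θ₀ ∈ Icc a b) (hgθ₀ : g θ₀ = 0) :
    ∫ θ in a..b, g θ ≤ C * (b - a) ^ 2 * ∫ θ in a..b, h θ := by
  have hab : a ≤ b := hθ₀.1.trans hθ₀.2
  rcases hab.eq_or_lt with rfl | hlt
  · simp
  have hg_cont : Continuous g := continuous_iff_continuousAt.2 fun θ => (hg θ).continuousAt
  set L := b - a with hL_def
  have hL : 0 < L := sub_pos.2 hlt
  set I := ∫ θ in a..b, g θ
  set H := ∫ θ in a..b, h θ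
  have hamgm (θ : ℝ) : |g' θ| ≤ 1 / (2 * L) * g θ + C * L / 2 * h θ := by
    have := hg_nonneg θ
    have := hh_nonneg θ
    refine abs_le_of_sq_le_sq ((hle θ).trans ?_) (by positivity)
    calc C * g θ * h θ = 4 * (1 / (2 * L) * g θ) * (C * L / 2 * h θ) := by field_simp; ring
      _ ≤ _ := four_mul_le_sq_add _ _
  have hint : ∫ θ in a..b, |g' θ| ≤ 1 / (2 * L) * I + C * L / 2 * H := by
    rw [← intervalIntegral.integral_const_mul, ← intervalIntegral.integral_const_mul,
      ← intervalIntegral.integral_add (Continuous.intervalIntegrable (by fun_prop) _ _)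
        (Continuous.intervalIntegrable (by fun_prop) _ _)]
    exact intervalIntegral.integral_mono_on hab (Continuous.intervalIntegrable (by fun_prop) _ _)
      (Continuous.intervalIntegrable (by fun_prop) _ _) fun θ _ => hamgm θ
  have hsup (θ : ℝ) (hθ : θ ∈ Icc a b) : g θ ≤ 1 / (2 * L) * I + C * L / 2 * H := by
    have := (norm_sub_le_integral_norm_deriv hg hg' hθ₀ hθ).trans hint
    rw [hgθ₀, sub_zero, norm_eq_abs] at this
    exact (le_abs_self _).trans this
  have hI : I ≤ ∫ _ in a..b, (1 / (2 * L) * I + C * L / 2 * H) :=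
    intervalIntegral.integral_mono_on hab (Continuous.intervalIntegrable (by fun_prop) _ _)
      (Continuous.intervalIntegrable (by fun_prop) _ _) hsup
  rw [intervalIntegral.integral_const, smul_eq_mul, ← hL_def] at hI
  have : L * (1 / (2 * L) * I + C * L / 2 * H) = I / 2 + C * L ^ 2 * H / 2 := by field_simp
  linarith

lemma hasDerivAt_intervalIntegral_of_continuous {F F' : ℝ → ℝ → ℝ}
    (hF : ∀ t, Continuous (F t)) (hF' : Continuous (Function.uncurry F'))
    (hderiv : ∀ t θ, HasDerivAt (F · θ) (F' t θ) t) (a b t : ℝ) :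
    HasDerivAt (fun t => ∫ θ in a..b, F t θ) (∫ θ in a..b, F' t θ) t := by
  have hcompact : IsCompact (closedBall t 1 ×ˢ uIcc a b) :=
    (isCompact_closedBall t 1).prod isCompact_uIcc
  obtain ⟨C, hC⟩ := hcompact.exists_bound_of_continuousOn hF'.continuousOn
  refine (intervalIntegral.hasDerivAt_integral_of_dominated_loc_of_deriv_le (bound := fun _ => C)
    (closedBall_mem_nhds t one_pos) (Eventually.of_forall fun s => (hF s).aestronglyMeasurable)
    ((hF t).intervalIntegrable _ _) ?_ ?_ intervalIntegrable_const ?_).2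
  · exact (hF'.comp (Continuous.prodMk_right t)).aestronglyMeasurable
  · exact Eventually.of_forall fun θ hθ s hs => hC (s, θ) ⟨hs, uIoc_subset_uIcc hθ⟩
  · exact Eventually.of_forall fun θ _ s _ => hderiv s θ

end RealLine

section LogPolar

/-- The point of the unit circle at angle `θ`. -/
def unitVec (θ : ℝ) : EuclideanSpace ℝ (Fin 2) := !₂[cos θ, sin θ]

lemma unitVec_eq (θ : ℝ) : unitVec θ =
    cos θ • EuclideanSpace.single 0 1 + sin θ • EuclideanSpace.single 1 1 := by
  ext i
  fin_cases i <;> simp [unitVec]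

lemma norm_unitVec (θ : ℝ) : ‖unitVec θ‖ = 1 := by
  simp [unitVec, EuclideanSpace.norm_eq]

lemma unitVec_add_pi (θ : ℝ) : unitVec (θ + π) = -unitVec θ := by
  ext i
  fin_cases i <;> simp [unitVec]

lemma unitVec_periodic : Function.Periodic unitVec (2 * π) := fun θ => by
  simp [unitVec]

lemma hasDerivAt_unitVec (θ : ℝ) : HasDerivAt unitVec (unitVec (θ + π / 2)) θ := by
  rw [unitVec_eq (θ + π / 2), cos_add_pi_div_two, sin_add_pi_div_two, funext unitVec_eq]
  exact ((hasDerivAt_cos θ).smul_const _).add ((hasDerivAt_sin θ).smul_const _)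

@[fun_prop]
lemma continuous_unitVec : Continuous unitVec :=
  continuous_iff_continuousAt.2 fun θ => (hasDerivAt_unitVec θ).continuousAt

/-- Log-polar coordinates of the plane centred at `x₀`. -/
def logPolar (x₀ : EuclideanSpace ℝ (Fin 2)) (t θ : ℝ) : EuclideanSpace ℝ (Fin 2) :=
  x₀ + exp t • unitVec θ

/-- The integral of `f` over angles on the circle of radius `exp t` about `x₀`, that is `2 * π`
times the circle average. The logarithmic radius turns the radial Laplacian into `exp (-2 * t)`
times a pure second derivative. -/
def angularIntegral (f : EuclideanSpace ℝ (Fin 2) → ℝ) (x₀ : EuclideanSpace ℝ (Fin 2))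
    (t : ℝ) : ℝ :=
  ∫ θ in 0..2 * π, f (logPolar x₀ t θ)

variable {f : EuclideanSpace ℝ (Fin 2) → ℝ} {x₀ : EuclideanSpace ℝ (Fin 2)}

@[fun_prop]
lemma continuous_logPolar : Continuous fun p : ℝ × ℝ => logPolar x₀ p.1 p.2 := by
  unfold logPolar
  fun_prop

lemma exists_logPolar_eq {y : EuclideanSpace ℝ (Fin 2)} {t : ℝ} (hy : dist y x₀ = exp t) :
    ∃ θ ∈ Icc 0 (2 * π), logPolar x₀ t θ = y := by
  set w : ℂ := ⟨y 0 - x₀ 0, y 1 - x₀ 1⟩ with hw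
  have hnorm : ‖w‖ = exp t := by
    rw [← hy, EuclideanSpace.dist_eq, Complex.norm_def, Complex.normSq_apply]
    simp [hw, Real.dist_eq, sq]
  have harg : logPolar x₀ t w.arg = y := by
    have hcos := Complex.norm_mul_cos_arg w
    have hsin := Complex.norm_mul_sin_arg w
    rw [hnorm] at hcos hsin
    ext i
    fin_cases i <;> simp [logPolar, unitVec, hcos, hsin] <;> simp [hw]
  rcases le_total 0 w.arg with h | h
  · exact ⟨w.arg, ⟨h, by linarith [Complex.arg_le_pi w, pi_pos]⟩, harg⟩
  · refine ⟨w.arg + 2 * π, ⟨by linarith [Complex.neg_pi_lt_arg w, pi_pos], by linarith⟩, ?_⟩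
    rwa [logPolar, unitVec_periodic]

lemma hasDerivAt_logPolar_radial (t θ : ℝ) :
    HasDerivAt (logPolar x₀ · θ) (exp t • unitVec θ) t :=
  ((hasDerivAt_exp t).smul_const _).const_add x₀

lemma hasDerivAt_logPolar_angular (t θ : ℝ) :
    HasDerivAt (logPolar x₀ t) (exp t • unitVec (θ + π / 2)) θ :=
  ((hasDerivAt_unitVec θ).const_smul (exp t)).const_add x₀

lemma laplacian_eq_unitVec (x : EuclideanSpace ℝ (Fin 2)) (θ : ℝ) :
    Δ f x = fderiv ℝ (fderiv ℝ f) x (unitVec θ) (unitVec θ) +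
      fderiv ℝ (fderiv ℝ f) x (unitVec (θ + π / 2)) (unitVec (θ + π / 2)) := by
  rw [laplacian_eq_sum_fderiv_fderiv (EuclideanSpace.basisFun (Fin 2) ℝ), Fin.sum_univ_two]
  simp only [unitVec_eq, cos_add_pi_div_two, sin_add_pi_div_two, EuclideanSpace.basisFun_apply,
    map_add, map_smul, add_apply, smul_apply, smul_eq_mul]
  linear_combination -(fderiv ℝ (fderiv ℝ f) x (EuclideanSpace.single 0 1)
    (EuclideanSpace.single 0 1) + fderiv ℝ (fderiv ℝ f) x (EuclideanSpace.single 1 1)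
    (EuclideanSpace.single 1 1)) * sin_sq_add_cos_sq θ

lemma hasDerivAt_angularIntegral (hf : ContDiff ℝ 1 f) (t : ℝ) :
    HasDerivAt (angularIntegral f x₀)
      (∫ θ in 0..2 * π, fderiv ℝ f (logPolar x₀ t θ) (exp t • unitVec θ)) t := by
  have := hf.continuous
  have := hf.continuous_fderiv one_ne_zero
  exact hasDerivAt_intervalIntegral_of_continuous (F := fun t θ => f (logPolar x₀ t θ))
    (F' := fun t θ => fderiv ℝ f (logPolar x₀ t θ) (exp t • unitVec θ))
    (fun t => by fun_prop) (by fun_prop)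
    (fun t θ => (hf.differentiable one_ne_zero _).hasFDerivAt.comp_hasDerivAt t
      (hasDerivAt_logPolar_radial t θ)) _ _ t

lemma integral_fderiv_fderiv_angular (hf : ContDiff ℝ 2 f) (t : ℝ) :
    ∫ θ in 0..2 * π, (fderiv ℝ (fderiv ℝ f) (logPolar x₀ t θ) (exp t • unitVec (θ + π / 2))
      (exp t • unitVec (θ + π / 2)) - fderiv ℝ f (logPolar x₀ t θ) (exp t • unitVec θ)) = 0 := by
  have := hf.continuous_fderiv two_ne_zero
  have := (hf.fderiv_right (m := 1) le_rfl).continuous_fderiv one_ne_zero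
  have hderiv (θ : ℝ) : HasDerivAt
      (fun θ => fderiv ℝ f (logPolar x₀ t θ) (exp t • unitVec (θ + π / 2)))
      (fderiv ℝ (fderiv ℝ f) (logPolar x₀ t θ) (exp t • unitVec (θ + π / 2))
        (exp t • unitVec (θ + π / 2)) - fderiv ℝ f (logPolar x₀ t θ) (exp t • unitVec θ)) θ := by
    have hvec : HasDerivAt (fun θ => exp t • unitVec (θ + π / 2)) (-(exp t • unitVec θ)) θ := by
      have := ((hasDerivAt_unitVec (θ + π / 2)).comp_add_const θ (π / 2)).fun_const_smul (exp t)
      rwa [add_assoc, add_halves, unitVec_add_pi, smul_neg] at this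
    refine (hasDerivAt_fderiv_apply_comp hf (hasDerivAt_logPolar_angular t θ) hvec).congr_deriv ?_
    rw [map_neg, sub_eq_add_neg]
  rw [intervalIntegral.integral_eq_sub_of_hasDerivAt (fun θ _ => hderiv θ)
    (Continuous.intervalIntegrable (by fun_prop) _ _)]
  simp only [logPolar, add_comm (2 * π), unitVec_periodic _, unitVec_periodic.eq, zero_add,
    sub_self]

lemma hasDerivAt_hasDerivAt_angularIntegral (hf : ContDiff ℝ 2 f) (t : ℝ) :
    HasDerivAt (fun t => ∫ θ in 0..2 * π, fderiv ℝ f (logPolar x₀ t θ) (exp t • unitVec θ))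
      (exp (2 * t) * angularIntegral (Δ f) x₀ t) t := by
  have := hf.continuous_fderiv two_ne_zero
  have := (hf.fderiv_right (m := 1) le_rfl).continuous_fderiv one_ne_zero
  refine (hasDerivAt_intervalIntegral_of_continuous
    (F := fun t θ => fderiv ℝ f (logPolar x₀ t θ) (exp t • unitVec θ))
    (F' := fun t θ => fderiv ℝ (fderiv ℝ f) (logPolar x₀ t θ) (exp t • unitVec θ)
      (exp t • unitVec θ) + fderiv ℝ f (logPolar x₀ t θ) (exp t • unitVec θ))
    (fun t => by fun_prop) (by fun_prop) (fun t θ => hasDerivAt_fderiv_apply_comp hf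
      (hasDerivAt_logPolar_radial t θ) ((hasDerivAt_exp t).smul_const _)) _ _ t).congr_deriv ?_
  have hangular := integral_fderiv_fderiv_angular hf t (x₀ := x₀)
  refine ((add_zero _).symm.trans (congrArg (_ + ·) hangular.symm)).trans ?_
  rw [← intervalIntegral.integral_add (Continuous.intervalIntegrable (by fun_prop) _ _)
      (Continuous.intervalIntegrable (by fun_prop) _ _), angularIntegral,
    ← intervalIntegral.integral_const_mul]
  refine intervalIntegral.integral_congr fun θ _ => ?_
  simp only [laplacian_eq_unitVec _ θ, map_smul, smul_apply, smul_eq_mul, two_mul, exp_add]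
  ring

lemma tendsto_angularIntegral_atBot (hf : Continuous f) :
    Tendsto (angularIntegral f x₀) atBot (𝓝 (2 * π * f x₀)) := by
  have hcont : Continuous fun r : ℝ => ∫ θ in 0..2 * π, f (x₀ + r • unitVec θ) :=
    intervalIntegral.continuous_parametric_intervalIntegral_of_continuous' (by fun_prop) _ _
  have hzero : ∫ θ in 0..2 * π, f (x₀ + (0 : ℝ) • unitVec θ) = 2 * π * f x₀ := by simp
  exact hzero ▸ (hcont.tendsto 0).comp tendsto_exp_atBot

lemma angularIntegral_le {M : ℝ} (hf : Continuous f) (hM : ∀ x, f x ≤ M) (t : ℝ) :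
    angularIntegral f x₀ t ≤ 2 * π * M := by
  have hint : IntervalIntegrable (fun θ => f (logPolar x₀ t θ)) volume 0 (2 * π) :=
    Continuous.intervalIntegrable (by fun_prop) _ _
  simpa [angularIntegral] using intervalIntegral.integral_mono_on two_pi_pos.le hint
    intervalIntegrable_const fun θ _ => hM _

lemma angularIntegral_add_const_mul {g : EuclideanSpace ℝ (Fin 2) → ℝ} (hf : Continuous f)
    (hg : Continuous g) (a t : ℝ) :
    angularIntegral (fun x => f x + a * g x) x₀ t =
      angularIntegral f x₀ t + a * angularIntegral g x₀ t := by
  simp only [angularIntegral]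
  rw [intervalIntegral.integral_add (Continuous.intervalIntegrable (by fun_prop) _ _)
    (Continuous.intervalIntegrable (by fun_prop) _ _), intervalIntegral.integral_const_mul]

lemma angularIntegral_nonneg (hf : ∀ x, 0 ≤ f x) (t : ℝ) : 0 ≤ angularIntegral f x₀ t :=
  intervalIntegral.integral_nonneg two_pi_pos.le fun _ _ => hf _

lemma IsQuarticSubsolution.angularIntegral_le_of_eq_zero {lam t θ₀ : ℝ}
    (hf : IsQuarticSubsolution f lam) (hθ₀ : θ₀ ∈ Icc 0 (2 * π))
    (hfθ₀ : f (logPolar x₀ t θ₀) = 0) :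
    angularIntegral f x₀ t ≤ 16 * π ^ 2 / 3 *
      (exp (2 * t) * angularIntegral (fun x => Δ f x + 4 * lam * f x) x₀ t) := by
  have := hf.contDiff.continuous
  have := hf.contDiff.continuous_fderiv two_ne_zero
  have := continuous_laplacian hf.contDiff
  have hle (θ : ℝ) : fderiv ℝ f (logPolar x₀ t θ) (exp t • unitVec (θ + π / 2)) ^ 2 ≤
      4 / 3 * f (logPolar x₀ t θ) * (exp (2 * t) *
        (Δ f (logPolar x₀ t θ) + 4 * lam * f (logPolar x₀ t θ))) := by
    have hop := (fderiv ℝ f (logPolar x₀ t θ)).le_opNorm (exp t • unitVec (θ + π / 2))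
    rw [norm_smul, norm_unitVec, mul_one, norm_eq_abs, norm_eq_abs, abs_exp] at hop
    have hsq := sq_le_sq' ((neg_nonpos.2 (by positivity)).trans (abs_nonneg _)) hop
    rw [sq_abs, mul_pow, ← exp_nat_mul, Nat.cast_ofNat] at hsq
    have := mul_le_mul_of_nonneg_left (hf.three_mul_norm_fderiv_sq_le (logPolar x₀ t θ))
      (exp_pos (2 * t)).le
    linarith
  have hpoincare := integral_le_of_sq_deriv_le (by norm_num)
    (fun θ => (hf.contDiff.differentiable two_ne_zero _).hasFDerivAt.comp_hasDerivAt θ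
      (hasDerivAt_logPolar_angular t θ)) (by fun_prop) (by fun_prop) (fun θ => hf.nonneg _)
    (fun θ => mul_nonneg (exp_pos _).le (hf.laplacian_add_nonneg _)) hle hθ₀ hfθ₀
  rw [intervalIntegral.integral_const_mul] at hpoincare
  refine hpoincare.trans_eq ?_
  rw [angularIntegral]
  ring

lemma IsQuarticSubsolution.exists_pos_on_sphere {φ : EuclideanSpace ℝ (Fin 2) → ℝ} {lam r : ℝ}
    {x₀ : EuclideanSpace ℝ (Fin 2)} (hφ : IsQuarticSubsolution φ lam) (hlam : 0 ≤ lam)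
    (hx₀ : 0 < φ x₀) (hle : ∀ x, φ x ≤ 2 * φ x₀) (hr₀ : 0 < r) (hr : 4 * lam * r ^ 2 ≤ 1) :
    ∃ ρ ∈ Icc (exp (-18) * r) r, ∀ y ∈ sphere x₀ ρ, 0 < φ y := by
  by_contra! hzero
  set T := log r
  have hT : exp T = r := exp_log hr₀
  have hφ_cont := hφ.contDiff.continuous
  have hΔ_cont := continuous_laplacian hφ.contDiff
  have hsplit (t : ℝ) : exp (2 * t) * angularIntegral (fun x => Δ φ x + 4 * lam * φ x) x₀ t =
      exp (2 * t) * angularIntegral (Δ φ) x₀ t +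
        4 * lam * exp (2 * t) * angularIntegral φ x₀ t := by
    rw [angularIntegral_add_const_mul hΔ_cont hφ_cont]
    ring
  have hnonneg (t : ℝ) : 0 ≤ exp (2 * t) * angularIntegral (Δ φ) x₀ t +
      4 * lam * exp (2 * t) * angularIntegral φ x₀ t := by
    rw [← hsplit]
    exact mul_nonneg (exp_pos _).le (angularIntegral_nonneg hφ.laplacian_add_nonneg t)
  have hgrow (t : ℝ) (ht : t ∈ Icc (T - 18) T) : 3 / (16 * π ^ 2) * angularIntegral φ x₀ t ≤
      exp (2 * t) * angularIntegral (Δ φ) x₀ t +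
        4 * lam * exp (2 * t) * angularIntegral φ x₀ t := by
    have ht' : exp t ∈ Icc (exp (-18) * r) r := by
      rw [← hT, ← exp_add, mem_Icc, exp_le_exp, exp_le_exp]
      exact ⟨by linarith [ht.1], ht.2⟩
    obtain ⟨y, hy, hφy⟩ := hzero (exp t) ht'
    obtain ⟨θ₀, hθ₀, rfl⟩ := exists_logPolar_eq hy
    have := hφ.angularIntegral_le_of_eq_zero hθ₀ (hφy.antisymm (hφ.nonneg _))
    rw [hsplit] at this
    rw [div_mul_eq_mul_div, div_le_iff₀ (by positivity)]
    linarith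
  have hbound := mul_sq_length_le_of_second_deriv_add_mul_exp
    (hasDerivAt_angularIntegral (hφ.contDiff.of_le one_le_two))
    (hasDerivAt_hasDerivAt_angularIntegral hφ.contDiff) (mul_pos two_pi_pos hx₀)
    (tendsto_angularIntegral_atBot hφ_cont)
    (fun t => (angularIntegral_le hφ_cont hle t).trans_eq (mul_left_comm _ _ _)) (by positivity)
    (by rwa [← hT, ← exp_nat_mul] at hr) hnonneg (by positivity) (by linarith) hgrow
  rw [div_mul_eq_mul_div, div_le_iff₀ (by positivity)] at hbound
  -- The length `18` of the interval is chosen so that `3 * 18 ^ 2 > 6 * (16 * π ^ 2)`.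
  nlinarith [pi_lt_d2, pi_pos]

end LogPolar

section NodalDomain

lemma exists_pos_and_le_two_mul {X : Type*} {φ : X → ℝ} (hbdd : BddAbove (range φ))
    (hpos : ∃ x, 0 < φ x) : ∃ x₀, 0 < φ x₀ ∧ ∀ x, φ x ≤ 2 * φ x₀ := by
  obtain ⟨x₁, hx₁⟩ := hpos
  have hsup : 0 < ⨆ x, φ x := hx₁.trans_le (le_ciSup hbdd x₁)
  have : Nonempty X := ⟨x₁⟩
  obtain ⟨x₀, hx₀⟩ := exists_lt_of_lt_ciSup (half_lt_self hsup)
  exact ⟨x₀, (half_pos hsup).trans hx₀, fun x => by linarith [le_ciSup hbdd x]⟩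

variable {n : ℕ} {ψ : EuclideanSpace ℝ (Fin n) → ℝ} {Ω : Set (EuclideanSpace ℝ (Fin n))}

lemma lap_eq_laplacian_s7 (hψ : ContDiff ℝ 2 ψ) : lap n ψ = Δ ψ := by
  ext x
  rw [lap, laplacian_eq_sum_fderiv_fderiv (EuclideanSpace.basisFun (Fin n) ℝ)]
  refine Finset.sum_congr rfl fun i _ => ?_
  rw [((differentiable_fderiv_of_contDiff hψ x).hasFDerivAt.clm_apply
    (hasFDerivAt_const (EuclideanSpace.single i 1) x)).fderiv]
  simp

namespace IsNodalDomain

lemma nonempty (hΩ : IsNodalDomain ψ Ω) : Ω.Nonempty := by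
  obtain ⟨x, hx, rfl⟩ := hΩ
  exact ⟨x, mem_connectedComponentIn hx⟩

lemma ne_zero (hΩ : IsNodalDomain ψ Ω) {x : EuclideanSpace ℝ (Fin n)} (hx : x ∈ Ω) : ψ x ≠ 0 := by
  obtain ⟨z, -, rfl⟩ := hΩ
  exact connectedComponentIn_subset _ _ hx

lemma isOpen (hΩ : IsNodalDomain ψ Ω) (hψ : Continuous ψ) : IsOpen Ω := by
  obtain ⟨z, -, rfl⟩ := hΩ
  exact (isOpen_ne_fun hψ continuous_const).connectedComponentIn

lemma subset_of_isPreconnected (hΩ : IsNodalDomain ψ Ω) {s : Set (EuclideanSpace ℝ (Fin n))}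
    (hs : IsPreconnected s) (hs₀ : ∀ y ∈ s, ψ y ≠ 0) (hsΩ : (s ∩ Ω).Nonempty) : s ⊆ Ω := by
  obtain ⟨z, -, rfl⟩ := hΩ
  obtain ⟨x, hxs, hxz⟩ := hsΩ
  exact connectedComponentIn_eq hxz ▸ hs.subset_connectedComponentIn hxs hs₀

lemma eq_zero_of_mem_frontier (hΩ : IsNodalDomain ψ Ω) (hψ : Continuous ψ)
    {x : EuclideanSpace ℝ (Fin n)} (hx : x ∈ frontier Ω) : ψ x = 0 := by
  by_contra hne
  obtain ⟨ε, hε, hball⟩ := Metric.isOpen_iff.1 (isOpen_ne_fun hψ continuous_const) x hne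
  have hmeet := mem_closure_iff.1 (frontier_subset_closure hx) _ isOpen_ball (mem_ball_self hε)
  have hxΩ := hΩ.subset_of_isPreconnected (convex_ball x ε).isPreconnected hball hmeet
    (mem_ball_self hε)
  exact (hΩ.isOpen hψ).inter_frontier_eq.subset ⟨hxΩ, hx⟩

lemma apply_mul_apply_pos (hΩ : IsNodalDomain ψ Ω) (hψ : Continuous ψ)
    {x y : EuclideanSpace ℝ (Fin n)} (hx : x ∈ Ω) (hy : y ∈ Ω) : 0 < ψ x * ψ y := by
  have hconn : IsPreconnected Ω := by
    obtain ⟨z, -, rfl⟩ := hΩ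
    exact isPreconnected_connectedComponentIn
  by_contra! hneg
  obtain ⟨z, hz, hz₀⟩ := hconn.intermediate_value hy hx (f := fun z => ψ x * ψ z) (by fun_prop)
    ⟨hneg, mul_self_nonneg _⟩
  exact (mul_ne_zero (hΩ.ne_zero hx) (hΩ.ne_zero hz)) hz₀

variable {lam r : ℝ} {c : EuclideanSpace ℝ (Fin n)}

lemma closedBall_subset (hΩ : IsNodalDomain ψ Ω) (hψ : ContDiff ℝ 2 ψ)
    (hΔ : ∀ x, Δ ψ x = -lam * ψ x) (hlam : 0 < lam) (hr₀ : 0 ≤ r) (hr : lam * r ^ 2 < 2 * n)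
    (hc : c ∈ Ω) (hsphere : sphere c r ⊆ Ω) : closedBall c r ⊆ Ω := by
  refine hΩ.subset_of_isPreconnected (convex_closedBall c r).isPreconnected (fun y hy => ?_)
    ⟨c, mem_closedBall_self hr₀, hc⟩
  have hpos := pos_on_closedBall_of_pos_on_sphere (u := ψ c • ψ) hlam (by simpa using hr)
    (hψ.const_smul (ψ c)) (fun z _ => (laplacian_smul_eq_neg_mul hψ hΔ _ z).le)
    (fun z hz => hΩ.apply_mul_apply_pos hψ.continuous hc (hsphere hz)) hy
  exact right_ne_zero_of_mul hpos.ne'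

lemma mul_sq_le_of_ball_subset (hΩ : IsNodalDomain ψ Ω) (hψ : ContDiff ℝ 2 ψ)
    (hΔ : ∀ x, Δ ψ x = -lam * ψ x) (hr : 0 < r) (hball : ball c r ⊆ Ω) :
    lam * r ^ 2 ≤ 2 * (n + 2) ^ 2 := by
  have hhalf : closedBall c (r / 2) ⊆ Ω := (closedBall_subset_ball (half_lt_self hr)).trans hball
  have hc : c ∈ Ω := hball (mem_ball_self hr)
  have := mul_sq_radius_le_of_pos (u := ψ c • ψ) (lam := lam) (half_pos hr) (hψ.const_smul (ψ c))
    (fun z _ => (laplacian_smul_eq_neg_mul hψ hΔ _ z).le)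
    fun z hz => hΩ.apply_mul_apply_pos hψ.continuous hc (hhalf hz)
  rw [finrank_euclideanSpace_fin] at this
  linarith

lemma le_innerRadius (hΩ : IsNodalDomain ψ Ω) (hψ : ContDiff ℝ 2 ψ)
    (hΔ : ∀ x, Δ ψ x = -lam * ψ x) (hlam : 0 < lam) (hr : 0 < r) (hball : ball c r ⊆ Ω) :
    r ≤ innerRadius Ω := by
  refine le_csSup ⟨√(2 * (n + 2) ^ 2 / lam), ?_⟩ ⟨hr, c, hball⟩
  rintro ρ ⟨hρ, x, hx⟩
  rw [le_sqrt' hρ, le_div_iff₀' hlam]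
  exact hΩ.mul_sq_le_of_ball_subset hψ hΔ hρ hx

end IsNodalDomain

lemma ZnPeriodic.bddAbove_range_abs (hψ : Continuous ψ) (hper : ZnPeriodic n ψ) :
    BddAbove (range fun x => |ψ x|) := by
  have hcube : IsCompact (WithLp.toLp 2 '' Icc (0 : Fin n → ℝ) 1) :=
    isCompact_Icc.image (PiLp.continuous_toLp 2 _)
  refine (hcube.bddAbove_image hψ.abs.continuousOn).mono ?_
  rintro _ ⟨x, rfl⟩
  refine ⟨_, ⟨fun i => Int.fract (x i), ⟨fun i => Int.fract_nonneg _,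
    fun i => (Int.fract_lt_one _).le⟩, rfl⟩, ?_⟩
  have := hper x fun i => -⌊x i⌋
  simpa [Int.fract, sub_eq_add_neg] using congrArg abs this

lemma IsNodalDomain.exists_ball_subset {ψ : EuclideanSpace ℝ (Fin 2) → ℝ} {lam r : ℝ}
    {Ω : Set (EuclideanSpace ℝ (Fin 2))} (hΩ : IsNodalDomain ψ Ω) (hψ : ContDiff ℝ 2 ψ)
    (hΔ : ∀ x, Δ ψ x = -lam * ψ x) (hbdd : BddAbove ((fun x => |ψ x|) '' Ω)) (hlam : 0 < lam)
    (hr₀ : 0 < r) (hr : 4 * lam * r ^ 2 ≤ 1) : ∃ c, ball c (exp (-18) * r) ⊆ Ω := by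
  set φ := Ω.indicator fun x => ψ x ^ 4
  have hφ : IsQuarticSubsolution φ lam := isQuarticSubsolution_indicator_pow_four hψ hΔ
    fun x => hΩ.eq_zero_of_mem_frontier hψ.continuous
  have hφ_pos (x) : 0 < φ x ↔ x ∈ Ω := by
    by_cases hx : x ∈ Ω <;> simp [φ, hx, (by decide : Even 4).pow_pos, hΩ.ne_zero]
  have hφ_bdd : BddAbove (range φ) := by
    obtain ⟨M, hM⟩ := hbdd
    refine ⟨M ^ 4, ?_⟩
    rintro _ ⟨x, rfl⟩
    refine indicator_apply_le' (fun hx => ?_) fun _ => by positivity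
    rw [← Even.pow_abs (by decide)]
    exact pow_le_pow_left₀ (abs_nonneg _) (hM ⟨x, hx, rfl⟩) 4
  obtain ⟨c, hc, hle⟩ := exists_pos_and_le_two_mul hφ_bdd (hΩ.nonempty.imp fun x => (hφ_pos x).2)
  obtain ⟨ρ, ⟨hle_ρ, hρ_le⟩, hsphere⟩ := hφ.exists_pos_on_sphere hlam.le hc hle hr₀ hr
  have hρ₀ : 0 ≤ ρ := (by positivity : 0 ≤ exp (-18) * r).trans hle_ρ
  have hρ : lam * ρ ^ 2 < 2 * (2 : ℕ) := by
    have : lam * ρ ^ 2 ≤ lam * r ^ 2 := by gcongr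
    push_cast
    linarith
  exact ⟨c, (ball_subset_closedBall.trans (closedBall_subset_closedBall hle_ρ)).trans
    (hΩ.closedBall_subset hψ hΔ hlam hρ₀ hρ ((hφ_pos c).1 hc)
      fun y hy => (hφ_pos y).1 (hsphere y hy))⟩

end NodalDomain

theorem inner_radius_lower_bound_dim_two_general {ψ : EuclideanSpace ℝ (Fin 2) → ℝ} {lam : ℝ}
    {Ω : Set (EuclideanSpace ℝ (Fin 2))} (hlam : 0 < lam) (hψ : ContDiff ℝ 2 ψ)
    (hlap : ∀ x, lap 2 ψ x = -lam * ψ x) (hΩ : IsNodalDomain ψ Ω)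
    (hbdd : BddAbove ((fun x => |ψ x|) '' Ω)) :
    exp (-18) / 2 * lam ^ (-(1 : ℝ) / 2) ≤ innerRadius Ω := by
  have hΔ (x) : Δ ψ x = -lam * ψ x := lap_eq_laplacian_s7 hψ ▸ hlap x
  have hr : 4 * lam * (lam ^ (-(1 : ℝ) / 2) / 2) ^ 2 ≤ 1 := by
    have hsq : (lam ^ (-(1 : ℝ) / 2)) ^ 2 = lam⁻¹ := by
      rw [← rpow_mul_natCast hlam.le, ← rpow_neg_one]
      norm_num
    rw [div_pow, hsq]
    field_simp
    norm_num
  obtain ⟨c, hc⟩ := hΩ.exists_ball_subset hψ hΔ hbdd hlam (by positivity) hr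
  rw [div_mul_eq_mul_div, mul_div_assoc]
  exact hΩ.le_innerRadius hψ hΔ hlam (by positivity) hc

theorem inner_radius_lower_bound_dim_two :
    ∃ a₁ : ℝ, 0 < a₁ ∧
      ∀ (ψ : EuclideanSpace ℝ (Fin 2) → ℝ) (lam : ℝ),
        1 ≤ lam → ContDiff ℝ (⊤ : ℕ∞) ψ → ZnPeriodic 2 ψ →
        (∀ x, lap 2 ψ x = -lam * ψ x) →
        ∀ Ω, IsNodalDomain ψ Ω →
          a₁ * lam ^ (-(1:ℝ)/2) ≤ innerRadius Ω := by
  refine ⟨exp (-18) / 2, by positivity, fun ψ lam hlam hψ hper hlap Ω hΩ => ?_⟩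
  exact inner_radius_lower_bound_dim_two_general (one_pos.trans_le hlam) (contDiff_infty.1 hψ 2)
    hlap hΩ ((hper.bddAbove_range_abs hψ.continuous).mono (image_subset_range _ _))
end
end
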